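/- arXiv:1908.01620 — 6 statements merged into one kernel-verified Lean document; each statement's English description precedes it below -/
import Mathlib

section
/- Let Z ⊆ ℙ^r be a nondegenerate integral closed subscheme of dimension a ≥ 1 over an algebraically closed field k (nondegenerate means Z is not contained in any hyperplane of ℙ^r). Then for every d ≥ 1 the Hilbert function of Z satisfies h_Z(d) ≥ h_{r,a}(d), where h_Z(d) is the dimension over k of the degree-d graded piece of the homogeneous coordinate ring k[x_0,…,x_r]/I(Z), with I(Z) the homogeneous ideal of Z. -/
open MvPolynomial

noncomputable section Statement4


variable (K : Type*) [Field K]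

/-- The function `h_{r,a}(d) = (r-a) * C(d+a-1, d-1) + C(d+a, d)`. -/
def hpoly (r a d : ℤ) : ℤ :=
  (r - a) * ((d + a - 1).toNat.choose (d - 1).toNat : ℤ) + ((d + a).toNat.choose d.toNat : ℤ)

/-- An ideal of the polynomial ring is homogeneous iff it contains all the homogeneous
components of each of its elements. -/
def IsHomogeneousIdeal {r : ℕ} (p : Ideal (MvPolynomial (Fin (r + 1)) K)) : Prop :=
  ∀ f ∈ p, ∀ i : ℕ, MvPolynomial.homogeneousComponent i f ∈ p

section Freiman
open scoped Pointwise
open Finset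
variable {W : Type*} [AddCommGroup W] [Module ℚ W] [DecidableEq W]

lemma fr_nonpos (l : Module.Dual ℚ W) (A : Finset W) (h : ∀ w ∈ A, l w ≤ 0) (d : ℕ) :
    ∀ x ∈ d • A, l x ≤ 0 := by
  induction d with
  | zero => intro x hx; simp at hx; simp [hx]
  | succ d ih =>
    intro x hx
    rw [succ_nsmul, Finset.mem_add] at hx
    obtain ⟨y, hy, z, hz, rfl⟩ := hx
    rw [map_add]; linarith [ih y hy, h z hz]

lemma fr_step (l : Module.Dual ℚ W) (A C : Finset W) (v : W) (h : ∀ w ∈ A, l w ≤ 0)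
    (hv : 0 < l v) (hC : C ⊆ insert v A) (hC0 : ∀ w ∈ C, 0 ≤ l w) (d : ℕ) :
    ((d + 1) • A).card + (d • C).card ≤ ((d + 1) • (insert v A)).card := by
  have h1 : ((d + 1) • A) ∪ (({v} : Finset W) + d • C) ⊆ (d + 1) • (insert v A) := by
    apply Finset.union_subset
    · exact Finset.nsmul_subset_nsmul_left (Finset.subset_insert _ _)
    · rw [add_comm d 1, add_nsmul, one_nsmul]
      exact Finset.add_subset_add (by simp) (Finset.nsmul_subset_nsmul_left hC)
  have h2 : Disjoint ((d + 1) • A) (({v} : Finset W) + d • C) := by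
    rw [Finset.disjoint_left]
    intro x hx hx'
    have := fr_nonpos l A h _ x hx
    rw [Finset.mem_add] at hx'
    obtain ⟨y, hy, z, hz, rfl⟩ := hx'
    rw [Finset.mem_singleton] at hy
    subst hy
    have := fr_nonpos (-l) C (by simpa using hC0) _ z hz
    simp at *
    linarith
  have := Finset.card_le_card h1
  rwa [Finset.card_union_of_disjoint h2, Finset.singleton_add, Finset.card_vadd_finset] at this

lemma fr_indep (B : Finset W) (hB : LinearIndepOn ℚ id (B : Set W)) (d : ℕ) :
    Nat.multichoose B.card d ≤ (d • B).card := by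
  induction B using Finset.induction_on generalizing d with
  | empty => cases d <;> simp
  | insert v B hv ih =>
    have hB' : LinearIndepOn ℚ id (B : Set W) := hB.mono (by simp)
    have hvs : v ∉ Submodule.span ℚ (B : Set W) := by
      rw [Finset.coe_insert, linearIndepOn_id_insert (by simpa using hv)] at hB
      exact hB.2
    obtain ⟨l, hl, hl0⟩ := Submodule.exists_le_ker_of_notMem hvs
    have hlB : ∀ w ∈ B, l w = 0 := fun w hw => hl0 (Submodule.subset_span hw)
    wlog hpos : 0 < l v generalizing l
    · refine this (-l) (by simpa using hl) ?_ ?_ ?_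
      · intro x hx; have := hl0 hx; simp_all
      · simpa using hlB
      · simp; exact lt_of_le_of_ne (not_lt.mp hpos) hl
    rw [Finset.card_insert_of_notMem hv]
    induction d with
    | zero => simp
    | succ d ihd =>
      have := fr_step l B (insert v B) v (fun w hw => (hlB w hw).le) hpos subset_rfl
        (by intro w hw; rcases Finset.mem_insert.mp hw with rfl | hw
            · exact hpos.le
            · exact (hlB w hw).ge) d
      rw [Nat.multichoose_succ_succ]
      linarith [ih hB' (d+1)]

lemma fr_facet (A : Finset W) (v : W) (l0 : Module.Dual ℚ W) (h0 : ∀ w ∈ A, l0 w ≤ 0)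
    (hv0 : 0 < l0 v) : ∃ l : Module.Dual ℚ W, (∀ w ∈ A, l w ≤ 0) ∧ 0 < l v ∧
      Module.finrank ℚ (Submodule.span ℚ (A : Set W)) ≤
      Module.finrank ℚ (Submodule.span ℚ ((A.filter (fun w => l w = 0) : Finset W) : Set W)) + 1 := by
  by_contra! hcon
  have key : ∀ k : ℕ, ∃ l : Module.Dual ℚ W, (∀ w ∈ A, l w ≤ 0) ∧ 0 < l v ∧
      k ≤ Module.finrank ℚ (Submodule.span ℚ ((A.filter (fun w => l w = 0) : Finset W) : Set W)) := by
    intro k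
    induction k with
    | zero => exact ⟨l0, h0, hv0, Nat.zero_le _⟩
    | succ k ih =>
      obtain ⟨l, hl, hlv, hk⟩ := ih
      have hc := hcon l hl hlv
      set T := Submodule.span ℚ ((A.filter (fun w => l w = 0) : Finset W) : Set W) with hT
      have hex : ∃ a ∈ A, a ∉ T ⊔ Submodule.span ℚ {v} := by
        by_contra! hall
        have hle : Submodule.span ℚ (A : Set W) ≤ T ⊔ Submodule.span ℚ {v} :=
          Submodule.span_le.mpr hall
        have h1 := Submodule.finrank_mono hle
        have h2 := Submodule.finrank_add_le_finrank_add_finrank T (Submodule.span ℚ {v})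
        have h3 := finrank_span_le_card (R := ℚ) ({v} : Set W)
        simp at h3
        omega
      obtain ⟨a, haA, haT⟩ := hex
      obtain ⟨m, hma, hm0⟩ := Submodule.exists_le_ker_of_notMem haT
      wlog hpos : 0 < m a generalizing m
      · refine this (-m) (by simpa using hma) ?_ ?_
        · intro x hx; have := hm0 hx; simp_all
        · simp; exact lt_of_le_of_ne (not_lt.mp hpos) hma
      have hmT : ∀ w ∈ T, m w = 0 := fun w hw => hm0 (Submodule.mem_sup_left hw)
      have hmv : m v = 0 := hm0 (Submodule.mem_sup_right (Submodule.mem_span_singleton_self v))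
      obtain ⟨b, hb, hbmin⟩ := Finset.exists_min_image (A.filter (fun w => 0 < m w))
        (fun w => - l w / m w) ⟨a, by simp [haA, hpos]⟩
      simp only [Finset.mem_filter] at hb hbmin
      set t := - l b / m b with ht
      have ht0 : 0 ≤ t := div_nonneg (by linarith [hl b hb.1]) hb.2.le
      refine ⟨l + t • m, ?_, by simp [hmv, hlv], ?_⟩
      · intro w hw
        simp only [LinearMap.add_apply, LinearMap.smul_apply, smul_eq_mul]
        by_cases hmw : 0 < m w
        · have := hbmin w ⟨hw, hmw⟩
          rw [le_div_iff₀ hmw] at this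
          linarith
        · have := mul_nonpos_of_nonneg_of_nonpos ht0 (not_lt.mp hmw)
          linarith [hl w hw]
      · refine Nat.succ_le_of_lt (lt_of_le_of_lt hk ?_)
        apply Submodule.finrank_lt_finrank_of_lt
        have hle : T ≤ Submodule.span ℚ ((A.filter (fun w => (l + t • m) w = 0) : Finset W) : Set W) := by
          apply Submodule.span_mono
          intro w hw
          have hw' : w ∈ T := Submodule.subset_span hw
          simp only [Finset.coe_filter, Set.mem_ofPred_eq] at hw ⊢
          simp [hw.1, hw.2, hmT w hw']
        refine lt_of_le_of_ne hle ?_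
        intro heq
        have hbm : b ∈ T := by
          rw [heq]
          apply Submodule.subset_span
          have := hb.2.ne'
          simp only [Finset.coe_filter, Set.mem_ofPred_eq]
          refine ⟨hb.1, ?_⟩
          simp [ht]
          field_simp; ring
        have := hmT b hbm
        linarith [hb.2]
  obtain ⟨l, hl, hlv, hk⟩ := key (A.card + 1)
  have h1 := finrank_span_finset_le_card (R := ℚ) (A.filter (fun w => l w = 0))
  have h2 := Finset.card_filter_le A (fun w => l w = 0)
  simp only [Set.finrank] at h1
  omega

lemma mc_mono (k : ℕ) : Monotone (fun n => Nat.multichoose n k) := by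
  apply monotone_nat_of_le_succ
  intro n
  cases k with
  | zero => simp
  | succ k => simp only [Nat.multichoose_succ_succ]; omega

theorem fr_main (h : Module.Dual ℚ W) (A : Finset W) (hA : ∀ w ∈ A, h w = 1) (d : ℕ) :
    Nat.multichoose (Module.finrank ℚ (Submodule.span ℚ (A : Set W))) (d + 1) +
     (A.card - Module.finrank ℚ (Submodule.span ℚ (A : Set W))) *
      Nat.multichoose (Module.finrank ℚ (Submodule.span ℚ (A : Set W))) d ≤ ((d + 1) • A).card := by
  obtain ⟨lam, hlam⟩ := Module.exists_dual_forall_apply_ne_zero (K := ℚ)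
    (fun p : {p : A × A // p.1 ≠ p.2} => (p.1.1 : W) - p.1.2)
    (fun p => by rw [sub_ne_zero]; exact fun h => p.2 (Subtype.ext h))
  have hinj : ∀ x ∈ A, ∀ y ∈ A, x ≠ y → lam x ≠ lam y := by
    intro x hx y hy hxy
    have := hlam ⟨(⟨x, hx⟩, ⟨y, hy⟩), by simpa using hxy⟩
    simpa [sub_eq_zero] using this
  clear hlam
  induction hn : A.card generalizing A d with
  | zero =>
    rw [Finset.card_eq_zero] at hn
    subst hn
    have : Module.finrank ℚ (Submodule.span ℚ ((∅ : Finset W) : Set W)) = 0 := by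
      rw [Finset.coe_empty, Submodule.span_empty, finrank_bot]
    rw [this]
    simp
  | succ n ih =>
    have hne : A.Nonempty := by rw [← Finset.card_pos]; omega
    obtain ⟨v, hvA, hvmax⟩ := Finset.exists_max_image A lam hne
    set B := A.erase v with hB
    have hAB : A = insert v B := (Finset.insert_erase hvA).symm
    have hvB : v ∉ B := Finset.notMem_erase v A
    have hBn : B.card = n := by rw [hB, Finset.card_erase_of_mem hvA]; omega
    have hBA : B ⊆ A := Finset.erase_subset _ _
    have ihB := fun d => ih B (fun w hw => hA w (hBA hw)) d
      (fun x hx y hy => hinj x (hBA hx) y (hBA hy)) hBn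
    set D := Module.finrank ℚ (Submodule.span ℚ (B : Set W)) with hD
    have hDn : D ≤ n := by
      have := finrank_span_finset_le_card (R := ℚ) B
      rw [hBn] at this
      exact this
    by_cases hvs : v ∈ Submodule.span ℚ (B : Set W)
    · -- case 2
      have hspan : Submodule.span ℚ (A : Set W) = Submodule.span ℚ (B : Set W) := by
        rw [hAB, Finset.coe_insert, Submodule.span_insert_eq_span hvs]
      rw [hspan, ← hD]
      have hBne : B.Nonempty := by
        rw [Finset.nonempty_iff_ne_empty]
        intro hBe
        rw [hBe] at hvs
        simp at hvs
        have := hA v hvA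
        simp [hvs] at this
      obtain ⟨b, hb, hbmax⟩ := Finset.exists_max_image B lam hBne
      have hlt : lam b < lam v := lt_of_le_of_ne (hvmax b (hBA hb))
        (hinj b (hBA hb) v hvA (fun e => hvB (e ▸ hb)))
      obtain ⟨l, hl, hlv, hrk⟩ := fr_facet B v (lam - lam b • h)
        (by intro w hw; simp [hA w (hBA hw), hbmax w hw]) (by simp [hA v hvA, hlt])
      rw [← hD] at hrk
      obtain ⟨C, hCsub, hCspan, hCind⟩ := exists_linearIndependent ℚ
        ((B.filter (fun w => l w = 0) : Finset W) : Set W)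
      have hCfin : C.Finite := (Finset.finite_toSet _).subset hCsub
      lift C to Finset W using hCfin
      have hC0 : ∀ w ∈ C, w ∈ B ∧ l w = 0 := fun w hw => by
        have := hCsub hw
        simpa using this
      have hvC : v ∉ C := fun hh => hvB (hC0 v hh).1
      have hCcard : D ≤ C.card + 1 := by
        rw [← hCspan] at hrk
        have := finrank_span_finset_le_card (R := ℚ) C
        simp only [Set.finrank] at this
        omega
      have hvC' : v ∉ Submodule.span ℚ (C : Set W) := by
        intro hh
        have : Submodule.span ℚ (C : Set W) ≤ LinearMap.ker l :=
          Submodule.span_le.mpr (fun w hw => (hC0 w hw).2)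
        have := this hh
        rw [LinearMap.mem_ker] at this
        linarith
      have hind : LinearIndepOn ℚ id ((insert v C : Finset W) : Set W) := by
        rw [Finset.coe_insert, linearIndepOn_id_insert (by simpa using hvC)]
        exact ⟨hCind, hvC'⟩
      have h1 := fr_indep (insert v C) hind d
      rw [Finset.card_insert_of_notMem hvC] at h1
      have h2 := fr_step l B (insert v C) v hl hlv
        (Finset.insert_subset_insert _ (fun w hw => (hC0 w hw).1))
        (by intro w hw; rcases Finset.mem_insert.mp hw with rfl | hw
            · exact hlv.le
            · exact (hC0 w hw).2.ge) d
      rw [← hAB] at h2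
      have h3 : Nat.multichoose D d ≤ Nat.multichoose (C.card + 1) d := mc_mono d hCcard
      have h4 := ihB d
      have h5 : n + 1 - D = (n - D) + 1 := by omega
      rw [h5, add_mul, one_mul]
      omega
    · -- case 1
      have hspan : Module.finrank ℚ (Submodule.span ℚ (A : Set W)) = D + 1 := by
        have hdis : Submodule.span ℚ {v} ⊓ Submodule.span ℚ (B : Set W) = ⊥ := by
          rw [← disjoint_iff]
          exact (Submodule.disjoint_span_singleton_of_notMem hvs).symm
        have h8 := Submodule.finrank_sup_add_finrank_inf_eq (Submodule.span ℚ {v})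
          (Submodule.span ℚ (B : Set W))
        rw [hdis, finrank_bot, finrank_span_singleton
          (by rintro rfl; exact hvs (Submodule.zero_mem _)), ← Submodule.span_union,
          Set.singleton_union, ← Finset.coe_insert, ← hAB] at h8
        omega
      rw [hspan]
      obtain ⟨l, hl, hl0⟩ := Submodule.exists_le_ker_of_notMem hvs
      have hlB : ∀ w ∈ B, l w = 0 := fun w hw => hl0 (Submodule.subset_span hw)
      wlog hpos : 0 < l v generalizing l
      · refine this (-l) (by simpa using hl) ?_ ?_ ?_
        · intro x hx
          have h7 := hl0 hx
          rw [LinearMap.mem_ker] at h7 ⊢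
          rw [LinearMap.neg_apply, h7, neg_zero]
        · intro w hw
          rw [LinearMap.neg_apply, hlB w hw, neg_zero]
        · rw [LinearMap.neg_apply, neg_pos]
          exact lt_of_le_of_ne (not_lt.mp hpos) hl
      have hstep := fun d => fr_step l B A v (fun w hw => (hlB w hw).le) hpos hAB.subset
        (by intro w hw; rw [hAB] at hw; rcases Finset.mem_insert.mp hw with rfl | hw
            · exact hpos.le
            · exact (hlB w hw).ge) d
      rw [← hAB] at hstep
      have h5 : n + 1 - (D + 1) = n - D := by omega
      rw [h5]
      induction d with
      | zero =>
        have h1 := hstep 0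
        have h2 := ihB 0
        simp at h1 h2 ⊢
        omega
      | succ d ihd =>
        have h1 := hstep (d + 1)
        have h2 := ihB (d + 1)
        have e1 := Nat.multichoose_succ_succ D (d + 1)
        have e2 : (n - D) * (D + 1).multichoose (d + 1) =
          (n - D) * D.multichoose (d + 1) + (n - D) * (D + 1).multichoose d := by
          rw [Nat.multichoose_succ_succ D d, mul_add]
        omega

lemma mc_bound (n d s t : ℕ) (hst : s ≤ t) (htn : t ≤ n) :
    Nat.multichoose s (d + 1) + (n - s) * Nat.multichoose s d ≤
    Nat.multichoose t (d + 1) + (n - t) * Nat.multichoose t d := by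
  induction t, hst using Nat.le_induction with
  | base => exact le_rfl
  | succ t hst ih =>
    refine (ih (by omega)).trans ?_
    have h1 : n - t = (n - (t + 1)) + 1 := by omega
    have h2 : Nat.multichoose t d ≤ Nat.multichoose (t + 1) d := mc_mono d (Nat.le_succ t)
    rw [h1, Nat.multichoose_succ_succ]
    nlinarith [Nat.mul_le_mul_left (n - (t + 1)) h2]
end Freiman

section Val
variable {K F : Type*} [Field K] [Field F] [Algebra K F]
  {Γ : Type*} [LinearOrderedCommGroupWithZero Γ] (v : Valuation F Γ)

lemma val_indep {ι : Type*} (x c : ι → F) (s : Finset ι) (hx : ∀ i ∈ s, x i ≠ 0)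
    (hinj : ∀ i ∈ s, ∀ j ∈ s, v (x i) = v (x j) → i = j)
    (hc : ∀ i ∈ s, c i = 0 ∨ v (c i) = 1) (hsum : ∑ i ∈ s, c i * x i = 0) :
    ∀ i ∈ s, c i = 0 := by
  classical
  by_contra! hcon
  obtain ⟨i0, hi0, hci0⟩ := hcon
  set t := s.filter (fun i => c i ≠ 0) with ht
  obtain ⟨i, hi, himax⟩ := Finset.exists_max_image t (fun i => v (x i)) ⟨i0, by simp [ht, hi0, hci0]⟩
  have hsum' : ∑ i ∈ t, c i * x i = 0 := by
    rw [← hsum, ht]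
    apply Finset.sum_subset (Finset.filter_subset _ _)
    intro j hj hj'
    simp [hj] at hj'
    simp [hj']
  have htc : ∀ j ∈ t, v (c j) = 1 ∧ j ∈ s := by
    intro j hj
    simp only [ht, Finset.mem_filter] at hj
    exact ⟨(hc j hj.1).resolve_left hj.2, hj.1⟩
  rw [← Finset.add_sum_erase t _ hi] at hsum'
  have h1 : v (∑ j ∈ t.erase i, c j * x j) < v (x i) := by
    apply Valuation.map_sum_lt
    · simpa using hx i (htc i hi).2
    · intro j hj
      have hj' := Finset.mem_of_mem_erase hj
      rw [map_mul, (htc j hj').1, one_mul]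
      refine lt_of_le_of_ne (himax j hj') (fun h => ?_)
      exact Finset.ne_of_mem_erase hj (hinj j (htc j hj').2 i (htc i hi).2 h)
  rw [eq_neg_of_add_eq_zero_right hsum', Valuation.map_neg, map_mul, (htc i hi).1, one_mul] at h1
  exact lt_irrefl _ h1

lemma val_linindep (hvK : ∀ c : K, c ≠ 0 → v (algebraMap K F c) = 1) {ι : Type*} (x : ι → F)
    (hx : ∀ i, x i ≠ 0) (hinj : ∀ i j, v (x i) = v (x j) → i = j) : LinearIndependent K x := by
  rw [linearIndependent_iff']
  intro s g hg i hi
  have := val_indep v x (fun i => algebraMap K F (g i)) s (fun i _ => hx i)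
    (fun i _ j _ => hinj i j) (fun i _ => by
      by_cases h : g i = 0
      · simp [h]
      · exact Or.inr (hvK _ h)) (by simpa [Algebra.smul_def] using hg) i hi
  simpa using this

lemma val_residue [IsAlgClosed K] (hvK : ∀ c : K, c ≠ 0 → v (algebraMap K F c) = 1)
    {ι : Type*} (y : ι → F) (hy : IsTranscendenceBasis K y)
    (hinj : ∀ m m' : ι →₀ ℕ, v (m.prod fun i k => y i ^ k) = v (m'.prod fun i k => y i ^ k) → m = m')
    (u : F) (hu : v u ≤ 1) : ∃ c : K, v (u - algebraMap K F c) < 1 := by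
  by_contra! hcon
  have h1 : ∀ c : K, v (u - algebraMap K F c) = 1 := by
    intro c
    refine le_antisymm (v.map_sub_le hu ?_) (hcon c)
    by_cases h : c = 0
    · simp [h]
    · exact (hvK c h).le
  have h2 : ∀ P : Polynomial K, P ≠ 0 → v (Polynomial.aeval u P) = 1 := by
    intro P hP
    rw [(IsAlgClosed.splits P).eq_prod_roots]
    rw [map_mul, map_mul, Polynomial.aeval_C, hvK _ (by simpa using hP), one_mul,
      map_multiset_prod, map_multiset_prod, Multiset.map_map, Multiset.map_map]
    apply Multiset.prod_eq_one
    intro z hz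
    rw [Multiset.mem_map] at hz
    obtain ⟨a, _, rfl⟩ := hz
    simp [h1]
  have hai : AlgebraicIndependent K (fun o : Option ι ↦ o.elim u y) := by
    have : (aeval (R := K) (fun o : Option ι ↦ o.elim u y)).toRingHom =
      (eval₂Hom (Polynomial.aeval u).toRingHom y).comp (optionEquivRight K ι).toAlgHom.toRingHom := by
      apply MvPolynomial.ringHom_ext
      · intro r; simp
      · rintro (_ | i)
        · simp
        · simp
    rw [algebraicIndependent_iff_injective_aeval, injective_iff_map_eq_zero]
    intro P hP
    have hP' : eval₂Hom (Polynomial.aeval u).toRingHom y (optionEquivRight K ι P) = 0 := by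
      have h3 := congrArg (fun f => f P) this
      simp only [RingHom.comp_apply] at h3
      exact h3.symm.trans hP
    set Q := optionEquivRight K ι P with hQ
    have hQ0 : Q = 0 := by
      ext1 m
      by_cases hm : m ∈ Q.support
      · have := val_indep v (fun m : ι →₀ ℕ => m.prod fun i k => y i ^ k)
          (fun m => Polynomial.aeval u (Q.coeff m)) Q.support ?_ (fun i _ j _ => hinj i j) ?_ ?_ m hm
        · have h4 := h2 (Q.coeff m) (by simpa using hm)
          rw [this] at h4
          simp at h4
        · intro m hm
          rw [Finsupp.prod, Finset.prod_ne_zero_iff]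
          intro i _
          exact pow_ne_zero _ (hy.1.ne_zero i)
        · intro m hm
          exact Or.inr (h2 _ (by simpa using hm))
        · rw [coe_eval₂Hom, eval₂_eq] at hP'
          exact hP'
      · simpa using hm
    exact (map_eq_zero_iff _ (optionEquivRight K ι).injective).mp hQ0
  exact ((hy.1.option_iff_transcendental u).mp hai) (hy.isAlgebraic.isAlgebraic u)

lemma val_basis (hvK : ∀ c : K, c ≠ 0 → v (algebraMap K F c) = 1)
    (hres : ∀ u, v u ≤ 1 → ∃ c : K, v (u - algebraMap K F c) < 1)
    (V : Submodule K F) [Module.Finite K V] :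
    ∃ E : Finset F, (∀ e ∈ E, e ∈ V ∧ e ≠ 0) ∧ (∀ e ∈ E, ∀ e' ∈ E, v e = v e' → e = e') ∧
      (∀ f ∈ V, f ≠ 0 → ∃ e ∈ E, v f = v e) ∧ E.card = Module.finrank K V := by
  classical
  have hbound : ∀ E : Finset F, (∀ e ∈ E, e ∈ V ∧ e ≠ 0) → 
      (∀ e ∈ E, ∀ e' ∈ E, v e = v e' → e = e') → E.card ≤ Module.finrank K V := by
    intro E h1 h2
    have hli : LinearIndependent K (fun e : E => (⟨e.1, (h1 e.1 e.2).1⟩ : V)) := by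
      apply LinearIndependent.of_comp V.subtype
      exact val_linindep v hvK (fun e : E => e.1) (fun e => (h1 e.1 e.2).2)
        (fun i j h => Subtype.ext (h2 i.1 i.2 j.1 j.2 h))
    simpa using hli.fintype_card_le_finrank
  -- choose E of maximal cardinality
  have hex : ∃ E : Finset F, ((∀ e ∈ E, e ∈ V ∧ e ≠ 0) ∧
      (∀ e ∈ E, ∀ e' ∈ E, v e = v e' → e = e')) ∧ ∀ E' : Finset F, ((∀ e ∈ E', e ∈ V ∧ e ≠ 0) ∧
      (∀ e ∈ E', ∀ e' ∈ E', v e = v e' → e = e')) → E'.card ≤ E.card := by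
    set S : Set ℕ := {n | ∃ E : Finset F, ((∀ e ∈ E, e ∈ V ∧ e ≠ 0) ∧
      (∀ e ∈ E, ∀ e' ∈ E, v e = v e' → e = e')) ∧ E.card = n} with hS
    have hb : BddAbove S := ⟨Module.finrank K V, by
      rintro n ⟨E, hE, rfl⟩; exact hbound E hE.1 hE.2⟩
    have hne : S.Nonempty := ⟨0, ∅, by simp, by simp⟩
    obtain ⟨E, hE, hc⟩ := Nat.sSup_mem hne hb
    exact ⟨E, hE, fun E' hE' => hc ▸ le_csSup hb ⟨E', hE', rfl⟩⟩
  obtain ⟨E, ⟨hE1, hE2⟩, hmax⟩ := hex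
  have hE3 : ∀ f ∈ V, f ≠ 0 → ∃ e ∈ E, v f = v e := by
    by_contra! hcon
    obtain ⟨f, hf, hf0, hfe⟩ := hcon
    have hfE : f ∉ E := fun h => hfe f h rfl
    have := hmax (insert f E) ⟨?_, ?_⟩
    · rw [Finset.card_insert_of_notMem hfE] at this; omega
    · intro e he
      rcases Finset.mem_insert.mp he with rfl | he
      · exact ⟨hf, hf0⟩
      · exact hE1 e he
    · intro e he e' he' h
      rcases Finset.mem_insert.mp he with rfl | he1 <;> rcases Finset.mem_insert.mp he' with rfl | he2
      · rfl
      · exact absurd h (hfe e' he2)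
      · exact absurd h.symm (hfe e he1)
      · exact hE2 e he1 e' he2 h
  refine ⟨E, hE1, hE2, hE3, le_antisymm (hbound E hE1 hE2) ?_⟩
  have hspan : V ≤ Submodule.span K (E : Set F) := by
    by_contra hcon
    rw [SetLike.not_le_iff_exists] at hcon
    -- minimal value index
    obtain ⟨f0, hf0, hf0'⟩ := hcon
    have hf0e : ∃ e ∈ E, ∃ f ∈ V, f ∉ Submodule.span K (E : Set F) ∧ v f = v e := by
      obtain ⟨e, he, h⟩ := hE3 f0 hf0 (by rintro rfl; exact hf0' (Submodule.zero_mem _))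
      exact ⟨e, he, f0, hf0, hf0', h⟩
    obtain ⟨e0, he0, he0'⟩ := hf0e
    obtain ⟨e, he, hemin⟩ := Finset.exists_min_image
      (E.filter (fun e => ∃ f ∈ V, f ∉ Submodule.span K (E : Set F) ∧ v f = v e)) (fun e => v e)
      ⟨e0, by simp only [Finset.mem_filter]; exact ⟨he0, he0'⟩⟩
    simp only [Finset.mem_filter] at he hemin
    obtain ⟨heE, f, hfV, hfs, hfe⟩ := he
    have hen : e ≠ 0 := (hE1 e heE).2
    have hve : v e ≠ 0 := by simpa using hen
    obtain ⟨c, hc⟩ := hres (f / e) (by rw [map_div₀, hfe, div_self hve])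
    set g := f - c • e with hg
    have hgV : g ∈ V := V.sub_mem hfV (V.smul_mem c (hE1 e heE).1)
    have hgs : g ∉ Submodule.span K (E : Set F) := by
      intro h
      apply hfs
      have := Submodule.add_mem _ h (Submodule.smul_mem _ c (Submodule.subset_span heE))
      simpa [hg] using this
    have hgv : v g < v e := by
      have : g = (f / e - algebraMap K F c) * e := by
        rw [hg, Algebra.smul_def]; field_simp
      rw [this, map_mul]
      exact mul_lt_of_lt_one_left (zero_lt_iff.mpr hve) hc
    obtain ⟨e', he', h'⟩ := hE3 g hgV (by rintro h; rw [h] at hgs; exact hgs (Submodule.zero_mem _))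
    have := hemin e' ⟨he', g, hgV, hgs, h'⟩
    rw [← h'] at this
    exact absurd hgv (not_lt.mpr this)
  exact (Submodule.finrank_mono hspan).trans (finrank_span_finset_le_card E)
end Val

section Exi
variable {K F : Type*} [Field K] [Field F] [Algebra K F] {ι : Type*} [Fintype ι]

def lmon (y : ι → F) (m : ι → ℤ) : F := ∏ i, y i ^ m i

lemma lmon_zero (y : ι → F) : lmon y 0 = 1 := by simp [lmon]

lemma lmon_add (y : ι → F) (hy : ∀ i, y i ≠ 0) (m m' : ι → ℤ) :
    lmon y (m + m') = lmon y m * lmon y m' := by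
  simp [lmon, ← Finset.prod_mul_distrib, zpow_add₀ (hy _)]

lemma lmon_ne (y : ι → F) (hy : ∀ i, y i ≠ 0) (m : ι → ℤ) : lmon y m ≠ 0 :=
  Finset.prod_ne_zero_iff.mpr (fun i _ => zpow_ne_zero _ (hy i))

lemma lmon_indep (y : ι → F) (hy : AlgebraicIndependent K y) :
    LinearIndependent K (lmon y) := by
  classical
  have hy0 : ∀ i, y i ≠ 0 := fun i => hy.ne_zero i
  have hN : LinearIndependent K (fun m : ι →₀ ℕ => lmon y (fun i => (m i : ℤ))) := by
    have h1 := (basisMonomials ι K).linearIndependent.map' (aeval y).toLinearMap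
      (LinearMap.ker_eq_bot.mpr (algebraicIndependent_iff_injective_aeval.mp hy))
    convert! h1 using 2 with m
    simp [lmon, aeval_monomial, Finsupp.prod_fintype]
  rw [linearIndependent_iff']
  intro s g hg
  set N : ι → ℤ := fun i => ∑ m ∈ s, |m i| with hNdef
  have hpos : ∀ m ∈ s, ∀ i, 0 ≤ m i + N i := by
    intro m hm i
    have : |m i| ≤ N i := Finset.single_le_sum (f := fun m : ι → ℤ => |m i|)
      (fun _ _ => abs_nonneg _) hm
    linarith [neg_abs_le (m i)]
  set f : s → (ι →₀ ℕ) := fun m => Finsupp.equivFunOnFinite.symm (fun i => (m.1 i + N i).toNat) with hf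
  have hfe : ∀ m : s, (fun i => ((f m i : ℕ) : ℤ)) = m.1 + N := by
    intro m; ext i
    simp [hf, hpos m.1 m.2 i]
  have hfinj : Function.Injective f := by
    intro a b hab
    have := (hfe a).symm.trans ((by rw [hab]) : _ = _) |>.trans (hfe b)
    exact Subtype.ext (add_right_cancel this)
  have h2 := Fintype.linearIndependent_iff.mp (hN.comp f hfinj) (fun m => g m.1) (by
    simp only [Function.comp, hfe, lmon_add y hy0]
    have h3 : (∑ m ∈ s, g m • lmon y m) * lmon y N = 0 := by rw [hg, zero_mul]
    rw [Finset.sum_mul, ← Finset.sum_coe_sort] at h3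
    simpa only [smul_mul_assoc] using h3)
  intro i hi
  exact h2 ⟨i, hi⟩

lemma exists_val [LinearOrder ι] (y : ι → F) (hy : AlgebraicIndependent K y) :
    ∃ O : ValuationSubring F, (∀ c : K, algebraMap K F c ∈ O) ∧
      ∀ m : ι → ℤ, m ≠ 0 → O.valuation (lmon y m) ≠ 1 := by
  have hy0 : ∀ i, y i ≠ 0 := fun i => hy.ne_zero i
  set p : Submodule K F := Submodule.span K (lmon y '' {m | 0 ≤ toLex m}) with hp
  set N : Submodule K F := Submodule.span K (lmon y '' {m | 0 < toLex m}) with hN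
  have hpp : p * p ≤ p := by
    rw [hp, Submodule.span_mul_span]
    apply Submodule.span_mono
    rintro _ ⟨_, ⟨a, ha, rfl⟩, _, ⟨b, hb, rfl⟩, rfl⟩
    exact ⟨a + b, add_nonneg (α := Lex (ι → ℤ)) ha hb, lmon_add y hy0 a b⟩
  have hpN : p * N ≤ N := by
    rw [hp, hN, Submodule.span_mul_span]
    apply Submodule.span_mono
    rintro _ ⟨_, ⟨a, ha, rfl⟩, _, ⟨b, hb, rfl⟩, rfl⟩
    exact ⟨a + b, add_pos_of_nonneg_of_pos (α := Lex (ι → ℤ)) ha hb, lmon_add y hy0 a b⟩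
  have hNp : N ≤ p := Submodule.span_mono (Set.image_mono (fun m (hm : (0 : Lex (ι → ℤ)) < toLex m) => (hm.le : (0 : Lex (ι → ℤ)) ≤ toLex m)))
  have h1p : (1 : F) ∈ p := Submodule.subset_span ⟨0, le_refl (0 : Lex (ι → ℤ)), lmon_zero y⟩
  have h1N : (1 : F) ∉ N := by
    have := (lmon_indep y hy).notMem_span_image (s := {m | 0 < toLex m}) (x := 0)
      (lt_irrefl (0 : Lex (ι → ℤ)))
    rwa [lmon_zero] at this
  set S : Subalgebra K F := p.toSubalgebra h1p (fun a b ha hb => hpp (Submodule.mul_mem_mul ha hb))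
    with hS
  have hSp : ∀ x, x ∈ S ↔ x ∈ p := fun x => Iff.rfl
  let I : Ideal S.toSubring :=
    { carrier := {x | x.1 ∈ N}
      add_mem' := fun ha hb => N.add_mem ha hb
      zero_mem' := N.zero_mem
      smul_mem' := fun c x hx => hpN (Submodule.mul_mem_mul ((hSp _).mp c.2) hx) }
  have hI : I ≠ ⊤ := by
    rw [Ideal.ne_top_iff_one]
    exact h1N
  obtain ⟨O, hO1, hO2⟩ := Ideal.image_subset_nonunits_valuationSubring I hI
  have key : ∀ m : ι → ℤ, 0 < toLex m → O.valuation (lmon y m) < 1 := by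
    intro m hm
    have hmN : lmon y m ∈ N := Submodule.subset_span ⟨m, hm, rfl⟩
    have : lmon y m ∈ O.nonunits := hO2 ⟨⟨lmon y m, hNp hmN⟩, hmN, rfl⟩
    exact (ValuationSubring.mem_nonunits_iff (A := O)).mp this
  refine ⟨O, fun c => hO1 (S.algebraMap_mem c), fun m hm => ?_⟩
  rcases lt_trichotomy (0 : Lex (ι → ℤ)) (toLex m) with h | h | h
  · exact (key m h).ne
  · exact absurd h.symm hm
  · have h3 := key (-m) (neg_pos.mpr h : (0 : Lex (ι → ℤ)) < - toLex m)
    intro h4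
    have h5 : lmon y m * lmon y (-m) = 1 := by
      rw [← lmon_add y hy0, add_neg_cancel, lmon_zero]
    have h6 := congrArg O.valuation h5
    rw [map_mul, h4, one_mul, map_one] at h6
    exact h3.ne h6
end Exi

section KD
lemma trdeg_ge {K : Type*} [Field K] (R : Type*) [CommRing R] [IsDomain R] [Algebra K R]
    [Algebra.FiniteType K R] (a : ℕ) (hdim : ringKrullDim R = (a : WithBot ℕ∞)) :
    ∃ y : Fin a → R, AlgebraicIndependent K y := by
  obtain ⟨s, g, hinj, hint⟩ := exists_integral_inj_algHom_of_fg K R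
  have hle : ringKrullDim R ≤ ringKrullDim (MvPolynomial (Fin s) K) := by
    algebraize [g.toRingHom]
    refine Order.krullDim_le_of_strictMono
      (fun P => PrimeSpectrum.comap (algebraMap (MvPolynomial (Fin s) K) R) P) ?_
    intro P Q hPQ
    exact Ideal.IsIntegral.comap_lt_comap hPQ
  rw [MvPolynomial.ringKrullDim_of_isNoetherianRing, hdim, ringKrullDim_eq_zero_of_field] at hle
  have has : a ≤ s := by
    simp at hle
    exact_mod_cast hle
  have h1 : AlgebraicIndependent K (fun i => g (X i)) := by
    rw [algebraicIndependent_iff_injective_aeval]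
    convert hinj
    apply MvPolynomial.algHom_ext
    simp
  exact ⟨_, h1.comp (Fin.castLE has) (Fin.castLE_injective has)⟩
end KD


section Core
open scoped Pointwise

def uval {F Γ : Type*} [Field F] [LinearOrderedCommGroupWithZero Γ] (v : Valuation F Γ) (x : F) :
    Additive Γˣ :=
  if h : v x = 0 then 0 else Additive.ofMul (Units.mk0 (v x) h)

lemma uval_mul {F Γ : Type*} [Field F] [LinearOrderedCommGroupWithZero Γ] (v : Valuation F Γ)
    (x y : F) (hx : x ≠ 0) (hy : y ≠ 0) : uval v (x * y) = uval v x + uval v y := by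
  have h1 : v x ≠ 0 := by simpa using hx
  have h2 : v y ≠ 0 := by simpa using hy
  have h3 : v (x * y) ≠ 0 := by simp [hx, hy]
  rw [uval, uval, uval, dif_neg h1, dif_neg h2, dif_neg h3, ← ofMul_mul]
  congr 1
  ext
  simp

lemma uval_inj {F Γ : Type*} [Field F] [LinearOrderedCommGroupWithZero Γ] (v : Valuation F Γ)
    (x y : F) (hx : x ≠ 0) (hy : y ≠ 0) (h : uval v x = uval v y) : v x = v y := by
  have h1 : v x ≠ 0 := by simpa using hx
  have h2 : v y ≠ 0 := by simpa using hy
  rw [uval, uval, dif_neg h1, dif_neg h2] at h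
  simpa using congrArg Units.val (Additive.ofMul.injective h)

def uhom {F Γ : Type*} [Field F] [LinearOrderedCommGroupWithZero Γ] (v : Valuation F Γ) :
    Additive Fˣ →+ Additive Γˣ where
  toFun x := uval v (x.toMul : F)
  map_zero' := by
    have : v ((1 : Fˣ) : F) ≠ 0 := by simp
    simp [uval]
  map_add' x y := uval_mul v _ _ (Units.ne_zero _) (Units.ne_zero _)

theorem core {K F : Type*} [Field K] [Field F] [Algebra K F] [IsAlgClosed K]
    {ι : Type*} [Fintype ι] [LinearOrder ι] (y : ι → F) (hy : IsTranscendenceBasis K y)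
    (V : Submodule K F) [Module.Finite K V] (hyV : ∀ i, y i ∈ V) (d : ℕ) :
    Nat.multichoose (Fintype.card ι) (d + 1) +
      (Module.finrank K V - Fintype.card ι) * Nat.multichoose (Fintype.card ι) d ≤
      Module.finrank K (V ^ (d + 1) : Submodule K F) := by
  classical
  have hy0 : ∀ i, y i ≠ 0 := fun i => hy.1.ne_zero i
  obtain ⟨O, hOK, hOm⟩ := exists_val (K := K) y hy.1
  set v := O.valuation with hv
  have hvK : ∀ c : K, c ≠ 0 → v (algebraMap K F c) = 1 := by
    intro c hc
    apply le_antisymm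
    · exact (O.valuation_le_one_iff _).mpr (hOK c)
    · have h1 : v (algebraMap K F c⁻¹) ≤ 1 := (O.valuation_le_one_iff _).mpr (hOK c⁻¹)
      have h2 : v (algebraMap K F c) * v (algebraMap K F c⁻¹) = 1 := by
        rw [← map_mul, ← map_mul, mul_inv_cancel₀ hc, map_one, map_one]
      calc (1 : O.ValueGroup) = v (algebraMap K F c) * v (algebraMap K F c⁻¹) := h2.symm
        _ ≤ v (algebraMap K F c) * 1 := mul_le_mul_right h1 _
        _ = _ := mul_one _
  have hmon : ∀ m : ι →₀ ℕ, (m.prod fun i k => y i ^ k) = lmon y (fun i => (m i : ℤ)) := by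
    intro m
    simp [lmon, Finsupp.prod_fintype]
  have hres := val_residue v hvK y hy (by
    intro m m' h
    rw [hmon, hmon] at h
    by_contra hne
    refine hOm ((fun i => (m i : ℤ)) + -(fun i => (m' i : ℤ))) ?_ ?_
    · intro h0
      apply hne
      ext i
      have := congrFun h0 i
      simp at this
      omega
    · have h5 : lmon y (fun i => (m' i : ℤ)) * lmon y (-(fun i => (m' i : ℤ))) = 1 := by
        rw [← lmon_add y hy0, add_neg_cancel, lmon_zero]
      rw [lmon_add y hy0, map_mul, h, ← map_mul, h5, map_one])
  obtain ⟨E, hE1, hE2, hE3, hEc⟩ := val_basis v hvK hres V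
  let Γ := Additive (O.ValueGroup)ˣ
  let W := ℚ × DivisibleHull Γ
  let φ : F → W := fun x => (1, ((uval v x : Γ) : DivisibleHull Γ))
  have hφ : ∀ x z : F, x ≠ 0 → z ≠ 0 → φ x = φ z → v x = v z := by
    intro x z hx hz h
    have h2 : ((uval v x : Γ) : DivisibleHull Γ) = ((uval v z : Γ) : DivisibleHull Γ) :=
      congrArg Prod.snd h
    exact uval_inj v x z hx hz (DivisibleHull.coe_injective h2)
  set A : Finset W := E.image φ with hA
  have hAc : A.card = Module.finrank K V := by
    rw [hA, Finset.card_image_of_injOn, hEc]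
    intro e he e' he' h
    exact hE2 e he e' he' (hφ _ _ (hE1 e he).2 (hE1 e' he').2 h)
  have hmain := fr_main (LinearMap.fst ℚ ℚ (DivisibleHull Γ)) A (by
    intro w hw
    rw [hA, Finset.mem_image] at hw
    obtain ⟨e, _, rfl⟩ := hw
    rfl) d
  -- rank
  have hli : LinearIndependent ℚ (fun i => φ (y i)) := by
    apply LinearIndependent.of_comp (LinearMap.snd ℚ ℚ (DivisibleHull Γ))
    rw [← LinearIndependent.iff_fractionRing ℤ ℚ, Fintype.linearIndependent_iff]
    intro m hm
    by_contra! hcon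
    obtain ⟨i, hi⟩ := hcon
    refine hOm m (fun h => hi (congrFun h i)) ?_
    have h1 : lmon y m = ((∑ i, m i • Additive.ofMul (Units.mk0 (y i) (hy0 i))).toMul : Fˣ) := by
      simp [lmon, toMul_sum]
    have h2 : DivisibleHull.coeAddMonoidHom (M := Γ)
        (uhom v (∑ i, m i • Additive.ofMul (Units.mk0 (y i) (hy0 i)))) = 0 := by
      rw [map_sum, map_sum, ← hm]
      apply Finset.sum_congr rfl
      intro i _
      rw [map_zsmul, map_zsmul]
      rfl
    have h3 : uhom v (∑ i, m i • Additive.ofMul (Units.mk0 (y i) (hy0 i))) = uhom v 0 := by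
      rw [map_zero]
      apply DivisibleHull.coe_injective (M := Γ)
      exact h2.trans (DivisibleHull.coeAddMonoidHom Γ).map_zero.symm
    have h4 := uval_inj v _ _ (Units.ne_zero _) (Units.ne_zero _) h3
    rw [h1, hv]
    rw [h4]
    simp
  have hrank : Fintype.card ι ≤ Module.finrank ℚ (Submodule.span ℚ (A : Set W)) := by
    rw [← finrank_span_eq_card hli]
    apply Submodule.finrank_mono
    apply Submodule.span_mono
    rintro _ ⟨i, rfl⟩
    obtain ⟨e, he, hve⟩ := hE3 (y i) (hyV i) (hy0 i)
    rw [hA, Finset.coe_image]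
    refine ⟨e, he, ?_⟩
    simp only [φ, uval, hve]
  have hrank2 : Module.finrank ℚ (Submodule.span ℚ (A : Set W)) ≤ A.card :=
    finrank_span_finset_le_card A
  refine (mc_bound _ d _ _ hrank (hAc ▸ hrank2)).trans ?_
  rw [← hAc]
  refine hmain.trans ?_
  -- lifting
  have hlift : ∀ k : ℕ, ∀ w ∈ k • A, ∃ x ∈ V ^ k, x ≠ 0 ∧
      w = ((k : ℚ), ((uval v x : Γ) : DivisibleHull Γ)) := by
    intro k
    induction k with
    | zero =>
      intro w hw
      simp only [zero_nsmul, Finset.mem_zero] at hw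
      refine ⟨1, by simp, one_ne_zero, ?_⟩
      have h0 : uval v (1 : F) = 0 := (uhom v).map_zero
      rw [hw, h0]
      ext <;> simp
    | succ k ih =>
      intro w hw
      rw [succ_nsmul, Finset.mem_add] at hw
      obtain ⟨a, ha, b, hb, rfl⟩ := hw
      obtain ⟨x, hxV, hx0, rfl⟩ := ih a ha
      rw [hA, Finset.mem_image] at hb
      obtain ⟨e, he, rfl⟩ := hb
      refine ⟨x * e, ?_, mul_ne_zero hx0 (hE1 e he).2, ?_⟩
      · rw [pow_succ]; exact Submodule.mul_mem_mul hxV (hE1 e he).1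
      · rw [uval_mul v x e hx0 (hE1 e he).2]
        ext
        · show (k : ℚ) + 1 = ((k + 1 : ℕ) : ℚ)
          push_cast; rfl
        · exact DivisibleHull.coe_add.symm
  choose! g hg1 hg2 hg3 using hlift (d + 1)
  have hfin : Module.Finite K (V ^ (d + 1) : Submodule K F) := by
    rw [Module.Finite.iff_fg]
    exact (Module.Finite.iff_fg.mp inferInstance : V.FG).pow _
  have hli2 : LinearIndependent K
      (fun w : ((d + 1) • A : Finset W) => (⟨g w.1, hg1 w.1 w.2⟩ : (V ^ (d + 1) : Submodule K F))) := by
    apply LinearIndependent.of_comp (V ^ (d + 1)).subtype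
    refine val_linindep v hvK (fun w : ((d + 1) • A : Finset W) => g w.1) (fun w => hg2 w.1 w.2) ?_
    intro w w' h
    apply Subtype.ext
    rw [hg3 w.1 w.2, hg3 w'.1 w'.2]
    simp only [uval, h]
  simpa using hli2.fintype_card_le_finrank
end Core

/-- Let `Z ⊆ ℙ^r` be a nondegenerate integral closed subscheme of dimension
`a ≥ 1` over an algebraically closed field `K`. Here `Z` is encoded by its homogeneous prime
ideal `p ⊆ K[x_0, …, x_r]`; `dim Z = a` means that the affine cone has Krull dimension
`a + 1`; and nondegeneracy means that `p` contains no nonzero linear form. Then for every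
`d ≥ 1` the Hilbert function of `Z` at `d`, i.e. the `K`-dimension of the image of the space
of degree-`d` forms in the homogeneous coordinate ring `K[x_0, …, x_r] ⧸ p`, is at least
`h_{r,a}(d) = (r-a) * C(d+a-1, d-1) + C(d+a, d)`. -/
theorem statement4 [IsAlgClosed K] (r a : ℕ) (ha : 1 ≤ a)
    (p : Ideal (MvPolynomial (Fin (r + 1)) K)) (hprime : p.IsPrime)
    (hhom : IsHomogeneousIdeal K p)
    (hdim : ringKrullDim (MvPolynomial (Fin (r + 1)) K ⧸ p) = ((a + 1 : ℕ) : WithBot ℕ∞))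
    (hnondeg : ∀ f ∈ p, f.IsHomogeneous 1 → f = 0)
    (d : ℕ) (hd : 1 ≤ d) :
    hpoly (r : ℤ) (a : ℤ) (d : ℤ) ≤
      (Module.finrank K
        ↥((homogeneousSubmodule (Fin (r + 1)) K d).map
          (Ideal.Quotient.mkₐ K p).toLinearMap) : ℤ) := by
  classical
  obtain ⟨e, rfl⟩ : ∃ e, d = e + 1 := ⟨d - 1, by omega⟩
  haveI : IsDomain (MvPolynomial (Fin (r + 1)) K ⧸ p) := Ideal.Quotient.isDomain p
  let R := MvPolynomial (Fin (r + 1)) K ⧸ p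
  let F := FractionRing R
  let π : MvPolynomial (Fin (r + 1)) K →ₐ[K] R := Ideal.Quotient.mkₐ K p
  have hπ : Function.Surjective π := Ideal.Quotient.mkₐ_surjective K p
  let j : R →ₐ[K] F := IsScalarTower.toAlgHom K R F
  have hj : Function.Injective j := IsFractionRing.injective R F
  let φ : MvPolynomial (Fin (r + 1)) K →ₐ[K] F := j.comp π
  obtain ⟨y0, hy0⟩ := trdeg_ge (K := K) R (a + 1) hdim
  let s : Set R := Set.range fun i => π (X i)
  have hs : Algebra.adjoin K s = ⊤ := by
    have h1 : s = π '' (Set.range X) := by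
      rw [← Set.range_comp]; rfl
    rw [h1, ← AlgHom.map_adjoin, MvPolynomial.adjoin_range_X, Algebra.map_top]
    exact (AlgHom.range_eq_top π).mpr hπ
  haveI : Algebra.IsAlgebraic (Algebra.adjoin K s) R := by
    constructor
    intro x
    exact isAlgebraic_algebraMap (⟨x, hs ▸ Algebra.mem_top⟩ : Algebra.adjoin K s)
  obtain ⟨t, hts, ht⟩ := exists_isTranscendenceBasis_subset (R := K) (A := R) s
  have hsfin : s.Finite := Set.finite_range _
  haveI : Fintype t := (hsfin.subset hts).fintype
  letI : LinearOrder t := LinearOrder.lift' (Fintype.equivFin t) (Fintype.equivFin t).injective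
  have hcle : Fintype.card t ≤ r + 1 := by
    have h1 : ∀ z : t, ∃ i, π (X i) = z.1 := fun z => hts z.2
    choose g hg using h1
    have := Fintype.card_le_of_injective g (fun z z' h => Subtype.ext (by rw [← hg z, h, hg]))
    simpa using this
  have hcge : a + 1 ≤ Fintype.card t := by
    have h1 := hy0.lift_cardinalMk_le_trdeg
    have h2 := ht.cardinalMk_eq_trdeg
    rw [← h2] at h1
    simpa using h1
  haveI : Algebra.IsAlgebraic R F := IsLocalization.isAlgebraic F (nonZeroDivisors R)
  have htF : IsTranscendenceBasis K (algebraMap R F ∘ ((↑) : t → R)) := ht.algebraMap_comp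
  let V : Submodule K F := (homogeneousSubmodule (Fin (r + 1)) K 1).map φ.toLinearMap
  have hVspan : V = Submodule.span K (Set.range fun i => φ (X i)) := by
    show (homogeneousSubmodule (Fin (r + 1)) K 1).map φ.toLinearMap = _
    rw [homogeneousSubmodule_one_eq_span_X, Submodule.map_span, ← Set.range_comp]
    rfl
  have hVfin : Module.Finite K V := by
    rw [hVspan]
    exact Module.Finite.span_of_finite K (Set.finite_range _)
  have hli : LinearIndependent K (fun i => φ (X i)) := by
    rw [Fintype.linearIndependent_iff]
    intro c hc i
    have h1 : φ (∑ i, c i • X i) = 0 := by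
      rw [map_sum, ← hc]
      exact Finset.sum_congr rfl fun i _ => map_smul φ _ _
    have h2 : π (∑ i, c i • X i) = 0 := hj (by rw [map_zero]; exact h1)
    have h3 : (∑ i, c i • X i : MvPolynomial (Fin (r + 1)) K) = 0 := by
      apply hnondeg _ (Ideal.Quotient.eq_zero_iff_mem.mp h2)
      rw [← mem_homogeneousSubmodule]
      exact Submodule.sum_mem _ fun i _ => Submodule.smul_mem _ _ (isHomogeneous_X K i)
    exact Fintype.linearIndependent_iff.mp (MvPolynomial.linearIndependent_X _ K) c h3 i
  have hVr : Module.finrank K V = r + 1 := by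
    rw [hVspan, finrank_span_eq_card hli]; simp
  have hcore := core _ htF V (by
    intro z
    obtain ⟨i, hi⟩ := hts z.2
    refine ⟨X i, isHomogeneous_X K i, ?_⟩
    show j (π (X i)) = algebraMap R F z.1
    rw [← hi]; rfl) e
  rw [hVr] at hcore
  have hb := (mc_bound (r + 1) e (a + 1) _ hcge hcle).trans hcore
  have hVpow : V ^ (e + 1) = ((homogeneousSubmodule (Fin (r + 1)) K (e + 1)).map
      π.toLinearMap).map j.toLinearMap := by
    rw [← Submodule.map_comp, ← homogeneousSubmodule_one_pow]
    exact (Submodule.map_pow _ φ _).symm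
  have hfr : Module.finrank K (V ^ (e + 1) : Submodule K F) = Module.finrank K
      ((homogeneousSubmodule (Fin (r + 1)) K (e + 1)).map π.toLinearMap) := by
    rw [hVpow]
    exact (LinearEquiv.finrank_eq (Submodule.equivMapOfInjective j.toLinearMap hj _)).symm
  rw [hfr, Nat.multichoose_eq, Nat.multichoose_eq] at hb
  have har : a ≤ r := by omega
  refine le_trans (le_of_eq ?_) (Int.ofNat_le.mpr hb)
  have e1 : ((e + 1 : ℕ) + (a : ℤ) - 1).toNat = a + 1 + e - 1 := by omega
  have e2 : (((e + 1 : ℕ) : ℤ) - 1).toNat = e := by omega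
  have e3 : ((e + 1 : ℕ) + (a : ℤ)).toNat = a + 1 + (e + 1) - 1 := by omega
  have e4 : (((e + 1 : ℕ) : ℤ)).toNat = e + 1 := by omega
  have e5 : r + 1 - (a + 1) = r - a := by omega
  rw [hpoly, e1, e2, e3, e4, e5]
  push_cast [har]
  ring

end Statement4
end

section
/- Let r ≥ 2 and a ≥ 1 be integers and let d_1,…,d_{r+a−1} be positive integers. Let L ⊆ W_{r,d_1}×⋯×W_{r,d_{r+a−1}} be the set of tuples (F_1,…,F_{r+a−1}) such that V(F_1,…,F_{r+a−1}) contains a line of ℙ^r. Then L is a Zariski closed irreducible subset of codimension Σ_{i=1}^{r+a−1}(d_i+1) − 2(r−1) in W_{r,d_1}×⋯×W_{r,d_{r+a−1}}. -/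
open MvPolynomial

noncomputable section

variable (K : Type*) [Field K] (M : Type*) [AddCommGroup M] [Module K M]

/-- Evaluation of a polynomial in the linear functionals of `M` at a point `v : M`.
These are precisely the polynomial functions on the affine space `M`. -/
def polyEval (p : MvPolynomial (M →ₗ[K] K) K) (v : M) : K :=
  MvPolynomial.eval (fun φ : M →ₗ[K] K => φ v) p

lemma polyEval_mul (p q : MvPolynomial (M →ₗ[K] K) K) (v : M) :
    polyEval K M (p * q) v = polyEval K M p v * polyEval K M q v :=
  map_mul (MvPolynomial.eval fun φ : M →ₗ[K] K => φ v) p q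

/-- The collection of Zariski-closed subsets of the affine space `M`:
common zero loci of families of polynomial functions. -/
def zariskiCloseds : Set (Set M) :=
  {s | ∃ S : Set (MvPolynomial (M →ₗ[K] K) K), s = {v | ∀ p ∈ S, polyEval K M p v = 0}}

/-- The Zariski topology on an affine space (vector space) `M` over `K`. -/
def zariskiTopology : TopologicalSpace M := by
  refine TopologicalSpace.ofClosed (zariskiCloseds K M) ⟨{1}, ?_⟩ ?_ ?_
  · ext v
    simp [polyEval]
  · intro A hA
    choose S hS using fun a : A => hA a.2
    refine ⟨⋃ a : A, S a, ?_⟩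
    ext v
    simp only [Set.mem_sInter, Set.mem_setOf_eq, Set.mem_iUnion]
    constructor
    · rintro h p ⟨a, hp⟩
      have := h a a.2
      rw [hS a] at this
      exact this p hp
    · intro h t ht
      have : v ∈ {w | ∀ p ∈ S ⟨t, ht⟩, polyEval K M p w = 0} :=
        fun p hp => h p ⟨⟨t, ht⟩, hp⟩
      rw [← hS ⟨t, ht⟩] at this
      exact this
  · rintro s ⟨S₁, rfl⟩ t ⟨S₂, rfl⟩
    refine ⟨Set.image2 (· * ·) S₁ S₂, ?_⟩
    ext v
    simp only [Set.mem_union, Set.mem_setOf_eq]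
    constructor
    · rintro (h | h) p ⟨p₁, h₁, p₂, h₂, rfl⟩
      · show polyEval K M (p₁ * p₂) v = 0
        rw [polyEval_mul, h p₁ h₁, zero_mul]
      · show polyEval K M (p₁ * p₂) v = 0
        rw [polyEval_mul, h p₂ h₂, mul_zero]
    · intro h
      by_contra hc
      push_neg at hc
      obtain ⟨⟨p₁, h₁, hv₁⟩, ⟨p₂, h₂, hv₂⟩⟩ := hc
      have h12 := h (p₁ * p₂) ⟨p₁, h₁, p₂, h₂, rfl⟩
      rw [polyEval_mul] at h12
      exact mul_ne_zero hv₁ hv₂ h12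

/-- The dimension of a subset of affine space: the Krull dimension of its Zariski closure. -/
def dimSet {M : Type*} [TopologicalSpace M] (s : Set M) : WithBot ℕ∞ :=
  topologicalKrullDim ↥(closure s)

/-- `vdimGE r n F m` says that the common projective vanishing locus
`V(F 0, …, F (n-1)) ⊆ ℙ^r` has dimension at least `m` (with `dim ∅ = -∞`).
This is encoded via the Krull dimension of the homogeneous coordinate ring of the
affine cone: `dim V(F) ≥ m` iff the cone has Krull dimension at least `max m 0 + 1`. -/
def vdimGE {K : Type*} [Field K] (r n : ℕ) (F : Fin n → MvPolynomial (Fin (r + 1)) K)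
    (m : ℤ) : Prop :=
  ((m.toNat + 1 : ℕ) : WithBot ℕ∞) ≤
    ringKrullDim (MvPolynomial (Fin (r + 1)) K ⧸ Ideal.span (Set.range F))

end

noncomputable section Statement5

open MvPolynomial

variable (K : Type*) [Field K]

/-- The affine space `W_{r, d 0} × ⋯ × W_{r, d (n-1)}` of `n`-tuples of homogeneous
forms of degrees `d 0, …, d (n-1)` in the variables `x_0, …, x_r`. -/
abbrev tupleSpace (r n : ℕ) (d : Fin n → ℕ) : Type _ :=
  (i : Fin n) → ↥(homogeneousSubmodule (Fin (r + 1)) K (d i))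

/-- The Zariski topology on the affine space of tuples of forms. -/
instance (r n : ℕ) (d : Fin n → ℕ) : TopologicalSpace (tupleSpace K r n d) :=
  zariskiTopology K _

/-- The forms `F 0, …, F (n-1)` all vanish on a common line of `ℙ^r`. -/
def vanishOnCommonLine {r n : ℕ} {d : Fin n → ℕ} (F : tupleSpace K r n d) : Prop :=
  ∃ v w : Fin (r + 1) → K, LinearIndependent K ![v, w] ∧
    ∀ i : Fin n, ∀ s t : K,
      MvPolynomial.eval (fun j => s * v j + t * w j) (F i : MvPolynomial (Fin (r + 1)) K) = 0


section Alg
universe u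
variable {k : Type u} [Field k]

lemma s5_dim_eq_of_integral {A B : Type*} [CommRing A] [CommRing B] [IsDomain A] [IsDomain B] [Algebra A B]
    [Algebra.IsIntegral A B] (hinj : Function.Injective (algebraMap A B)) :
    ringKrullDim B = ringKrullDim A := by
  apply le_antisymm
  · refine Order.krullDim_le_of_strictMono (PrimeSpectrum.comap (algebraMap A B)) ?_
    intro I J h
    exact Ideal.IsIntegral.comap_lt_comap (R := A) (I := I.asIdeal) (J := J.asIdeal) h
  · refine iSup_le fun l => ?_
    obtain ⟨P, hP, hP'⟩ : ∃ P : Ideal B, P.IsPrime ∧ P.comap (algebraMap A B) = l.head.asIdeal := by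
      obtain ⟨Q, _, hQ, hQ'⟩ := Ideal.exists_ideal_over_prime_of_isIntegral (R := A) (S := B)
        l.head.asIdeal ⊥ (by
          rw [← RingHom.ker_eq_comap_bot, (RingHom.injective_iff_ker_eq_bot _).1 hinj]; exact bot_le)
      exact ⟨Q, hQ, hQ'⟩
    have : P.LiesOver (RelSeries.head l).asIdeal := ⟨hP'.symm⟩
    obtain ⟨L, hL, -⟩ := Ideal.exists_ltSeries_of_hasGoingUp l P
    rw [← hL]
    exact le_iSup (fun p : LTSeries (PrimeSpectrum B) => ((p.length : ℕ∞) : WithBot ℕ∞)) L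

lemma s5_dim_alg {A : Type u} [CommRing A] [IsDomain A] [Algebra k A] [Algebra.FiniteType k A]
    {τ : Type} [Fintype τ]
    (f : A →ₐ[k] MvPolynomial τ k) (hf : Function.Injective f)
    (g : MvPolynomial τ k →ₐ[k] A) (hg : Function.Injective g) :
    ringKrullDim A = (Fintype.card τ : ℕ) := by
  obtain ⟨s, h, hinj, hint⟩ := exists_integral_inj_algHom_of_fg k A
  have ht : Algebra.trdeg k A = Fintype.card τ := by
    apply le_antisymm
    · simpa using trdeg_le_of_injective f hf
    · simpa using trdeg_le_of_injective g hg
  algebraize [h.toRingHom]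
  have hinj' : Function.Injective (algebraMap (MvPolynomial (Fin s) k) A) := hinj
  have : FaithfulSMul (MvPolynomial (Fin s) k) A := (faithfulSMul_iff_algebraMap_injective _ _).2 hinj'
  have : Algebra.IsIntegral (MvPolynomial (Fin s) k) A := ⟨hint⟩
  have h2 := trdeg_add_eq k (MvPolynomial (Fin s) k) (A := A)
  rw [_root_.trdeg_eq_zero (R := MvPolynomial (Fin s) k) (A := A), ht] at h2
  have hs : s = Fintype.card τ := by
    have : ((s : ℕ) : Cardinal.{u}) = (Fintype.card τ : ℕ) := by simpa using h2
    exact_mod_cast this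
  rw [s5_dim_eq_of_integral hinj', MvPolynomial.ringKrullDim_of_isNoetherianRing]
  simp [hs]

lemma s5_inj {τ : Type} (f : τ → MvPolynomial τ k)
    (hf : ∀ j, f j - X j ∈ (idealOfVars τ k) ^ 2) :
    Function.Injective (aeval (R := k) f) := by
  set m := idealOfVars τ k with hm
  set φ := aeval (R := k) f with hφ
  have hX : ∀ j, (X j : MvPolynomial τ k) ∈ m := fun j => Ideal.subset_span ⟨j, rfl⟩
  have h0 : ∀ P, φ P - P ∈ m := by
    intro P
    induction P using MvPolynomial.induction_on with
    | C a => simp [hφ]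
    | add p q hp hq => 
      have := m.add_mem hp hq
      simpa [add_sub_add_comm] using this
    | mul_X p j hp =>
      have h1 : φ (p * X j) - p * X j = φ p * (f j - X j) + (φ p - p) * X j := by
        simp [hφ]; ring
      rw [h1]
      exact m.add_mem (m.mul_mem_left _ (Ideal.pow_le_self two_ne_zero (hf j))) (m.mul_mem_right _ hp)
  have h1 : ∀ Q ∈ m, φ Q - Q ∈ m ^ 2 := by
    intro Q hQ
    refine Submodule.span_induction ?_ ?_ ?_ ?_ hQ
    · rintro _ ⟨j, rfl⟩
      simpa [hφ] using hf j
    · simp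
    · intro x y _ _ hx hy
      have := (m ^ 2).add_mem hx hy
      simpa [add_sub_add_comm] using this
    · intro a x hx hx'
      have h1 : φ (a • x) - a • x = φ a * (φ x - x) + (φ a - a) * x := by
        simp; ring
      rw [h1]
      refine (m ^ 2).add_mem ((m ^ 2).mul_mem_left _ hx') ?_
      rw [pow_two]
      exact Ideal.mul_mem_mul (h0 a) hx
  have h2 : ∀ n, ∀ P ∈ m ^ n, φ P - P ∈ m ^ (n + 1) := by
    intro n
    induction n with
    | zero => intro P _; simpa using h0 P
    | succ n ih =>
      intro P hP
      rw [pow_succ] at hP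
      refine Submodule.mul_induction_on hP ?_ ?_
      · intro a ha b hb
        have e : φ (a * b) - a * b = φ a * (φ b - b) + (φ a - a) * b := by
          simp; ring
        have hφa : φ a ∈ m ^ n := by
          have := (m ^ n).add_mem (Ideal.pow_le_pow_right (Nat.le_succ n) (ih a ha)) ha
          simpa using this
        rw [e]
        refine Ideal.add_mem _ ?_ ?_
        · have := Ideal.mul_mem_mul hφa (h1 b hb)
          rwa [← pow_add] at this
        · have := Ideal.mul_mem_mul (ih a ha) hb
          rwa [← pow_succ] at this
      · intro x y hx hy
        have := Ideal.add_mem _ hx hy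
        simpa [add_sub_add_comm] using this
  rw [injective_iff_map_eq_zero]
  intro P hP
  have h3 : ∀ n, P ∈ m ^ n := by
    intro n
    induction n with
    | zero => simp
    | succ n ih =>
      have := h2 n P ih
      rw [hP, zero_sub] at this
      simpa using this
  ext x
  exact (mem_pow_idealOfVars_iff' _ _).1 (h3 (x.degree + 1)) x (Nat.lt_succ_self _)

end Alg

section Topo
universe u
variable {k : Type u} [Field k] {M : Type*} [AddCommGroup M] [Module k M]
  {ν : Type} [Fintype ν] [DecidableEq ν]

lemma s5_isClosed_iff [t : TopologicalSpace M] (ht : t = zariskiTopology k M)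
    (e : M ≃ₗ[k] (ν → k)) (s : Set M) :
    IsClosed s ↔ ∃ I : Ideal (MvPolynomial ν k), s = {v | e v ∈ zeroLocus k I} := by
  subst ht
  have h1 : @IsClosed M (zariskiTopology k M) s ↔ s ∈ zariskiCloseds k M := by
    rw [← @isOpen_compl_iff]
    change sᶜᶜ ∈ zariskiCloseds k M ↔ _
    rw [compl_compl]
  rw [h1]
  constructor
  · rintro ⟨S, rfl⟩
    let Θ : MvPolynomial (M →ₗ[k] k) k →ₐ[k] MvPolynomial ν k :=
      aeval fun φ => ∑ i, C (φ (e.symm (Pi.single i 1))) * X i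
    have hΘ : ∀ p v, aeval (e v) (Θ p) = polyEval k M p v := by
      intro p v
      have : ((aeval (e v)).comp Θ) = aeval (fun φ : M →ₗ[k] k => φ v) := by
        ext φ
        simp only [Θ, AlgHom.comp_apply, aeval_X, map_sum, map_mul, aeval_C, Algebra.algebraMap_self, RingHom.id_apply]
        have hv : v = ∑ i, (e v i) • e.symm (Pi.single i 1) := by
          apply e.injective
          simp only [map_sum, map_smul, LinearEquiv.apply_symm_apply]
          ext j
          simp [Finset.sum_apply, Pi.single_apply]
        conv_rhs => rw [hv]
        simp [mul_comm]
      have h2 := congrArg (fun f => f p) this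
      simpa [polyEval, aeval_eq_eval] using h2
    refine ⟨Ideal.span (Θ '' S), ?_⟩
    ext v
    rw [Set.mem_ofPred_eq, Set.mem_ofPred_eq, zeroLocus_span]
    simp only [Set.mem_ofPred_eq, Set.forall_mem_image, hΘ]
  · rintro ⟨I, rfl⟩
    let Θ : MvPolynomial ν k →ₐ[k] MvPolynomial (M →ₗ[k] k) k :=
      aeval fun i => X ((LinearMap.proj i).comp e.toLinearMap)
    have hΘ : ∀ p v, polyEval k M (Θ p) v = aeval (e v) p := by
      intro p v
      have : ((aeval (fun φ : M →ₗ[k] k => φ v)).comp Θ) = aeval (e v) := by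
        ext φ
        simp [Θ]
      have h2 := congrArg (fun f => f p) this
      simpa [polyEval, aeval_eq_eval] using h2
    refine ⟨Θ '' I, ?_⟩
    ext v
    simp [hΘ, mem_zeroLocus_iff]

variable [t : TopologicalSpace M] 

lemma s5_closed_eq (ht : t = zariskiTopology k M) (e : M ≃ₗ[k] (ν → k)) (s : Set M) (hs : IsClosed s) :
    s = {v | e v ∈ zeroLocus k (vanishingIdeal k (e '' s))} := by
  obtain ⟨I, hI⟩ := (s5_isClosed_iff ht e s).1 hs
  apply Set.Subset.antisymm
  · intro v hv
    exact zeroLocus_vanishingIdeal_le (k := k) _ ⟨v, hv, rfl⟩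
  · intro v hv
    rw [hI]
    refine zeroLocus_anti_mono ?_ hv
    rw [← le_zeroLocus_iff_le_vanishingIdeal]
    rintro _ ⟨w, hw, rfl⟩
    rw [hI] at hw
    exact hw

lemma s5_irr_iff (ht : t = zariskiTopology k M) (e : M ≃ₗ[k] (ν → k)) (s : Set M) :
    IsIrreducible s ↔ (vanishingIdeal k (e '' s)).IsPrime := by
  constructor
  · intro hs
    refine ⟨?_, ?_⟩
    · obtain ⟨v, hv⟩ := hs.nonempty
      intro h
      have : (1 : MvPolynomial ν k) ∈ vanishingIdeal k (e '' s) := by rw [h]; trivial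
      have := this (e v) ⟨v, hv, rfl⟩
      simp at this
    · intro p q hpq
      have hc : ∀ p : MvPolynomial ν k, IsClosed {v | e v ∈ zeroLocus k (Ideal.span {p})} :=
        fun p => (s5_isClosed_iff ht e _).2 ⟨_, rfl⟩
      have := isPreirreducible_iff_isClosed_union_isClosed.1 hs.isPreirreducible _ _ (hc p) (hc q) (by
        intro v hv
        have := hpq (e v) ⟨v, hv, rfl⟩
        simpa [zeroLocus_span] using this)
      rcases this with h | h
      · left
        rintro _ ⟨v, hv, rfl⟩
        simpa [zeroLocus_span] using h hv
      · right
        rintro _ ⟨v, hv, rfl⟩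
        simpa [zeroLocus_span] using h hv
  · intro hP
    refine ⟨?_, ?_⟩
    · by_contra h
      rw [Set.not_nonempty_iff_eq_empty] at h
      apply hP.ne_top
      simp [h, vanishingIdeal_empty]
    · rw [isPreirreducible_iff_isClosed_union_isClosed]
      intro z1 z2 h1 h2 h
      obtain ⟨I, rfl⟩ := (s5_isClosed_iff ht e _).1 h1
      obtain ⟨J, rfl⟩ := (s5_isClosed_iff ht e _).1 h2
      have : I * J ≤ vanishingIdeal k (e '' s) := by
        rw [Ideal.mul_le]
        rintro p hp q hq _ ⟨v, hv, rfl⟩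
        rw [map_mul]
        rcases h hv with h | h
        · rw [h p hp, zero_mul]
        · rw [h q hq, mul_zero]
      rcases hP.mul_le.1 this with h | h
      · left; intro v hv p hp
        exact h hp (e v) ⟨v, hv, rfl⟩
      · right; intro v hv p hp
        exact h hp (e v) ⟨v, hv, rfl⟩

lemma s5_irr_sub {X : Type*} [TopologicalSpace X] {L : Set X} (s : Set L)
    (h : IsIrreducible (Subtype.val '' s)) : IsIrreducible s := by
  refine ⟨?_, ?_⟩
  · exact Set.image_nonempty.1 h.nonempty
  · rw [isPreirreducible_iff_isClosed_union_isClosed]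
    intro z1 z2 h1 h2 h12
    obtain ⟨c1, hc1, rfl⟩ := isClosed_induced_iff.1 h1
    obtain ⟨c2, hc2, rfl⟩ := isClosed_induced_iff.1 h2
    have := isPreirreducible_iff_isClosed_union_isClosed.1 h.isPreirreducible c1 c2 hc1 hc2 (by
      rintro _ ⟨x, hx, rfl⟩; exact h12 hx)
    rcases this with h | h
    · left; intro x hx; exact h ⟨x, hx, rfl⟩
    · right; intro x hx; exact h ⟨x, hx, rfl⟩

lemma s5_dim_top [IsAlgClosed k] (ht : t = zariskiTopology k M) (e : M ≃ₗ[k] (ν → k)) (L : Set M)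
    (hL : IsClosed L) :
    topologicalKrullDim L = ringKrullDim (MvPolynomial ν k ⧸ vanishingIdeal k (e '' L)) := by
  rw [ringKrullDim_quotient, topologicalKrullDim]
  have hirr : ∀ Z : TopologicalSpace.IrreducibleCloseds L, IsIrreducible (Subtype.val '' (Z : Set L)) :=
    fun Z => Z.isIrreducible.image _ continuous_subtype_val.continuousOn
  have hcl : ∀ Z : TopologicalSpace.IrreducibleCloseds L, IsClosed (Subtype.val '' (Z : Set L)) :=
    fun Z => hL.isClosedEmbedding_subtypeVal.isClosedMap _ Z.isClosed
  apply le_antisymm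
  · rw [← Order.krullDim_orderDual]
    refine Order.krullDim_le_of_strictMono (fun Z => ⟨⟨vanishingIdeal k (e '' (Subtype.val '' ((OrderDual.ofDual Z : TopologicalSpace.IrreducibleCloseds L) : Set L))), (s5_irr_iff ht e _).1 (hirr _)⟩, ?_⟩) ?_
    · refine vanishingIdeal_anti_mono ?_
      rintro _ ⟨_, ⟨v, _, rfl⟩, rfl⟩
      exact ⟨v, v.2, rfl⟩
    · intro Z1 Z2 h
      have h' : OrderDual.ofDual Z2 < OrderDual.ofDual Z1 := h
      change vanishingIdeal k (e '' (Subtype.val '' ((OrderDual.ofDual Z1 : TopologicalSpace.IrreducibleCloseds L) : Set L))) < vanishingIdeal k (e '' (Subtype.val '' ((OrderDual.ofDual Z2 : TopologicalSpace.IrreducibleCloseds L) : Set L)))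
      refine lt_of_le_not_ge (vanishingIdeal_anti_mono ?_) ?_
      · exact Set.image_mono (Set.image_mono h'.le)
      · intro hle
        apply h'.not_ge
        intro v hv
        have h3 : (v : M) ∈ Subtype.val '' ((OrderDual.ofDual Z2 : TopologicalSpace.IrreducibleCloseds L) : Set L) := by
          rw [s5_closed_eq ht e _ (hcl _)]
          refine zeroLocus_anti_mono hle ?_
          exact zeroLocus_vanishingIdeal_le (k := k) _ ⟨v, ⟨v, hv, rfl⟩, rfl⟩
        obtain ⟨w, hw, hwv⟩ := h3
        rw [Subtype.val_injective hwv] at hw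
        exact hw
  · rw [← Order.krullDim_orderDual]
    have key : ∀ P : PrimeSpectrum.zeroLocus (R := MvPolynomial ν k) (vanishingIdeal k (e '' L)),
        Subtype.val '' {v : L | e v ∈ zeroLocus k P.1.asIdeal} = {v : M | e v ∈ zeroLocus k P.1.asIdeal} := by
      intro P
      ext v
      constructor
      · rintro ⟨w, hw, rfl⟩; exact hw
      · intro hv
        refine ⟨⟨v, ?_⟩, hv, rfl⟩
        rw [s5_closed_eq ht e L hL]
        exact zeroLocus_anti_mono P.2 hv
    have key2 : ∀ P : PrimeSpectrum.zeroLocus (R := MvPolynomial ν k) (vanishingIdeal k (e '' L)),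
        vanishingIdeal k (e '' {v : M | e v ∈ zeroLocus k P.1.asIdeal}) = P.1.asIdeal := by
      intro P
      have : e '' {v : M | e v ∈ zeroLocus k P.1.asIdeal} = zeroLocus k P.1.asIdeal := by
        ext x
        constructor
        · rintro ⟨w, hw, rfl⟩; exact hw
        · intro hx; exact ⟨e.symm x, by simpa using hx, by simp⟩
      rw [this]
      exact IsPrime.vanishingIdeal_zeroLocus _
    refine Order.krullDim_le_of_strictMono (fun P => ⟨{v : L | e v ∈ zeroLocus k (OrderDual.ofDual P).1.asIdeal}, ?_, ?_⟩) ?_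
    · apply s5_irr_sub
      rw [key, s5_irr_iff ht e, key2]
      exact (OrderDual.ofDual P).1.2
    · exact isClosed_induced_iff.2 ⟨_, (s5_isClosed_iff ht e _).2 ⟨(OrderDual.ofDual P).1.asIdeal, rfl⟩, rfl⟩
    · intro P Q h
      have h' : (OrderDual.ofDual Q).1.asIdeal < (OrderDual.ofDual P).1.asIdeal := h
      refine lt_of_le_not_ge ?_ ?_
      · intro v hv
        exact zeroLocus_anti_mono h'.le hv
      · intro hle
        apply h'.not_ge
        rw [← key2 (OrderDual.ofDual P), ← key2 (OrderDual.ofDual Q), ← key (OrderDual.ofDual P), ← key (OrderDual.ofDual Q)]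
        exact vanishingIdeal_anti_mono (Set.image_mono (Set.image_mono hle))

end Topo

section Elim
universe u
variable {k : Type u} [Field k] {M : Type*} [AddCommGroup M] [Module k M]
  {σ : Type*} [Fintype σ] [DecidableEq σ]

lemma s5_mem_anti (N : ℕ) (m : σ →₀ ℕ) :
    m ∈ (Finset.univ : Finset σ).finsuppAntidiag N ↔ m.degree = N := by
  rw [Finset.mem_finsuppAntidiag, Finsupp.degree_eq_sum]
  simp

lemma s5_closed_of_sep (s : Set M)
    (h : ∀ F ∉ s, ∃ D : MvPolynomial (M →ₗ[k] k) k, polyEval k M D F ≠ 0 ∧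
      ∀ G ∈ s, polyEval k M D G = 0) : @IsClosed M (zariskiTopology k M) s := by
  have h1 : @IsClosed M (zariskiTopology k M) s ↔ s ∈ zariskiCloseds k M := by
    rw [← @isOpen_compl_iff]
    change sᶜᶜ ∈ zariskiCloseds k M ↔ _
    rw [compl_compl]
  rw [h1]
  refine ⟨{D | ∀ G ∈ s, polyEval k M D G = 0}, ?_⟩
  ext F
  constructor
  · intro hF D hD
    exact hD F hF
  · intro hF
    by_contra hc
    obtain ⟨D, h1, h2⟩ := h F hc
    exact h1 (hF D h2)

lemma s5_elim [IsAlgClosed k] {J : Type*} (G : J → M →ₗ[k] MvPolynomial σ k) (deg : J → ℕ)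
    (hG : ∀ j F, (G j F).IsHomogeneous (deg j)) :
    @IsClosed M (zariskiTopology k M)
      {F | ∃ p : σ → k, p ≠ 0 ∧ ∀ j, eval p (G j F) = 0} := by
  apply s5_closed_of_sep
  intro F₀ hF₀
  let _ : GradedAlgebra (homogeneousSubmodule σ k) := MvPolynomial.gradedAlgebra
  let I : M → Ideal (MvPolynomial σ k) := fun F => Ideal.span (Set.range fun j => G j F)
  have hI : ∀ F, (I F).IsHomogeneous (homogeneousSubmodule σ k) := by
    intro F
    apply Ideal.homogeneous_span
    rintro _ ⟨j, rfl⟩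
    exact ⟨deg j, hG j F⟩
  have hrad : idealOfVars σ k ≤ (I F₀).radical := by
    rw [← vanishingIdeal_zeroLocus_eq_radical (K := k), Ideal.span_le]
    rintro _ ⟨s, rfl⟩
    intro p hp
    by_cases h0 : p = 0
    · simp [h0]
    · exfalso
      apply hF₀
      refine ⟨p, h0, fun j => ?_⟩
      have := hp (G j F₀) (Ideal.subset_span ⟨j, rfl⟩)
      simpa [aeval_eq_eval] using this
  obtain ⟨N, hN⟩ := Ideal.exists_pow_le_of_le_radical_of_fg hrad (idealOfVars_fg σ k)
  have hH : ∀ q ∈ I F₀, ∃ H : M →ₗ[k] MvPolynomial σ k, H F₀ = q ∧ ∀ F, H F ∈ I F := by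
    intro q hq
    induction hq using Submodule.span_induction with
    | mem x hx =>
      obtain ⟨j, rfl⟩ := hx
      exact ⟨G j, rfl, fun F => Ideal.subset_span ⟨j, rfl⟩⟩
    | zero => exact ⟨0, rfl, fun F => by simp⟩
    | add x y _ _ hx hy =>
      obtain ⟨H1, h1, h1'⟩ := hx
      obtain ⟨H2, h2, h2'⟩ := hy
      exact ⟨H1 + H2, by simp [h1, h2], fun F => (I F).add_mem (h1' F) (h2' F)⟩
    | smul a x _ hx =>
      obtain ⟨H1, h1, h1'⟩ := hx
      exact ⟨(LinearMap.mulLeft k a).comp H1, by simp [h1], fun F => (I F).mul_mem_left _ (h1' F)⟩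
  let S := (Finset.univ : Finset σ).finsuppAntidiag N
  have hmon : ∀ m : S, monomial (m : σ →₀ ℕ) (1 : k) ∈ I F₀ := by
    intro m
    apply hN
    rw [pow_idealOfVars_eq_span]
    apply Ideal.subset_span
    exact ⟨m, (s5_mem_anti N _).1 m.2, rfl⟩
  choose H hH1 hH2 using fun m : S => hH _ (hmon m)
  let A : S → S → (M →ₗ[k] k) := fun m m' => (lcoeff k (m' : σ →₀ ℕ)).comp (H m)
  have hev : ∀ F, polyEval k M (Matrix.det (Matrix.of fun m m' => (X (A m m') : MvPolynomial (M →ₗ[k] k) k))) F =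
      Matrix.det (Matrix.of fun m m' : S => coeff (m' : σ →₀ ℕ) (H m F)) := by
    intro F
    rw [polyEval, RingHom.map_det]
    congr 1
    ext m m'
    simp [A, lcoeff]
  refine ⟨Matrix.det (Matrix.of fun m m' => (X (A m m'))), ?_, ?_⟩
  · rw [hev]
    have : (Matrix.of fun m m' : S => coeff (m' : σ →₀ ℕ) (H m F₀)) = 1 := by
      ext m m'
      rw [Matrix.of_apply, hH1, coeff_monomial, Matrix.one_apply]
      by_cases h : m = m'
      · simp [h]
      · rw [if_neg h, if_neg (fun h' => h (Subtype.ext h'))]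
    rw [this, Matrix.det_one]
    exact one_ne_zero
  · rintro F ⟨p, hp, hpF⟩
    rw [hev]
    by_contra hdet
    have hIF : ∀ q ∈ I F, eval p q = 0 := by
      intro q hq
      have : I F ≤ RingHom.ker (eval p) := by
        rw [Ideal.span_le]
        rintro _ ⟨j, rfl⟩
        exact hpF j
      exact this hq
    have hvec : Matrix.mulVec (Matrix.of fun m m' : S => coeff (m' : σ →₀ ℕ) (H m F))
        (fun m' => eval p (monomial (m' : σ →₀ ℕ) (1 : k))) = 0 := by
      ext m
      have h1 := hIF _ (homogeneousComponent_mem_of_mem (hI F) (hH2 m F) N)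
      rw [homogeneousComponent_apply] at h1
      simp only [Matrix.mulVec, dotProduct, Matrix.of_apply, Pi.zero_apply]
      rw [← h1, map_sum, Finset.sum_coe_sort S (fun m' => coeff m' (H m F) * eval p (monomial m' (1 : k)))]
      symm
      have h2 : ∀ m', eval p (monomial m' (coeff m' (H m F))) = coeff m' (H m F) * eval p (monomial m' (1 : k)) := by
        intro m'
        simp [eval_monomial]
      simp_rw [h2]
      apply Finset.sum_subset
      · intro m' hm'
        exact (s5_mem_anti N _).2 (Finset.mem_filter.1 hm').2
      · intro m' h3 h4
        have : coeff m' (H m F) = 0 := by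
          by_contra h5
          exact h4 (Finset.mem_filter.2 ⟨mem_support_iff.2 h5, (s5_mem_anti N _).1 h3⟩)
        rw [this, zero_mul]
    have hz := Matrix.eq_zero_of_mulVec_eq_zero hdet hvec
    apply hp
    ext s
    have hs := congrFun hz ⟨Finsupp.single s N, (s5_mem_anti N _).2 (by simp)⟩
    have : p s ^ N = 0 := by simpa [eval_monomial] using hs
    exact eq_zero_of_pow_eq_zero this

end Elim

section ClosedL
universe u
variable {k : Type u} [Field k] {r n : ℕ} {d : Fin n → ℕ}

/-- generic alternating matrix -/
def s5P (R : Type*) [CommRing R] {σ : Type*} [LinearOrder σ] (p : {x : σ × σ // x.1 < x.2} → R) (a b : σ) : R :=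
  if h : a < b then p ⟨(a, b), h⟩ else if h : b < a then - p ⟨(b, a), h⟩ else 0

lemma s5P_wedge {R : Type*} [CommRing R] {σ : Type*} [LinearOrder σ] (v w : σ → R) (a b : σ) :
    s5P R (fun x => v x.1.1 * w x.1.2 - w x.1.1 * v x.1.2) a b = v a * w b - w a * v b := by
  unfold s5P
  split_ifs with h1 h2
  · rfl
  · ring
  · have : a = b := le_antisymm (not_lt.1 h2) (not_lt.1 h1)
    subst this
    ring

lemma s5_closedL [IsAlgClosed k] : IsClosed {F : tupleSpace k r n d | vanishOnCommonLine k F} := by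
  let σ := Fin (r + 1)
  let σ' := {x : σ × σ // x.1 < x.2}
  let Lf : (σ → k) → σ → MvPolynomial σ' k := fun φ a => ∑ b, C (φ b) * s5P _ X a b
  have hLf : ∀ φ a, (Lf φ a).IsHomogeneous 1 := by
    intro φ a
    apply IsHomogeneous.sum
    intro b _
    have h0 : (s5P (MvPolynomial σ' k) X a b).IsHomogeneous 1 → (C (φ b) * s5P (MvPolynomial σ' k) X a b).IsHomogeneous 1 := by
      intro h
      have := (isHomogeneous_C σ' (φ b)).mul h
      rwa [zero_add] at this
    apply h0
    unfold s5P
    split_ifs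
    · exact isHomogeneous_X _ _
    · exact (isHomogeneous_X _ _).neg
    · exact isHomogeneous_zero _ _ _
  let G : Fin n × (σ → k) → tupleSpace k r n d →ₗ[k] MvPolynomial σ' k := fun j =>
    (aeval (Lf j.2)).toLinearMap.comp ((Submodule.subtype _).comp (LinearMap.proj j.1))
  have hGapp : ∀ j F, G j F = aeval (Lf j.2) (F j.1 : MvPolynomial σ k) := fun j F => rfl
  have hG : ∀ j F, (G j F).IsHomogeneous (d j.1) := by
    intro j F
    rw [hGapp]
    have := IsHomogeneous.aeval (F j.1).2 (Lf j.2) (n := 1) (hLf j.2)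
    simpa using this
  have hev : ∀ (p : σ' → k) j F, eval p (G j F) =
      eval (fun a => ∑ b, j.2 b * s5P k p a b) (F j.1 : MvPolynomial σ k) := by
    intro p j F
    rw [hGapp, ← aeval_eq_eval, ← aeval_eq_eval]
    have : ((aeval p).comp (aeval (Lf j.2)) : MvPolynomial σ k →ₐ[k] k) = aeval (fun a => ∑ b, j.2 b * s5P k p a b) := by
      ext a
      simp only [AlgHom.comp_apply, aeval_X, Lf, map_sum, map_mul, aeval_C, Algebra.algebraMap_self, RingHom.id_apply]
      refine Finset.sum_congr rfl fun b _ => ?_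
      congr 1
      unfold s5P
      split_ifs <;> simp
    exact congrArg (fun f : MvPolynomial σ k →ₐ[k] k => f (F j.1)) this
  have key := s5_elim G (fun j => d j.1) hG
  refine (congrArg (fun s => @IsClosed _ (zariskiTopology k (tupleSpace k r n d)) s) ?_).mpr key
  apply Set.ext
  intro F
  change vanishOnCommonLine k F ↔ ∃ p : σ' → k, p ≠ 0 ∧ ∀ j, eval p (G j F) = 0
  constructor
  · rintro ⟨v, w, hvw, hF⟩
    refine ⟨fun x => v x.1.1 * w x.1.2 - w x.1.1 * v x.1.2, ?_, ?_⟩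
    · intro h0
      have h1 : ∀ a b, v a * w b - w a * v b = 0 := by
        intro a b
        rw [← s5P_wedge v w a b, h0]
        unfold s5P
        split_ifs <;> simp
      rw [LinearIndependent.pair_iff] at hvw
      have h2 : ∀ b, w b = 0 := by
        intro b
        refine (hvw (w b) (- v b) ?_).1
        ext a
        have := h1 a b
        simp only [Pi.add_apply, Pi.smul_apply, smul_eq_mul, Pi.zero_apply]
        linear_combination this
      have h3 := hvw 0 1 (by ext a; simp [h2 a])
      exact one_ne_zero h3.2
    · intro j
      rw [hev]
      refine Eq.trans ?_ (hF j.1 (∑ b, j.2 b * w b) (- ∑ b, j.2 b * v b))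
      refine congrArg (fun f => eval f (F j.1 : MvPolynomial σ k)) ?_
      funext a
      have h1 : ∀ b, s5P k (fun x : σ' => v x.1.1 * w x.1.2 - w x.1.1 * v x.1.2) a b = v a * w b - w a * v b :=
        fun b => s5P_wedge v w a b
      simp only [h1]
      rw [neg_mul, ← sub_eq_add_neg, Finset.sum_mul, Finset.sum_mul, ← Finset.sum_sub_distrib]
      refine Finset.sum_congr rfl fun b _ => ?_
      ring
  · rintro ⟨p, hp, hF⟩
    obtain ⟨⟨⟨a₀, b₀⟩, hab⟩, hp0⟩ := Function.ne_iff.1 hp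
    have hab' : a₀ < b₀ := hab
    have e1 : s5P k p a₀ b₀ ≠ 0 := by
      unfold s5P
      rw [dif_pos hab']
      exact hp0
    have e2 : s5P k p b₀ a₀ ≠ 0 := by
      unfold s5P
      rw [dif_neg hab'.not_gt, dif_pos hab']
      exact neg_ne_zero.2 hp0
    have e3 : ∀ a, s5P k p a a = 0 := by
      intro a
      simp [s5P]
    refine ⟨fun a => s5P k p a b₀, fun a => s5P k p a a₀, ?_, ?_⟩
    · rw [LinearIndependent.pair_iff]
      intro s t h
      have h1 := congrFun h a₀
      have h2 := congrFun h b₀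
      simp only [Pi.add_apply, Pi.smul_apply, smul_eq_mul, Pi.zero_apply, e3, mul_zero, add_zero, zero_add] at h1 h2
      exact ⟨(mul_eq_zero.1 h1).resolve_right e1, (mul_eq_zero.1 h2).resolve_right e2⟩
    · intro i s t
      have := hF (i, Pi.single b₀ s + Pi.single a₀ t)
      rw [hev] at this
      refine Eq.trans ?_ this
      refine congrArg (fun f => eval f (F i : MvPolynomial σ k)) ?_
      funext a
      simp [add_mul, Finset.sum_add_distrib, Pi.single_apply]

end ClosedL

section Param
universe u

/-- the substitution sending the line spanned by `(1,0,b)`, `(0,1,c)` to the standard one -/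
def s5g {R : Type*} [CommRing R] {q : ℕ} (b c : Fin q → R) : Fin (q + 1 + 1) → MvPolynomial (Fin (q + 1 + 1)) R :=
  Fin.cons (X 0) (Fin.cons (X 1) (fun j => X j.succ.succ - C (b j) * X 0 - C (c j) * X 1))

lemma s5g_zero {R : Type*} [CommRing R] {q : ℕ} (b c : Fin q → R) : s5g b c 0 = X 0 := rfl
lemma s5g_one {R : Type*} [CommRing R] {q : ℕ} (b c : Fin q → R) : s5g b c 1 = X 1 := rfl
lemma s5g_succ {R : Type*} [CommRing R] {q : ℕ} (b c : Fin q → R) (j : Fin q) :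
    s5g b c j.succ.succ = X j.succ.succ - C (b j) * X 0 - C (c j) * X 1 := rfl

lemma s5_cases {q : ℕ} {P : Fin (q + 1 + 1) → Prop} (h0 : P 0) (h1 : P 1) (h : ∀ j : Fin q, P j.succ.succ) :
    ∀ a, P a := by
  intro a
  refine Fin.cases h0 (fun a' => ?_) a
  refine Fin.cases h1 (fun a'' => h a'') a'

lemma s5g_map {R S : Type*} [CommRing R] [CommRing S] (f : R →+* S) {q : ℕ} (b c : Fin q → R) (a) :
    MvPolynomial.map f (s5g b c a) = s5g (f ∘ b) (f ∘ c) a := by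
  revert a
  refine s5_cases ?_ ?_ fun j => ?_
  · simp [s5g_zero]
  · simp [s5g_one]
  · simp [s5g_succ]

lemma s5g_hom {R : Type*} [CommRing R] {q : ℕ} (b c : Fin q → R) (a) : (s5g b c a).IsHomogeneous 1 := by
  revert a
  refine s5_cases (isHomogeneous_X _ _) (isHomogeneous_X _ _) fun j => ?_
  rw [s5g_succ]
  exact ((isHomogeneous_X _ _).sub (isHomogeneous_C_mul_X _ _)).sub (isHomogeneous_C_mul_X _ _)

/-- the monomial `m` in the substituted variables -/
def s5mon {R : Type*} [CommRing R] {q : ℕ} (b c : Fin q → R) (m : Fin (q + 1 + 1) →₀ ℕ) :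
    MvPolynomial (Fin (q + 1 + 1)) R := ∏ a, s5g b c a ^ m a

/-- generic form -/
def s5form {R : Type*} [CommRing R] {q : ℕ} (b c : Fin q → R) (S : Finset (Fin (q + 1 + 1) →₀ ℕ))
    (y : (Fin (q + 1 + 1) →₀ ℕ) → R) :
    MvPolynomial (Fin (q + 1 + 1)) R := ∑ m ∈ S, C (y m) * s5mon b c m

lemma s5form_map {R S : Type*} [CommRing R] [CommRing S] (f : R →+* S) {q : ℕ} (b c : Fin q → R) (T y) :
    MvPolynomial.map f (s5form b c T y) = s5form (f ∘ b) (f ∘ c) T (f ∘ y) := by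
  simp [s5form, s5mon, map_sum, map_prod, s5g_map]

/-- all monomials of degree `N` -/
abbrev s5A (q N : ℕ) : Finset (Fin (q + 1 + 1) →₀ ℕ) := Finset.univ.finsuppAntidiag N

/-- the monomials of degree `N` not only in the first two variables -/
abbrev s5O (q N : ℕ) : Finset (Fin (q + 1 + 1) →₀ ℕ) :=
  (s5A q N).filter (fun m => ∃ j : Fin q, m j.succ.succ ≠ 0)

lemma s5form_hom {R : Type*} [CommRing R] {q : ℕ} (b c : Fin q → R) (N : ℕ) (T) (hT : T ⊆ s5A q N) (y) :
    (s5form b c T y).IsHomogeneous N := by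
  apply IsHomogeneous.sum
  intro m hm
  have h1 := (s5_mem_anti _ _).1 (hT hm)
  have h2 : (s5mon b c m).IsHomogeneous N := by
    rw [← h1, Finsupp.degree_eq_sum]
    apply IsHomogeneous.prod
    intro a _
    have := (s5g_hom b c a).pow (m a)
    simpa using this
  have := (isHomogeneous_C (Fin (q+1+1)) (y m)).mul h2
  rwa [zero_add] at this

/-- spanning vectors of a standard line -/
def s5v {R : Type*} [CommRing R] {q : ℕ} (x y : R) (b : Fin q → R) : Fin (q + 1 + 1) → R :=
  Fin.cons x (Fin.cons y b)

lemma s5form_vanish {R : Type*} [CommRing R] {q : ℕ} (b c : Fin q → R) (N : ℕ) (y) (s t : R) :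
    eval (fun a => s * s5v 1 0 b a + t * s5v 0 1 c a) (s5form b c (s5O q N) y) = 0 := by
  rw [s5form, map_sum]
  apply Finset.sum_eq_zero
  intro m hm
  obtain ⟨j, hj⟩ := (Finset.mem_filter.1 hm).2
  rw [map_mul, s5mon, map_prod, Finset.prod_eq_zero (Finset.mem_univ j.succ.succ), mul_zero]
  rw [map_pow, s5g_succ]
  have : eval (fun a => s * s5v 1 0 b a + t * s5v 0 1 c a) (X j.succ.succ - C (b j) * X 0 - C (c j) * X 1) = 0 := by
    simp [s5v]
    ring
  rw [this, zero_pow hj]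

lemma s5_li {k : Type u} [Field k] {q : ℕ} (b c : Fin q → k) : LinearIndependent k ![s5v 1 0 b, s5v 0 1 c] := by
  rw [LinearIndependent.pair_iff]
  intro s t h
  have h0 := congrFun h 0
  have h1 := congrFun h 1
  have e1 : (s5v 1 0 b : Fin (q+1+1) → k) 0 = 1 := rfl
  have e2 : (s5v 1 0 b : Fin (q+1+1) → k) 1 = 0 := rfl
  have e3 : (s5v 0 1 c : Fin (q+1+1) → k) 0 = 0 := rfl
  have e4 : (s5v 0 1 c : Fin (q+1+1) → k) 1 = 1 := rfl
  simpa [e1, e2, e3, e4] using And.intro h0 h1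

lemma s5g_aeval {R : Type*} [CommRing R] {q : ℕ} (b c : Fin q → R) (F : MvPolynomial (Fin (q+1+1)) R) :
    aeval (s5g b c) (aeval (s5g (-b) (-c)) F) = F := by
  have : ((aeval (s5g b c)).comp (aeval (s5g (-b) (-c))) : MvPolynomial (Fin (q+1+1)) R →ₐ[R] _) = AlgHom.id _ _ := by
    apply algHom_ext
    refine s5_cases ?_ ?_ fun j => ?_
    · simp [s5g_zero]
    · simp [s5g_one]
    · simp only [AlgHom.comp_apply, aeval_X, s5g_succ, map_sub, map_mul, aeval_C, s5g_zero, s5g_one, AlgHom.id_apply, algebraMap_eq, Pi.neg_apply, map_neg]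
      ring
  exact congrArg (fun f : MvPolynomial (Fin (q+1+1)) R →ₐ[R] _ => f F) this

/-- restriction to the standard line -/
def s5rho (R : Type*) [CommRing R] (q : ℕ) : Fin (q+1+1) → MvPolynomial (Fin (q+1+1)) R :=
  s5v (X 0) (X 1) 0

lemma s5_rho_coeff {R : Type*} [CommRing R] {q : ℕ} (F : MvPolynomial (Fin (q+1+1)) R) (m : Fin (q+1+1) →₀ ℕ)
    (hm : ¬ ∃ j : Fin q, m j.succ.succ ≠ 0) : coeff m (aeval (s5rho R q) F) = coeff m F := by
  induction F using MvPolynomial.induction_on' with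
  | add p q hp hq => rw [map_add, coeff_add, coeff_add, hp, hq]
  | monomial n a =>
    by_cases hn : ∃ j : Fin q, n j.succ.succ ≠ 0
    · obtain ⟨j, hj⟩ := hn
      rw [aeval_monomial, Finsupp.prod_fintype _ _ (by simp), Finset.prod_eq_zero (Finset.mem_univ j.succ.succ), mul_zero, coeff_zero, coeff_monomial, if_neg]
      · rintro rfl; exact hm ⟨j, hj⟩
      · have : s5rho R q j.succ.succ = 0 := rfl
        rw [this, zero_pow hj]
    · congr 1
      have h1 : monomial n a = C a * ∏ i, X i ^ n i := by
        rw [monomial_eq, Finsupp.prod_fintype _ _ (by simp)]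
      rw [aeval_monomial, Finsupp.prod_fintype _ _ (by simp), h1, algebraMap_eq]
      congr 1
      refine Finset.prod_congr rfl fun i _ => ?_
      revert i
      simp only [Finset.mem_univ, forall_true_left]
      push Not at hn
      refine s5_cases rfl rfl fun j => ?_
      rw [hn j]
      simp

lemma s5_param {k : Type u} [Field k] [Infinite k] {q : ℕ} (b c : Fin q → k) (N : ℕ)
    (F : MvPolynomial (Fin (q+1+1)) k) (hF : F.IsHomogeneous N)
    (h : ∀ s t : k, eval (fun a => s * s5v 1 0 b a + t * s5v 0 1 c a) F = 0) :
    ∃ y, F = s5form b c (s5O q N) y := by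
  let F' := aeval (s5g (-b) (-c)) F
  have hF' : F'.IsHomogeneous N := by
    have := IsHomogeneous.aeval hF (s5g (-b) (-c)) (n := 1) (s5g_hom _ _)
    rwa [one_mul] at this
  have h0 : aeval (s5rho k q) F' = 0 := by
    apply MvPolynomial.funext
    intro x
    rw [map_zero, ← h (x 0) (x 1)]
    simp only [F', ← aeval_eq_eval]
    have : (((aeval x).comp (aeval (s5rho k q))).comp (aeval (s5g (-b) (-c))) : MvPolynomial (Fin (q+1+1)) k →ₐ[k] k) =
      aeval (fun a => x 0 * s5v 1 0 b a + x 1 * s5v 0 1 c a) := by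
      apply algHom_ext
      refine s5_cases ?_ ?_ fun j => ?_
      · simp [s5g_zero, s5rho, s5v]
      · have h3 : (Fin.cons (1 : k) (Fin.cons (0:k) b) : Fin (q+1+1) → k) 1 = 0 := rfl
        have h4 : (Fin.cons (0 : k) (Fin.cons (1:k) c) : Fin (q+1+1) → k) 1 = 1 := rfl
        have h5 : s5rho k q 1 = X 1 := rfl
        simp [s5g_one, s5v, h3, h4, h5]
      · have h5 : s5rho k q 1 = X 1 := rfl
        have h6 : s5rho k q 0 = X 0 := rfl
        have h7 : s5rho k q j.succ.succ = 0 := rfl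
        simp [s5g_succ, s5v, h5, h6, h7]
        ring
    exact congrArg (fun f : MvPolynomial (Fin (q+1+1)) k →ₐ[k] k => f F) this
  refine ⟨fun m => coeff m F', ?_⟩
  conv_lhs => rw [← s5g_aeval b c F]
  change aeval (s5g b c) F' = _
  conv_lhs => rw [F'.as_sum]
  rw [map_sum, s5form]
  have h1 : ∀ m, aeval (s5g b c) (monomial m (coeff m F')) = C (coeff m F') * s5mon b c m := by
    intro m
    rw [aeval_monomial, Finsupp.prod_fintype _ _ (by simp)]
    rfl
  simp_rw [h1]
  apply Finset.sum_subset
  · intro m hm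
    rw [mem_support_iff] at hm
    refine Finset.mem_filter.2 ⟨(s5_mem_anti _ _).2 ?_, ?_⟩
    · by_contra hne
      exact hm (hF'.coeff_eq_zero hne)
    · by_contra hn
      apply hm
      rw [← s5_rho_coeff F' m hn, h0, coeff_zero]
  · intro m _ hm
    rw [notMem_support_iff.1 hm]
    simp

end Param

section Gen
universe u

lemma s5_dim_ker {k : Type u} [Field k] {ν τ : Type} [Fintype ν] [Fintype τ] (Ψ : ν → MvPolynomial τ k)
    (h : τ → MvPolynomial ν k) (hh : ∀ j, aeval Ψ (h j) - X j ∈ (idealOfVars τ k) ^ 2) :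
    ringKrullDim (MvPolynomial ν k ⧸ RingHom.ker (aeval (R := k) Ψ)) = (Fintype.card τ : ℕ) := by
  have hP : (RingHom.ker (aeval (R := k) Ψ)).IsPrime := RingHom.ker_isPrime _
  have : IsDomain (MvPolynomial ν k ⧸ RingHom.ker (aeval (R := k) Ψ)) := Ideal.Quotient.isDomain _
  let f : (MvPolynomial ν k ⧸ RingHom.ker (aeval (R := k) Ψ)) →ₐ[k] MvPolynomial τ k := Ideal.kerLiftAlg (aeval (R := k) Ψ)
  have hf : Function.Injective f := Ideal.kerLiftAlg_injective _
  let g : MvPolynomial τ k →ₐ[k] (MvPolynomial ν k ⧸ RingHom.ker (aeval (R := k) Ψ)) :=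
    aeval fun j => Ideal.Quotient.mkₐ k _ (h j)
  have hg : Function.Injective g := by
    have h1 : f.comp g = aeval (fun j => aeval Ψ (h j)) := by
      apply algHom_ext
      intro j
      simp only [AlgHom.comp_apply, g, aeval_X]
      rfl
    have h2 := s5_inj _ hh
    rw [← h1] at h2
    exact Function.Injective.of_comp (f := f) h2
  exact s5_dim_alg f hf g hg

/-- coordinates -/
abbrev s5ν (q : ℕ) {n : ℕ} (d : Fin n → ℕ) : Type := Σ i : Fin n, ↥(s5A q (d i))

/-- parameters -/
abbrev s5τ (q : ℕ) {n : ℕ} (d : Fin n → ℕ) : Type := (Fin q ⊕ Fin q) ⊕ (Σ i : Fin n, ↥(s5O q (d i)))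

/-- coefficient coordinates on the space of tuples -/
def s5e (k : Type u) [Field k] (q : ℕ) {n : ℕ} (d : Fin n → ℕ) :
    tupleSpace k (q + 1) n d ≃ₗ[k] (s5ν q d → k) where
  toFun F x := coeff (x.2 : Fin (q+1+1) →₀ ℕ) (F x.1 : MvPolynomial (Fin (q+1+1)) k)
  map_add' F G := by ext x; simp
  map_smul' a F := by ext x; simp
  invFun c i := ⟨∑ m : ↥(s5A q (d i)), monomial (m : Fin (q+1+1) →₀ ℕ) (c ⟨i, m⟩), by
    rw [mem_homogeneousSubmodule]
    apply IsHomogeneous.sum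
    intro m _
    exact isHomogeneous_monomial _ ((s5_mem_anti _ _).1 m.2)⟩
  left_inv F := by
    funext i
    apply Subtype.ext
    have h1 : (F i : MvPolynomial (Fin (q+1+1)) k).IsHomogeneous (d i) := (F i).2
    apply MvPolynomial.ext
    intro m
    change coeff m (∑ m' : ↥(s5A q (d i)), monomial (m' : Fin (q+1+1) →₀ ℕ) (coeff (m' : Fin (q+1+1) →₀ ℕ) (F i : MvPolynomial (Fin (q+1+1)) k))) = _
    rw [Finset.sum_coe_sort (s5A q (d i)) (fun m' => monomial m' (coeff m' (F i : MvPolynomial (Fin (q+1+1)) k))), coeff_sum]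
    simp only [coeff_monomial]
    rw [Finset.sum_ite_eq']
    split_ifs with h
    · rfl
    · symm
      apply h1.coeff_eq_zero
      intro h2
      exact h ((s5_mem_anti _ _).2 h2)
  right_inv c := by
    funext x
    obtain ⟨i, m⟩ := x
    change coeff (m : Fin (q+1+1) →₀ ℕ) (∑ m' : ↥(s5A q (d i)), monomial (m' : Fin (q+1+1) →₀ ℕ) (c ⟨i, m'⟩)) = _
    rw [coeff_sum]
    simp only [coeff_monomial]
    rw [Finset.sum_eq_single m]
    · simp
    · intro m' _ hne
      rw [if_neg]
      exact fun h => hne (Subtype.ext h)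
    · simp

lemma s5e_apply (k : Type u) [Field k] (q : ℕ) {n : ℕ} (d : Fin n → ℕ) (F : tupleSpace k (q + 1) n d) (x) :
    s5e k q d F x = coeff (x.2 : Fin (q+1+1) →₀ ℕ) (F x.1 : MvPolynomial (Fin (q+1+1)) k) := rfl

variable {q n : ℕ} (d : Fin n → ℕ)

/-- special monomial -/
abbrev s5m (q N : ℕ) (j : Fin q) : Fin (q+1+1) →₀ ℕ := Finsupp.single 0 (N - 1) + Finsupp.single j.succ.succ 1

open Classical in
/-- base point -/
def s5eps (R : Type*) [CommRing R] (i : Fin n) (m : Fin (q+1+1) →₀ ℕ) : R :=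
  if ∃ j : Fin q, (j : ℕ) = i ∧ m = s5m q (d i) j then 1 else 0

lemma s5eps_pos (R : Type*) [CommRing R] (i : Fin n) (j : Fin q) (hj : (j : ℕ) = i) (m : Fin (q+1+1) →₀ ℕ) :
    s5eps d R i m = if m = s5m q (d i) j then 1 else 0 := by
  unfold s5eps
  congr 1
  apply propext
  constructor
  · rintro ⟨j', h1, h2⟩
    have : j' = j := Fin.ext (h1.trans hj.symm)
    rw [← this]; exact h2
  · intro h; exact ⟨j, hj, h⟩

lemma s5eps_neg (R : Type*) [CommRing R] (i : Fin n) (h : ¬ ∃ j : Fin q, (j : ℕ) = i) (m : Fin (q+1+1) →₀ ℕ) :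
    s5eps d R i m = 0 := by
  unfold s5eps
  rw [if_neg]
  rintro ⟨j, h1, _⟩
  exact h ⟨j, h1⟩

lemma s5eps_map {R S : Type*} [CommRing R] [CommRing S] (f : R →+* S) (i : Fin n) (m : Fin (q+1+1) →₀ ℕ) :
    f (s5eps d R i m) = s5eps d S i m := by
  unfold s5eps
  split_ifs <;> simp

lemma s5m_mem (N : ℕ) (hN : 1 ≤ N) (j : Fin q) : s5m q N j ∈ s5O q N := by
  refine Finset.mem_filter.2 ⟨(s5_mem_anti _ _).2 ?_, j, ?_⟩
  · rw [map_add, Finsupp.degree_single, Finsupp.degree_single]; omega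
  · simp

lemma s5form_add {R : Type*} [CommRing R] (b c : Fin q → R) (T) (y z : (Fin (q + 1 + 1) →₀ ℕ) → R) :
    s5form b c T (y + z) = s5form b c T y + s5form b c T z := by
  simp [s5form, add_mul, Finset.sum_add_distrib]

lemma s5_form_eps {R : Type*} [CommRing R] (b c : Fin q → R) (i : Fin n) (hd : 1 ≤ d i) (j : Fin q) (hj : (j : ℕ) = i) :
    s5form b c (s5O q (d i)) (s5eps d R i) = monomial (s5m q (d i) j) 1
      - monomial (Finsupp.single 0 (d i)) (b j) - monomial (Finsupp.single 0 (d i - 1) + Finsupp.single 1 1) (c j) := by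
  unfold s5form
  rw [Finset.sum_eq_single (s5m q (d i) j)]
  · rw [s5eps_pos d R i j hj, if_pos rfl, C_1, one_mul]
    have h1 : s5mon b c (s5m q (d i) j) = X 0 ^ (d i - 1) * (X j.succ.succ - C (b j) * X 0 - C (c j) * X 1) := by
      rw [← s5g_succ, ← s5g_zero b c]
      unfold s5mon
      simp only [s5m, Finsupp.add_apply, pow_add, Finset.prod_mul_distrib, Finsupp.single_apply, pow_ite, pow_zero, pow_one, Finset.prod_ite_eq, Finset.mem_univ, if_true]
    rw [h1]
    have h2 : (monomial (s5m q (d i) j) (1:R)) = X 0 ^ (d i - 1) * X j.succ.succ := by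
      rw [X_pow_eq_monomial, X, monomial_mul, one_mul]
    have h3 : (monomial (Finsupp.single 0 (d i)) (b j) : MvPolynomial (Fin (q+1+1)) R) = C (b j) * X 0 ^ (d i - 1) * X 0 := by
      rw [mul_assoc, ← pow_succ, Nat.sub_add_cancel hd, X_pow_eq_monomial, C_mul_monomial, mul_one]
    have h4 : (monomial (Finsupp.single 0 (d i - 1) + Finsupp.single 1 1) (c j) : MvPolynomial (Fin (q+1+1)) R) = C (c j) * X 0 ^ (d i - 1) * X 1 := by
      rw [X_pow_eq_monomial, X, mul_assoc, monomial_mul, C_mul_monomial, mul_one, mul_one]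
    rw [h2, h3, h4]
    ring
  · intro m _ hm
    rw [s5eps_pos d R i j hj, if_neg hm]
    simp
  · intro h
    exact absurd (s5m_mem _ hd j) h

lemma s5_form_eps_neg {R : Type*} [CommRing R] (b c : Fin q → R) (i : Fin n) (h : ¬ ∃ j : Fin q, (j : ℕ) = i) :
    s5form b c (s5O q (d i)) (s5eps d R i) = 0 := by
  unfold s5form
  apply Finset.sum_eq_zero
  intro m _
  rw [s5eps_neg d R i h]
  simp

lemma s5_form_eps_coeff {R : Type*} [CommRing R] (b c : Fin q → R) (i : Fin n) (hd : 1 ≤ d i)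
    (m) (hm : m ∈ s5O q (d i)) :
    coeff m (s5form b c (s5O q (d i)) (s5eps d R i)) = s5eps d R i m := by
  by_cases h : ∃ j : Fin q, (j : ℕ) = i
  · obtain ⟨j, hj⟩ := h
    obtain ⟨l, hl⟩ := (Finset.mem_filter.1 hm).2
    rw [s5_form_eps d b c i hd j hj, s5eps_pos d R i j hj, coeff_sub, coeff_sub, coeff_monomial, coeff_monomial, coeff_monomial]
    rw [if_neg (c := Finsupp.single 0 (d i) = m), if_neg (c := _ + Finsupp.single 1 1 = m)]
    · simp [eq_comm]
    · rintro rfl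
      apply hl
      rw [Finsupp.add_apply, Finsupp.single_eq_of_ne, Finsupp.single_eq_of_ne]
      · rfl
      · intro h; simp [Fin.ext_iff] at h
      · intro h; simp [Fin.ext_iff] at h
    · rintro rfl
      apply hl
      rw [Finsupp.single_eq_of_ne]
      intro h; simp [Fin.ext_iff] at h
  · rw [s5_form_eps_neg d b c i h, s5eps_neg d R i h, coeff_zero]

lemma s5_form_eps_coeff0 {R : Type*} [CommRing R] (b c : Fin q → R) (i : Fin n) (hd : 1 ≤ d i) (j : Fin q) (hj : (j : ℕ) = i) :
    coeff (Finsupp.single 0 (d i)) (s5form b c (s5O q (d i)) (s5eps d R i)) = - b j := by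
  rw [s5_form_eps d b c i hd j hj, coeff_sub, coeff_sub, coeff_monomial, coeff_monomial, coeff_monomial]
  rw [if_neg, if_pos rfl, if_neg]
  · ring
  · intro h
    have := DFunLike.congr_fun h 1
    simp at this
  · intro h
    have := DFunLike.congr_fun h j.succ.succ
    simp [Fin.ext_iff] at this

lemma s5_form_eps_coeff1 {R : Type*} [CommRing R] (b c : Fin q → R) (i : Fin n) (hd : 1 ≤ d i) (j : Fin q) (hj : (j : ℕ) = i) :
    coeff (Finsupp.single 0 (d i - 1) + Finsupp.single 1 1) (s5form b c (s5O q (d i)) (s5eps d R i)) = - c j := by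
  rw [s5_form_eps d b c i hd j hj, coeff_sub, coeff_sub, coeff_monomial, coeff_monomial, coeff_monomial]
  rw [if_neg, if_neg, if_pos rfl]
  · ring
  · intro h
    have := DFunLike.congr_fun h 1
    simp at this
  · intro h
    have := DFunLike.congr_fun h j.succ.succ
    simp [Fin.ext_iff] at this

lemma s5_form_mod {R : Type*} [CommRing R] (I : Ideal R) (b c : Fin q → R) (hb : ∀ j, b j ∈ I) (hc : ∀ j, c j ∈ I)
    (T : Finset (Fin (q + 1 + 1) →₀ ℕ)) (y) (hy : ∀ m, y m ∈ I) (m) :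
    coeff m (s5form b c T y) - (if m ∈ T then y m else 0) ∈ I ^ 2 := by
  have h1 : ∀ m, s5mon b c m - monomial m 1 ∈ I.map (C : R →+* MvPolynomial (Fin (q+1+1)) R) := by
    intro m
    rw [← Ideal.Quotient.eq]
    have hm : (monomial m (1 : R)) = ∏ a, X a ^ m a := by
      rw [monomial_eq, Finsupp.prod_fintype _ _ (by simp), C_1, one_mul]
    rw [hm, s5mon, map_prod, map_prod]
    refine Finset.prod_congr rfl fun a _ => ?_
    rw [map_pow, map_pow]
    congr 1
    rw [Ideal.Quotient.eq]
    revert a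
    simp only [Finset.mem_univ, forall_true_left]
    refine s5_cases ?_ ?_ fun j => ?_
    · simp [s5g_zero]
    · simp [s5g_one]
    · rw [s5g_succ]
      have e1 := Ideal.mul_mem_right (X 0 : MvPolynomial (Fin (q+1+1)) R) _ (Ideal.mem_map_of_mem (C : R →+* MvPolynomial (Fin (q+1+1)) R) (hb j))
      have e2 := Ideal.mul_mem_right (X 1 : MvPolynomial (Fin (q+1+1)) R) _ (Ideal.mem_map_of_mem (C : R →+* MvPolynomial (Fin (q+1+1)) R) (hc j))
      have e3 := neg_mem (add_mem e1 e2)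
      convert e3 using 1
      ring
  have h2 : s5form b c T y - ∑ m ∈ T, monomial m (y m) ∈ (I ^ 2).map (C : R →+* MvPolynomial (Fin (q+1+1)) R) := by
    rw [s5form, ← Finset.sum_sub_distrib]
    apply sum_mem
    intro m _
    have e : C (y m) * s5mon b c m - monomial m (y m) = C (y m) * (s5mon b c m - monomial m 1) := by
      rw [mul_sub, C_mul_monomial, mul_one]
    rw [e, Ideal.map_pow, pow_two]
    exact Ideal.mul_mem_mul (Ideal.mem_map_of_mem _ (hy m)) (h1 m)
  have h3 := mem_map_C_iff.1 h2 m
  rw [coeff_sub, coeff_sum] at h3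
  simpa [coeff_monomial] using h3

end Gen

section Dense
universe u

/-- linear substitution -/
def s5sub {σ : Type*} [Fintype σ] {R : Type*} [CommRing R] (A : Matrix σ σ R) (F : MvPolynomial σ R) : MvPolynomial σ R :=
  aeval (fun a => ∑ b, C (A a b) * X b) F

lemma s5sub_map {σ : Type*} [Fintype σ] {R S : Type*} [CommRing R] [CommRing S] (f : R →+* S) (A : Matrix σ σ R) (F : MvPolynomial σ R) :
    MvPolynomial.map f (s5sub A F) = s5sub (A.map f) (MvPolynomial.map f F) := by
  unfold s5sub
  induction F using MvPolynomial.induction_on with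
  | C a => simp
  | add p q hp hq => rw [map_add, map_add, hp, hq, map_add, map_add]
  | mul_X p i hp => rw [map_mul, map_mul, hp, map_mul, map_mul, aeval_X, map_X, aeval_X]; simp

lemma s5sub_eval {σ : Type*} [Fintype σ] {R : Type*} [CommRing R] (A : Matrix σ σ R) (F : MvPolynomial σ R) (x : σ → R) :
    eval x (s5sub A F) = eval (A.mulVec x) F := by
  unfold s5sub
  induction F using MvPolynomial.induction_on with
  | C a => simp
  | add p q hp hq => rw [map_add, map_add, hp, hq, map_add]
  | mul_X p i hp => rw [map_mul, map_mul, hp, map_mul, aeval_X, eval_X]; simp [Matrix.mulVec, dotProduct]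

lemma s5sub_one {σ : Type*} [Fintype σ] [DecidableEq σ] {R : Type*} [CommRing R] (F : MvPolynomial σ R) :
    s5sub 1 F = F := by
  unfold s5sub
  have : (fun a => ∑ b, C ((1 : Matrix σ σ R) a b) * X b) = (X : σ → MvPolynomial σ R) := by
    funext a
    rw [Finset.sum_eq_single a]
    · simp
    · intro b _ hb; simp [Matrix.one_apply_ne hb.symm]
    · simp
  rw [this, aeval_X_left, AlgHom.id_apply]

lemma s5sub_hom {σ : Type*} [Fintype σ] {R : Type*} [CommRing R] (A : Matrix σ σ R) (F : MvPolynomial σ R) (N : ℕ)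
    (hF : F.IsHomogeneous N) : (s5sub A F).IsHomogeneous N := by
  have := IsHomogeneous.aeval hF (fun a => ∑ b, C (A a b) * X b) (n := 1) (by
    intro a
    apply IsHomogeneous.sum
    intro b _
    exact isHomogeneous_C_mul_X _ _)
  rwa [one_mul] at this

/-- vanishing on a standard line -/
def s5std {k : Type u} [Field k] {q n : ℕ} {d : Fin n → ℕ} (F : tupleSpace k (q + 1) n d) : Prop :=
  ∃ b c : Fin q → k, ∀ i s t, eval (fun a => s * s5v 1 0 b a + t * s5v 0 1 c a) (F i : MvPolynomial (Fin (q+1+1)) k) = 0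

lemma s5_std_of_minor {k : Type u} [Field k] {q n : ℕ} {d : Fin n → ℕ} (F : tupleSpace k (q + 1) n d)
    (v w : Fin (q+1+1) → k) (h : v 0 * w 1 - w 0 * v 1 ≠ 0)
    (hF : ∀ i s t, eval (fun a => s * v a + t * w a) (F i : MvPolynomial (Fin (q+1+1)) k) = 0) : s5std F := by
  set δ := v 0 * w 1 - w 0 * v 1 with hδ
  refine ⟨fun j => (w 1 * v j.succ.succ - v 1 * w j.succ.succ) / δ, fun j => (v 0 * w j.succ.succ - w 0 * v j.succ.succ) / δ, ?_⟩
  intro i s t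
  refine Eq.trans ?_ (hF i ((s * w 1 - t * w 0) / δ) ((t * v 0 - s * v 1) / δ))
  refine congrArg (fun f => eval f (F i : MvPolynomial (Fin (q+1+1)) k)) ?_
  funext a
  revert a
  refine s5_cases ?_ ?_ fun j => ?_
  · change s * 1 + t * 0 = _
    field_simp
    rw [hδ]; ring
  · change s * 0 + t * 1 = _
    field_simp
    rw [hδ]; ring
  · change s * ((w 1 * v j.succ.succ - v 1 * w j.succ.succ) / δ) + t * ((v 0 * w j.succ.succ - w 0 * v j.succ.succ) / δ) = _
    field_simp
    ring

lemma s5_minor_exists {k : Type u} [Field k] {σ : Type*} (v w : σ → k) (h : LinearIndependent k ![v, w]) :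
    ∃ i j, v i * w j - w i * v j ≠ 0 := by
  by_contra hc
  push Not at hc
  rw [LinearIndependent.pair_iff] at h
  have h2 : ∀ b, w b = 0 := by
    intro b
    refine (h (w b) (- v b) ?_).1
    ext a
    have := hc a b
    simp only [Pi.add_apply, Pi.smul_apply, smul_eq_mul, Pi.zero_apply]
    linear_combination this
  have h3 := h 0 1 (by ext a; simp [h2 a])
  exact one_ne_zero h3.2

lemma s5_dense {k : Type u} [Field k] [Infinite k] {q n : ℕ} {d : Fin n → ℕ} (F : tupleSpace k (q + 1) n d)
    (hF : vanishOnCommonLine k F) (p : MvPolynomial (s5ν q d) k)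
    (hp : ∀ G : tupleSpace k (q + 1) n d, s5std G → eval (s5e k q d G) p = 0) :
    eval (s5e k q d F) p = 0 := by
  obtain ⟨v, w, hvw, hF⟩ := hF
  obtain ⟨i₀, j₀, hij⟩ := s5_minor_exists v w hvw
  let σ := Fin (q+1+1)
  let E : Matrix σ σ k := Matrix.of fun a b => (if a = 0 ∧ b = i₀ then 1 else 0) + (if a = 1 ∧ b = j₀ then 1 else 0)
  have hE0 : ∀ x : σ → k, E.mulVec x 0 = x i₀ := by
    intro x
    simp [E, Matrix.mulVec, dotProduct]
  have hE1 : ∀ x : σ → k, E.mulVec x 1 = x j₀ := by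
    intro x
    simp [E, Matrix.mulVec, dotProduct]
  let hT : Matrix σ σ (Polynomial k) := 1 + (Polynomial.X : Polynomial k) • E.map Polynomial.C
  let H : k → Matrix σ σ k := fun t => 1 + t • E
  have hH : ∀ t, hT.map (Polynomial.evalRingHom t) = H t := by
    intro t
    ext a b
    by_cases hab : a = b
    · subst hab
      simp [hT, H]
      ring
    · simp [hT, H, hab]
      ring
  let Fp : Fin n → MvPolynomial σ (Polynomial k) := fun i =>
    s5sub hT.adjugate (MvPolynomial.map Polynomial.C (F i : MvPolynomial σ k))
  let Ft : k → tupleSpace k (q+1) n d := fun t i => ⟨s5sub (H t).adjugate (F i : MvPolynomial σ k), s5sub_hom _ _ _ (F i).2⟩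
  have hFp : ∀ t i, MvPolynomial.map (Polynomial.evalRingHom t) (Fp i) = (Ft t i : MvPolynomial σ k) := by
    intro t i
    simp only [Fp, Ft]
    rw [s5sub_map, MvPolynomial.map_map]
    have h1 : (Polynomial.evalRingHom t).comp Polynomial.C = RingHom.id k := by ext; simp
    rw [h1, MvPolynomial.map_id]
    have h2 : (hT.adjugate).map (Polynomial.evalRingHom t) = (H t).adjugate := by
      rw [← hH t]
      exact RingHom.map_adjugate (Polynomial.evalRingHom t) hT
    rw [h2]
  let cT : s5ν q d → Polynomial k := fun x => coeff (x.2 : σ →₀ ℕ) (Fp x.1)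
  have hcT : ∀ t, (fun x => (cT x).eval t) = s5e k q d (Ft t) := by
    intro t
    funext x
    rw [s5e_apply, ← hFp, coeff_map]
    rfl
  let Q : Polynomial k := aeval cT p
  have hQ : ∀ t, Q.eval t = eval (s5e k q d (Ft t)) p := by
    intro t
    rw [← hcT, ← aeval_eq_eval]
    have : ((Polynomial.aeval t).comp (aeval cT) : MvPolynomial (s5ν q d) k →ₐ[k] k) = aeval (fun x => (cT x).eval t) := by
      apply algHom_ext
      intro x
      simp
    have h2 := congrArg (fun f : MvPolynomial (s5ν q d) k →ₐ[k] k => f p) this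
    simp only [AlgHom.comp_apply] at h2
    rw [← Polynomial.coe_aeval_eq_eval]
    exact h2
  let δ : Polynomial k := (Polynomial.C (v 0) + Polynomial.X * Polynomial.C (v i₀)) * (Polynomial.C (w 1) + Polynomial.X * Polynomial.C (w j₀))
    - (Polynomial.C (w 0) + Polynomial.X * Polynomial.C (w i₀)) * (Polynomial.C (v 1) + Polynomial.X * Polynomial.C (v j₀))
  have hδ : δ ≠ 0 := by
    intro h0
    have h1 : δ = Polynomial.C (v 0 * w 1 - w 0 * v 1) + Polynomial.C (v i₀ * w 1 + v 0 * w j₀ - w i₀ * v 1 - w 0 * v j₀) * Polynomial.X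
        + Polynomial.C (v i₀ * w j₀ - w i₀ * v j₀) * Polynomial.X ^ 2 := by
      simp only [δ, Polynomial.C_sub, Polynomial.C_add, Polynomial.C_mul]
      ring
    have h2 : δ.coeff 2 = v i₀ * w j₀ - w i₀ * v j₀ := by
      rw [h1, Polynomial.coeff_add, Polynomial.coeff_add, Polynomial.coeff_C_mul, Polynomial.coeff_C_mul]
      simp [Polynomial.coeff_X]
    rw [h0, Polynomial.coeff_zero] at h2
    exact hij h2.symm
  have hHv : ∀ t (x : σ → k) a, (H t).mulVec x a = x a + t * E.mulVec x a := by
    intro t x a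
    simp [H, Matrix.add_mulVec, Matrix.smul_mulVec]
  have hδQ : δ * Q = 0 := by
    apply Polynomial.funext
    intro t
    rw [Polynomial.eval_mul, Polynomial.eval_zero]
    by_cases ht : δ.eval t = 0
    · rw [ht, zero_mul]
    · rw [hQ, hp, mul_zero]
      apply s5_std_of_minor _ ((H t).mulVec v) ((H t).mulVec w)
      · rw [hHv, hHv, hHv, hHv, hE0, hE1, hE0, hE1]
        intro h0
        apply ht
        rw [← h0]
        simp [δ]
        ring
      · intro i s s'
        change eval _ (s5sub (H t).adjugate (F i : MvPolynomial σ k)) = 0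
        rw [s5sub_eval]
        refine Eq.trans ?_ (hF i ((H t).det * s) ((H t).det * s'))
        refine congrArg (fun f => eval f (F i : MvPolynomial σ k)) ?_
        have e1 : (fun a => s * (H t).mulVec v a + s' * (H t).mulVec w a) = (H t).mulVec (s • v + s' • w) := by
          rw [Matrix.mulVec_add, Matrix.mulVec_smul, Matrix.mulVec_smul]
          rfl
        rw [e1, Matrix.mulVec_mulVec, Matrix.adjugate_mul, Matrix.smul_mulVec, Matrix.one_mulVec]
        funext a
        simp only [Pi.smul_apply, Pi.add_apply, smul_eq_mul]
        ring
  have hQ0 : Q = 0 := (mul_eq_zero.1 hδQ).resolve_left hδ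
  have h0 := hQ 0
  rw [hQ0, Polynomial.eval_zero] at h0
  have hF0 : Ft 0 = F := by
    funext i
    apply Subtype.ext
    change s5sub (H 0).adjugate (F i : MvPolynomial σ k) = _
    have : H 0 = 1 := by simp [H]
    rw [this, Matrix.adjugate_one, s5sub_one]
  rw [hF0] at h0
  exact h0.symm

end Dense

section Final
universe u

lemma s5_card_O (q N : ℕ) : (s5O q N).card + (N + 1) = (q + 1 + N).choose N := by
  have h1 : (s5A q N).card = (q + 1 + N).choose N := by
    rw [Finset.card_finsuppAntidiag_nat_eq_choose]
    simp only [Finset.card_univ, Fintype.card_fin]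
    congr 1
    omega
  have h2 : ((s5A q N).filter (fun m => ¬ ∃ j : Fin q, m j.succ.succ ≠ 0)).card = N + 1 := by
    have h3 : (s5A q N).filter (fun m => ¬ ∃ j : Fin q, m j.succ.succ ≠ 0) =
        ({0, 1} : Finset (Fin (q+1+1))).finsuppAntidiag N := by
      ext m
      rw [Finset.mem_filter, s5_mem_anti, Finset.mem_finsuppAntidiag']
      have h4 : (¬ ∃ j : Fin q, m j.succ.succ ≠ 0) ↔ m.support ⊆ {0, 1} := by
        constructor
        · intro h a
          rw [Finsupp.mem_support_iff]
          revert a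
          refine s5_cases (by simp) (by simp) fun j hj => ?_
          exact absurd ⟨j, hj⟩ h
        · rintro h ⟨j, hj⟩
          have := h (Finsupp.mem_support_iff.2 hj)
          simp [Fin.ext_iff] at this
      rw [h4]
      rfl
    rw [h3, Finset.card_finsuppAntidiag_nat_eq_choose]
    have h5 : ({0, 1} : Finset (Fin (q+1+1))).card = 2 := by
      rw [Finset.card_pair]
      simp
    rw [h5]
    have : 2 + N - 1 = N + 1 := by omega
    rw [this, Nat.choose_succ_self_right]
  rw [← h1, ← h2]
  exact Finset.card_filter_add_card_filter_not _

variable {k : Type u} [Field k] {q n : ℕ} (d : Fin n → ℕ)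

/-- free coefficients -/
def s5y (k : Type u) [Field k] (i : Fin n) (m : Fin (q+1+1) →₀ ℕ) : MvPolynomial (s5τ q d) k :=
  if h : m ∈ s5O q (d i) then X (Sum.inr ⟨i, ⟨m, h⟩⟩) else 0

/-- the universal tuple -/
def s5Phi (k : Type u) [Field k] (q : ℕ) (i : Fin n) : MvPolynomial (Fin (q+1+1)) (MvPolynomial (s5τ q d) k) :=
  s5form (fun j => X (Sum.inl (Sum.inl j))) (fun j => X (Sum.inl (Sum.inr j))) (s5O q (d i))
    (s5y d k i + s5eps d _ i)

/-- its coefficients -/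
def s5Psi (k : Type u) [Field k] (q : ℕ) (x : s5ν q d) : MvPolynomial (s5τ q d) k := coeff (x.2 : Fin (q+1+1) →₀ ℕ) (s5Phi d k q x.1)

lemma s5_Phi_eval (t : s5τ q d → k) (i : Fin n) : MvPolynomial.map (eval t) (s5Phi d k q i) =
    s5form (fun j => t (Sum.inl (Sum.inl j))) (fun j => t (Sum.inl (Sum.inr j))) (s5O q (d i))
      (fun m => eval t (s5y d k i m) + s5eps d k i m) := by
  rw [s5Phi, s5form_map]
  congr 1
  · funext j; simp
  · funext j; simp
  · funext m
    simp only [Function.comp_apply, Pi.add_apply, map_add]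
    rw [s5eps_map]

lemma s5_R1 (t : s5τ q d → k) : ∃ F : tupleSpace k (q+1) n d, vanishOnCommonLine k F ∧
    s5e k q d F = fun x => eval t (s5Psi d k q x) := by
  refine ⟨fun i => ⟨MvPolynomial.map (eval t) (s5Phi d k q i), ?_⟩, ?_, ?_⟩
  · rw [s5_Phi_eval]
    exact s5form_hom _ _ _ _ (Finset.filter_subset _ _) _
  · refine ⟨s5v 1 0 (fun j => t (Sum.inl (Sum.inl j))), s5v 0 1 (fun j => t (Sum.inl (Sum.inr j))), s5_li _ _, ?_⟩
    intro i s s'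
    change eval _ (MvPolynomial.map (eval t) (s5Phi d k q i)) = 0
    rw [s5_Phi_eval]
    exact s5form_vanish _ _ _ _ _ _
  · funext x
    rw [s5e_apply]
    change coeff _ (MvPolynomial.map (eval t) (s5Phi d k q x.1)) = _
    rw [coeff_map]
    rfl

lemma s5_R2 [Infinite k] (F : tupleSpace k (q+1) n d) (hF : s5std F) : ∃ t : s5τ q d → k,
    s5e k q d F = fun x => eval t (s5Psi d k q x) := by
  obtain ⟨b, c, h⟩ := hF
  choose y hy using fun i => s5_param b c (d i) (F i : MvPolynomial (Fin (q+1+1)) k) (F i).2 (h i)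
  let t : s5τ q d → k := Sum.elim (Sum.elim b c) (fun x => y x.1 x.2.1 - s5eps d k x.1 x.2.1)
  refine ⟨t, ?_⟩
  funext x
  rw [s5e_apply, s5Psi, ← coeff_map, s5_Phi_eval, hy]
  congr 1
  unfold s5form
  refine Finset.sum_congr rfl fun m hm => ?_
  have h1 : y x.1 m = eval t (s5y d k x.1 m) + s5eps d k x.1 m := by
    rw [s5y, dif_pos hm, eval_X]
    simp [t]
  rw [h1]
  rfl

lemma s5_ker [IsAlgClosed k] :
    vanishingIdeal k (s5e k q d '' {F | vanishOnCommonLine k F}) = RingHom.ker (aeval (R := k) (s5Psi d k q)) := by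
  have : Infinite k := IsAlgClosed.instInfinite
  have hcomp : ∀ p t, eval t (aeval (s5Psi d k q) p) = eval (fun x => eval t (s5Psi d k q x)) p := by
    intro p t
    have : ((aeval t).comp (aeval (s5Psi d k q)) : MvPolynomial (s5ν q d) k →ₐ[k] k) = aeval (fun x => eval t (s5Psi d k q x)) := by
      apply algHom_ext
      intro x
      simp [aeval_eq_eval]
    exact congrArg (fun f : MvPolynomial (s5ν q d) k →ₐ[k] k => f p) this
  ext p
  rw [RingHom.mem_ker]
  constructor
  · intro h
    apply MvPolynomial.funext
    intro t
    obtain ⟨F, hF, hFt⟩ := s5_R1 (k := k) (q := q) d t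
    change eval t (aeval (s5Psi d k q) p) = _
    rw [hcomp, ← hFt, map_zero]
    exact h _ ⟨F, hF, rfl⟩
  · rintro h _ ⟨F, hF, rfl⟩
    refine s5_dense F hF p ?_
    intro G hG
    obtain ⟨t, ht⟩ := s5_R2 d G hG
    rw [ht, ← hcomp]
    have h' : aeval (s5Psi d k q) p = 0 := h
    rw [h', map_zero]

/-- coordinates recovering the parameters to first order -/
def s5h (k : Type u) [Field k] (hqn : q ≤ n) (hd : ∀ i, 1 ≤ d i) : s5τ q d → MvPolynomial (s5ν q d) k
  | Sum.inl (Sum.inl j) => - X ⟨Fin.castLE hqn j, ⟨Finsupp.single 0 (d (Fin.castLE hqn j)), (s5_mem_anti _ _).2 (by simp)⟩⟩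
  | Sum.inl (Sum.inr j) => - X ⟨Fin.castLE hqn j, ⟨Finsupp.single 0 (d (Fin.castLE hqn j) - 1) + Finsupp.single 1 1,
      (s5_mem_anti _ _).2 (by
        have := hd (Fin.castLE hqn j)
        rw [map_add, Finsupp.degree_single, Finsupp.degree_single]; omega)⟩⟩
  | Sum.inr x => X ⟨x.1, ⟨x.2.1, (Finset.mem_filter.1 x.2.2).1⟩⟩ - C (s5eps d k x.1 x.2.1)

lemma s5_X_mem {τ : Type*} (j : τ) : (X j : MvPolynomial τ k) ∈ idealOfVars τ k := Ideal.subset_span ⟨j, rfl⟩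

lemma s5_Phi_mod (i : Fin n) (m : Fin (q+1+1) →₀ ℕ) :
    coeff m (s5Phi d k q i) - ((s5y d k i m) + coeff m (s5form (fun j => X (Sum.inl (Sum.inl j))) (fun j => X (Sum.inl (Sum.inr j))) (s5O q (d i))
      (s5eps d (MvPolynomial (s5τ q d) k) i))) ∈ (idealOfVars (s5τ q d) k) ^ 2 := by
  have h := s5_form_mod (idealOfVars (s5τ q d) k) (fun j => X (Sum.inl (Sum.inl j))) (fun j => X (Sum.inl (Sum.inr j)))
    (fun j => s5_X_mem _) (fun j => s5_X_mem _) (s5O q (d i)) (s5y d k i) (by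
      intro m
      unfold s5y
      split_ifs
      · exact s5_X_mem _
      · exact zero_mem _) m
  rw [s5Phi, s5form_add, coeff_add]
  have h2 : (if m ∈ s5O q (d i) then s5y d k i m else 0) = s5y d k i m := by
    unfold s5y
    split_ifs <;> rfl
  rw [h2] at h
  convert h using 1
  ring

lemma s5_h_spec (hqn : q ≤ n) (hd : ∀ i, 1 ≤ d i) (j : s5τ q d) :
    aeval (s5Psi d k q) (s5h d k hqn hd j) - X j ∈ (idealOfVars (s5τ q d) k) ^ 2 := by
  rcases j with (j | j) | x
  · have h := s5_Phi_mod (k := k) (q := q) d (Fin.castLE hqn j) (Finsupp.single 0 (d (Fin.castLE hqn j)))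
    rw [s5_form_eps_coeff0 d _ _ _ (hd _) j rfl, s5y, dif_neg] at h
    · have h' := neg_mem h
      simp only [s5h, map_neg, aeval_X, s5Psi]
      convert h' using 1
      ring
    · intro h
      obtain ⟨l, hl⟩ := (Finset.mem_filter.1 h).2
      apply hl
      rw [Finsupp.single_eq_of_ne]
      intro h; simp [Fin.ext_iff] at h
  · have h := s5_Phi_mod (k := k) (q := q) d (Fin.castLE hqn j) (Finsupp.single 0 (d (Fin.castLE hqn j) - 1) + Finsupp.single 1 1)
    rw [s5_form_eps_coeff1 d _ _ _ (hd _) j rfl, s5y, dif_neg] at h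
    · have h' := neg_mem h
      simp only [s5h, map_neg, aeval_X, s5Psi]
      convert h' using 1
      ring
    · intro h
      obtain ⟨l, hl⟩ := (Finset.mem_filter.1 h).2
      apply hl
      rw [Finsupp.add_apply, Finsupp.single_eq_of_ne, Finsupp.single_eq_of_ne]
      · rfl
      · intro h; simp [Fin.ext_iff] at h
      · intro h; simp [Fin.ext_iff] at h
  · obtain ⟨i, m, hm⟩ := x
    have h := s5_Phi_mod (k := k) (q := q) d i m
    rw [s5_form_eps_coeff d _ _ i (hd _) m hm, s5y, dif_pos hm] at h
    simp only [s5h, map_sub, aeval_X, s5Psi, aeval_C, algebraMap_eq]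
    rw [s5eps_map]
    convert h using 1
    ring

lemma s5_core [IsAlgClosed k] (hqn : q ≤ n) (hd : ∀ i, 1 ≤ d i) :
    IsClosed {F : tupleSpace k (q+1) n d | vanishOnCommonLine k F} ∧
    IsIrreducible {F : tupleSpace k (q+1) n d | vanishOnCommonLine k F} ∧
    dimSet {F : tupleSpace k (q+1) n d | vanishOnCommonLine k F} =
      (((∑ i : Fin n, (q + 1 + d i).choose (d i)) - (∑ i : Fin n, (d i + 1)) + 2 * q : ℕ) : WithBot ℕ∞) := by
  have hc := s5_closedL (k := k) (r := q + 1) (n := n) (d := d)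
  refine ⟨hc, ?_, ?_⟩
  · rw [s5_irr_iff (k := k) rfl (s5e k q d), s5_ker]
    exact RingHom.ker_isPrime _
  · rw [dimSet, hc.closure_eq, s5_dim_top (k := k) rfl (s5e k q d) _ hc, s5_ker, s5_dim_ker _ _ (s5_h_spec d hqn hd)]
    congr 2
    simp only [Fintype.card_sum, Fintype.card_fin, Fintype.card_sigma, Fintype.card_coe]
    have : ∑ i : Fin n, (q + 1 + d i).choose (d i) = ∑ i : Fin n, (s5O q (d i)).card + ∑ i : Fin n, (d i + 1) := by
      rw [← Finset.sum_add_distrib]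
      exact Finset.sum_congr rfl fun i _ => (s5_card_O q (d i)).symm
    rw [this]
    omega

end Final

/-- For `r ≥ 2`, `a ≥ 1` and positive degrees `d_1, …, d_{r+a-1}`, the locus
`L` of `(r+a-1)`-tuples of forms whose common vanishing locus contains a line of `ℙ^r` is a
Zariski closed irreducible subset of `W_{r,d_1} × ⋯ × W_{r,d_{r+a-1}}` of codimension
`Σ (d_i + 1) - 2(r-1)`, i.e. of dimension `Σ C(r + d_i, d_i) - Σ (d_i + 1) + 2(r-1)`. -/
theorem statement5 [IsAlgClosed K] (r a : ℕ) (hr : 2 ≤ r) (ha : 1 ≤ a)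
    (d : Fin (r + a - 1) → ℕ) (hd1 : ∀ i, 1 ≤ d i)
    (L : Set (tupleSpace K r (r + a - 1) d))
    (hL : L = {F | vanishOnCommonLine K F}) :
    IsClosed L ∧ IsIrreducible L ∧
      dimSet L =
        (((∑ i : Fin (r + a - 1), (r + d i).choose (d i)) -
          (∑ i : Fin (r + a - 1), (d i + 1)) + 2 * (r - 1) : ℕ) : WithBot ℕ∞) := by
  subst hL
  obtain ⟨q, rfl⟩ : ∃ q, r = q + 1 := ⟨r - 1, by omega⟩
  exact s5_core d (by omega) hd1

end Statement5
end

section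
/- Let r ≥ 2, a ≥ 1, and b be integers with 2 ≤ b ≤ r, let 1 ≤ d_1 ≤ ⋯ ≤ d_{r+a−1} be integers, and let 1 ≤ i_1 < ⋯ < i_{r−b+a} = r+a−1 be integers (note that then 1 ≤ b−i_j+j ≤ b for every j). Then Σ_{j=1}^{r−b+a} h_{b, b−i_j+j}(d_{i_j}) − (b+1)(r−b) > Σ_{i=1}^{r+a−1}(d_i+1) − 2(r−1). -/
theorem aux_choose_le (k e : ℕ) (he : 1 ≤ e) : k + 1 ≤ (k + e).choose k := by
  have h := Nat.choose_le_choose k (show k + 1 ≤ k + e by omega)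
  rwa [Nat.choose_succ_self_right] at h

theorem aux_choose_lin (k e : ℕ) : e * (k + 1) + 1 ≤ (k + 1 + e).choose (k + 1) := by
  induction e with
  | zero => simp
  | succ e ih =>
    have h1 := aux_choose_le k (1 + e) (by omega)
    have h2 : (k + 1 + (e + 1)).choose (k + 1)
        = (k + 1 + e).choose k + (k + 1 + e).choose (k + 1) := Nat.choose_succ_succ _ _
    rw [← add_assoc] at h1
    rw [h2]
    nlinarith

theorem aux_hpoly (b c d : ℕ) (hc : c + 1 ≤ b) (hd : 1 ≤ d) :
    (b : ℤ) * d + 1 ≤ hpoly b ((b : ℤ) - c) d := by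
  obtain ⟨e, rfl⟩ : ∃ e, b = c + 1 + e := ⟨b - (c + 1), by omega⟩
  obtain ⟨k, rfl⟩ : ∃ k, d = k + 1 := ⟨d - 1, by omega⟩
  have h1 := aux_choose_le k (e + 1) (by omega)
  have h2 := aux_choose_lin k (e + 1)
  unfold hpoly
  have e1 : (((k + 1 : ℕ) : ℤ) + (((c + 1 + e : ℕ) : ℤ) - c) - 1).toNat = k + (e + 1) := by omega
  have e2 : (((k + 1 : ℕ) : ℤ) - 1).toNat = k := by omega
  have e3 : (((k + 1 : ℕ) : ℤ) + (((c + 1 + e : ℕ) : ℤ) - c)).toNat = k + 1 + (e + 1) := by omega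
  have e4 : ((k + 1 : ℕ) : ℤ).toNat = k + 1 := by omega
  rw [e1, e2, e3, e4]
  have h1' : ((k : ℤ) + 1) ≤ ((k + (e + 1)).choose k : ℤ) := by exact_mod_cast h1
  have h2' : ((e : ℤ) + 1) * (k + 1) + 1 ≤ ((k + 1 + (e + 1)).choose (k + 1) : ℤ) := by
    exact_mod_cast h2
  have h3 := mul_le_mul_of_nonneg_left h1' (show (0 : ℤ) ≤ c by positivity)
  have h4 : (((c + 1 + e : ℕ) : ℤ) - (((c + 1 + e : ℕ) : ℤ) - c)) = c := by ring
  rw [h4]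
  push_cast
  linarith

theorem aux_gap {m n : ℕ} (ι : Fin m → Fin n) (hι : StrictMono ι) (j k : ℕ) (h : j + k < m) :
    (ι ⟨j, by omega⟩ : ℕ) + k ≤ ι ⟨j + k, h⟩ := by
  induction k with
  | zero => simp
  | succ k ih =>
    have h1 := ih (by omega)
    have h2 : ι ⟨j + k, by omega⟩ < ι ⟨j + (k + 1), h⟩ := hι (by simp [Fin.lt_def])
    rw [Fin.lt_def] at h2
    omega

theorem aux_sum {m n : ℕ} (ι : Fin m → Fin n) (hι : StrictMono ι) (D : Fin n → ℤ)
    (hD : ∀ i, 0 ≤ D i) (l : Fin m) (hl : ∀ i, D i ≤ D (ι l)) :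
    ∑ i, D i ≤ ((n : ℤ) - m + 1) * ∑ j, D (ι j) := by
  classical
  have h1 := Finset.sum_add_sum_compl (Finset.univ.image ι) D
  have h2 : ∑ i ∈ Finset.univ.image ι, D i = ∑ j, D (ι j) :=
    Finset.sum_image (fun x _ y _ h => hι.injective h)
  have h3 := Finset.sum_le_card_nsmul (Finset.univ.image ι)ᶜ D (D (ι l)) (fun i _ => hl i)
  have h4 : (Finset.univ.image ι).card = m := by
    rw [Finset.card_image_of_injective _ hι.injective]; simp
  have hmn : m ≤ n := by simpa using Fintype.card_le_of_injective ι hι.injective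
  rw [Finset.card_compl, h4, Fintype.card_fin, nsmul_eq_mul, Nat.cast_sub hmn] at h3
  have h5 : D (ι l) ≤ ∑ j, D (ι j) :=
    Finset.single_le_sum (f := fun j => D (ι j)) (fun j _ => hD _) (Finset.mem_univ l)
  have h6 : (0 : ℤ) ≤ (n : ℤ) - m := by
    have : (m : ℤ) ≤ n := by exact_mod_cast hmn
    linarith
  have h7 := mul_le_mul_of_nonneg_left h5 h6
  rw [h2] at h1
  linarith

/-- Let `r ≥ 2`, `a ≥ 1`, `2 ≤ b ≤ r`, let `1 ≤ d_1 ≤ ⋯ ≤ d_{r+a-1}` and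
let `1 ≤ i_1 < ⋯ < i_{r-b+a} = r+a-1` be indices (encoded 0-indexed by a strictly monotone
`ι : Fin (r-b+a) → Fin (r+a-1)` with last value the last index; note that
`b - i_j + j` is invariant under this shift of indexing). Then
`Σ_j h_{b, b-i_j+j}(d_{i_j}) - (b+1)(r-b) > Σ_i (d_i + 1) - 2(r-1)`. -/
theorem statement8 (r a b : ℕ) (hr : 2 ≤ r) (ha : 1 ≤ a) (hb : 2 ≤ b) (hbr : b ≤ r)
    (d : Fin (r + a - 1) → ℕ) (hd1 : ∀ i, 1 ≤ d i) (hmono : Monotone d)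
    (ι : Fin (r - b + a) → Fin (r + a - 1)) (hι : StrictMono ι)
    (hlast : ι ⟨r - b + a - 1, by omega⟩ = ⟨r + a - 2, by omega⟩) :
    (∑ i : Fin (r + a - 1), ((d i : ℤ) + 1)) - 2 * ((r : ℤ) - 1) <
      (∑ j : Fin (r - b + a),
        hpoly (b : ℤ) ((b : ℤ) - ((ι j : ℕ) : ℤ) + ((j : ℕ) : ℤ)) (d (ι j))) -
        ((b : ℤ) + 1) * ((r : ℤ) - (b : ℤ)) := by
  
  have hterm : ∀ j : Fin (r - b + a), (b : ℤ) * (d (ι j)) + 1 ≤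
      hpoly (b : ℤ) ((b : ℤ) - ((ι j : ℕ) : ℤ) + ((j : ℕ) : ℤ)) (d (ι j)) := by
    intro j
    have g1 := aux_gap ι hι 0 j (by have := j.2; omega)
    have g2 := aux_gap ι hι j (r - b + a - 1 - j) (by have := j.2; omega)
    have e1 : (⟨0 + (j : ℕ), by have := j.2; omega⟩ : Fin (r - b + a)) = j := by ext; simp
    have e2 : (⟨(j : ℕ) + (r - b + a - 1 - j), by have := j.2; omega⟩ : Fin (r - b + a))
        = ⟨r - b + a - 1, by omega⟩ := by
      ext; have := j.2; (try simp only); omega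
    rw [e1] at g1
    rw [e2, hlast] at g2
    simp only [Fin.eta] at g2
    have hj := j.2
    have h := aux_hpoly b ((ι j : ℕ) - j) (d (ι j)) (by omega) (hd1 _)
    have e3 : (b : ℤ) - (((ι j : ℕ) - (j : ℕ) : ℕ) : ℤ)
        = (b : ℤ) - ((ι j : ℕ) : ℤ) + ((j : ℕ) : ℤ) := by omega
    rwa [e3] at h
  have hs := Finset.sum_le_sum (fun j (_ : j ∈ Finset.univ) => hterm j)
  have hm := aux_sum ι hι (fun i => (d i : ℤ) - 1)
    (fun i => by have := hd1 i; (try simp only); omega) ⟨r - b + a - 1, by omega⟩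
    (fun i => by
      have : d i ≤ d (ι ⟨r - b + a - 1, by omega⟩) := by
        apply hmono
        rw [hlast, Fin.le_def]
        have := i.2
        (try simp only); omega
      (try simp only); omega)
  have c1 : ((r + a - 1 : ℕ) : ℤ) = r + a - 1 := by omega
  have c2 : ((r - b + a : ℕ) : ℤ) = r - b + a := by omega
  simp only [Finset.sum_sub_distrib, Finset.sum_add_distrib, Finset.sum_const, Finset.card_univ,
    Fintype.card_fin, nsmul_eq_mul, mul_one, ← Finset.mul_sum, c1, c2] at hs hm ⊢
  have ha' : (1 : ℤ) ≤ a := by exact_mod_cast ha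
  have hb' : (2 : ℤ) ≤ b := by exact_mod_cast hb
  have hp : (0 : ℤ) < (b - 1) * a := mul_pos (by linarith) (by linarith)
  nlinarith
end

section
/- Let r, a, b be integers with a ≥ 1 and 1 ≤ b ≤ r, and let 1 ≤ d_1 ≤ ⋯ ≤ d_{r+a−1} be integers. Then Σ_{j=1}^{r−b+a−1}(b·d_j + 1) + (b·d_{r+a−1} + 1) − (b+1)(r−b) ≥ Σ_{j=1}^{r+a−1}(d_j + 1) − 2(r−1) + a(b−1). -/
theorem aux9 (m b n : ℕ) (hn : n = m + b) (hb : 1 ≤ b) (hle : m ≤ n)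
    (d : Fin n → ℕ) (hd1 : ∀ i, 1 ≤ d i) (D : ℤ) (hD : ∀ i, (d i : ℤ) ≤ D) :
    (∑ j : Fin n, ((d j : ℤ) + 1)) + ((b : ℤ) - 1) * m ≤
      (∑ j : Fin m, ((b : ℤ) * (d (Fin.castLE hle j) : ℤ) + 1)) + b * D + b := by
  subst hn
  rw [Fin.sum_univ_add]
  have h1 : ∑ j : Fin b, ((d (Fin.natAdd m j) : ℤ) + 1) ≤ ∑ j : Fin b, (D + 1) :=
    Finset.sum_le_sum fun j _ => by linarith [hD (Fin.natAdd m j)]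
  have h2 : ∑ j : Fin m, (((d (Fin.castAdd b j) : ℤ) + 1) + ((b : ℤ) - 1)) ≤
      ∑ j : Fin m, ((b : ℤ) * (d (Fin.castLE hle j) : ℤ) + 1) := by
    refine Finset.sum_le_sum fun j _ => ?_
    have e : Fin.castAdd b j = Fin.castLE hle j := rfl
    rw [e]
    have h3 : (1 : ℤ) ≤ d (Fin.castLE hle j) := by exact_mod_cast hd1 _
    have h4 : (1 : ℤ) ≤ b := by exact_mod_cast hb
    nlinarith
  rw [Finset.sum_add_distrib (g := fun _ => (b : ℤ) - 1)] at h2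
  simp only [Finset.sum_const, Finset.card_univ, Fintype.card_fin, nsmul_eq_mul] at h1 h2
  linarith

/-- Let `a ≥ 1`, `1 ≤ b ≤ r`, and `1 ≤ d_1 ≤ ⋯ ≤ d_{r+a-1}`. Then
`Σ_{j=1}^{r-b+a-1} (b·d_j + 1) + (b·d_{r+a-1} + 1) - (b+1)(r-b)
  ≥ Σ_{j=1}^{r+a-1} (d_j + 1) - 2(r-1) + a(b-1)`. -/
theorem statement9 (r a b : ℕ) (ha : 1 ≤ a) (hb : 1 ≤ b) (hbr : b ≤ r)
    (d : Fin (r + a - 1) → ℕ) (hd1 : ∀ i, 1 ≤ d i) (hmono : Monotone d) :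
    (∑ j : Fin (r + a - 1), ((d j : ℤ) + 1)) - 2 * ((r : ℤ) - 1) + (a : ℤ) * ((b : ℤ) - 1) ≤
      (∑ j : Fin (r - b + a - 1), ((b : ℤ) * (d (Fin.castLE (by omega) j) : ℤ) + 1)) +
        ((b : ℤ) * (d ⟨r + a - 2, by omega⟩ : ℤ) + 1) - ((b : ℤ) + 1) * ((r : ℤ) - (b : ℤ)) := by
  have h := aux9 (r - b + a - 1) b (r + a - 1) (by omega) hb (by omega) d hd1
    (d ⟨r + a - 2, by omega⟩ : ℤ) (fun i => by
      have : d i ≤ d ⟨r + a - 2, by omega⟩ := hmono (by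
        rw [Fin.le_def]
        have := i.2
        simp only
        omega)
      exact_mod_cast this)
  have hm : ((r - b + a - 1 : ℕ) : ℤ) = r - b + a - 1 := by omega
  rw [hm] at h
  linarith
end

section
/- Let k be an algebraically closed field and r ≥ 2 an integer. For homogeneous quadratic forms F_1, F_2 in k[x_0,…,x_r], one has dim V(F_1,F_2) ≥ r−1 if and only if either there exists a nonzero linear form L with L dividing both F_1 and F_2, or F_1 and F_2 are linearly dependent over k. -/
open MvPolynomial

lemma aux_height (K : Type*) [Field K] (n : ℕ) :
    ∀ P : Ideal (MvPolynomial (Fin n) K), P.IsMaximal → ((n : ℕ∞)) ≤ P.height := by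
  induction n with
  | zero => intro P _; simp
  | succ n ih =>
    intro P hP
    let e := (finSuccEquiv K n).toRingEquiv
    let Q := P.comap (e.symm : Polynomial (MvPolynomial (Fin n) K) →+* _)
    have hQ : Q.IsMaximal := Ideal.comap_isMaximal_of_equiv e.symm
    have hh : Q.height = P.height := by
      exact RingEquiv.height_comap e.symm P
    have hm : (Q.comap (Polynomial.C)).IsMaximal := 
      Polynomial.isMaximal_comap_C_of_isJacobsonRing Q
    have : Q.LiesOver (Q.comap (Polynomial.C)) := ⟨rfl⟩
    have := Polynomial.height_eq_height_add_one (Q.comap (Polynomial.C)) Q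
    rw [← hh, this]
    push_cast
    gcongr
    exact ih _ hm

lemma aux_dim (K : Type*) [Field K] (r : ℕ) (F : MvPolynomial (Fin (r+1)) K) (hF : ¬ IsUnit F) :
    ((r : ℕ∞) : WithBot ℕ∞) ≤ ringKrullDim (MvPolynomial (Fin (r + 1)) K ⧸ Ideal.span {F}) := by
  obtain ⟨M, hM, hFM⟩ := exists_max_ideal_of_mem_nonunits hF
  have h1 := Ideal.height_le_ringKrullDim_quotient_add_one hFM
  have h2 := aux_height K _ M hM
  have h3 : (((r+1 : ℕ) : ℕ∞) : WithBot ℕ∞) ≤ _ := (WithBot.coe_le_coe.2 h2).trans h1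
  generalize ringKrullDim (MvPolynomial (Fin (r + 1)) K ⧸ Ideal.span {F}) = d at h3 ⊢
  push_cast at h3
  cases d with
  | bot => simp at h3
  | coe d =>
    have h4 : (r : ℕ∞) + 1 ≤ d + 1 := by exact_mod_cast h3
    exact WithBot.coe_le_coe.2 ((ENat.add_le_add_iff_right (by simp)).1 h4)

lemma aux_prime (K : Type*) [Field K] (r : ℕ) (F G : MvPolynomial (Fin (r+1)) K) (hF : F ≠ 0)
    (h : ((r : ℕ∞) : WithBot ℕ∞) ≤
      ringKrullDim (MvPolynomial (Fin (r + 1)) K ⧸ Ideal.span {F, G})) :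
    ∃ p, Prime p ∧ p ∣ F ∧ p ∣ G := by
  rw [ringKrullDim_quotient] at h
  obtain ⟨s, hs⟩ := Order.le_krullDim_iff.1 h
  let s' : LTSeries (PrimeSpectrum (MvPolynomial (Fin (r + 1)) K)) :=
    s.map Subtype.val (Subtype.strictMono_coe _)
  set P := s'.head with hP
  have hIP : Ideal.span {F, G} ≤ P.asIdeal := s.head.2
  have hFP : F ∈ P.asIdeal := hIP (Ideal.subset_span (by simp))
  have hGP : G ∈ P.asIdeal := hIP (Ideal.subset_span (by simp))
  obtain ⟨p, hpP, hp⟩ := Ideal.IsPrime.exists_mem_prime_of_ne_bot P.2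
    (fun h => hF (by simpa [h] using hFP))
  have hle : Ideal.span {p} ≤ P.asIdeal := by simpa [Ideal.span_le] using hpP
  have hpr : (Ideal.span {p}).IsPrime := (Ideal.span_singleton_prime hp.ne_zero).2 hp
  by_cases heq : Ideal.span {p} = P.asIdeal
  · rw [← heq, Ideal.mem_span_singleton] at hFP hGP
    exact ⟨p, hp, hFP, hGP⟩
  exfalso
  let Q : PrimeSpectrum (MvPolynomial (Fin (r + 1)) K) := ⟨Ideal.span {p}, hpr⟩
  have hQP : Q < P := lt_of_le_of_ne hle (fun h => heq (congrArg PrimeSpectrum.asIdeal h))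
  have hBQ : (⊥ : PrimeSpectrum (MvPolynomial (Fin (r + 1)) K)) < Q := by
    rw [bot_lt_iff_ne_bot]
    intro h
    have := congrArg PrimeSpectrum.asIdeal h
    exact hp.ne_zero (Ideal.span_singleton_eq_bot.1 this)
  have h2 := Order.LTSeries.length_le_krullDim ((s'.cons Q hQP).cons ⊥ (by simpa using hBQ))
  change _ ≤ ringKrullDim _ at h2
  rw [MvPolynomial.ringKrullDim_of_isNoetherianRing, ringKrullDim_eq_zero_of_field] at h2
  simp [s', hs] at h2
  norm_cast at h2
  omega

lemma aux_hom (K : Type*) [Field K] {σ : Type*} (p a : MvPolynomial σ K)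
    (h : (p * a).IsHomogeneous 2) (h0 : p * a ≠ 0) (hp : p.totalDegree ≠ 0)
    (ha : a.totalDegree ≠ 0) : p.IsHomogeneous 1 := by
  have hp0 : p ≠ 0 := left_ne_zero_of_mul h0
  have ha0 : a ≠ 0 := right_ne_zero_of_mul h0
  have hd := h.totalDegree h0
  rw [totalDegree_mul_of_isDomain hp0 ha0] at hd
  have hp1 : p.totalDegree = 1 := by omega
  have ha1 : a.totalDegree = 1 := by omega
  have ep := sum_homogeneousComponent p
  have ea := sum_homogeneousComponent a
  rw [hp1] at ep
  rw [ha1] at ea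
  simp only [Finset.sum_range_succ, Finset.range_zero, Finset.sum_empty, zero_add,
    homogeneousComponent_zero] at ep ea
  set c := coeff 0 p
  set d := coeff 0 a
  have Hp := homogeneousComponent_isHomogeneous 1 p
  have Ha := homogeneousComponent_isHomogeneous 1 a
  set P := homogeneousComponent 1 p
  set A := homogeneousComponent 1 a
  by_cases hc : c = 0
  · rw [hc, C_0, zero_add] at ep
    rwa [← ep]
  exfalso
  have hcd : c * d = 0 := by
    have : coeff 0 (p * a) = 0 := h.coeff_eq_zero (by simp)
    rw [← constantCoeff_eq, map_mul] at this
    exact this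
  have hd0 : d = 0 := by simpa [hc] using hcd
  rw [hd0, C_0, zero_add] at ea
  have e1 : homogeneousComponent 1 (p * a) = 0 := by
    rw [homogeneousComponent_of_mem h]; simp
  have e2 : p * a = C c * A + P * A := by rw [← ep, ← ea]; ring
  rw [e2, map_add, homogeneousComponent_C_mul, homogeneousComponent_of_mem Ha,
    homogeneousComponent_of_mem (Hp.mul Ha)] at e1
  simp [hc] at e1
  exact ha0 (ea ▸ e1)

lemma aux_nonunit (K : Type*) [Field K] {σ : Type*} (p : MvPolynomial σ K) (n : ℕ) (hn : n ≠ 0)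
    (h : p.IsHomogeneous n) : ¬ IsUnit p := by
  intro hu
  have h1 : coeff 0 p = 0 := h.coeff_eq_zero (by simpa using hn.symm)
  have := hu.map (constantCoeff (R := K) (σ := σ))
  rw [constantCoeff_eq, h1] at this
  simp at this

theorem statement11 (K : Type*) [Field K] [IsAlgClosed K] (r : ℕ) (hr : 2 ≤ r)
    (F₁ F₂ : MvPolynomial (Fin (r + 1)) K)
    (h₁ : F₁.IsHomogeneous 2) (h₂ : F₂.IsHomogeneous 2) :
    ((r : ℕ∞) : WithBot ℕ∞) ≤
        ringKrullDim (MvPolynomial (Fin (r + 1)) K ⧸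
          (Ideal.span {F₁, F₂} : Ideal (MvPolynomial (Fin (r + 1)) K))) ↔
      (∃ L : MvPolynomial (Fin (r + 1)) K,
          L.IsHomogeneous 1 ∧ L ≠ 0 ∧ L ∣ F₁ ∧ L ∣ F₂) ∨
        ¬ LinearIndependent K ![F₁, F₂] := by
  constructor
  · intro h
    by_contra! hcon
    obtain ⟨hL, hli⟩ := hcon
    have hF1 : F₁ ≠ 0 := hli.ne_zero 0
    have hF2 : F₂ ≠ 0 := hli.ne_zero 1
    obtain ⟨p, hp, ⟨a, rfl⟩, ⟨b, rfl⟩⟩ := aux_prime K r F₁ F₂ hF1 h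
    have hp1 : ¬ p.IsHomogeneous 1 := fun hh =>
      hL p hh hp.ne_zero (dvd_mul_right _ _) (dvd_mul_right _ _)
    have hpd : p.totalDegree ≠ 0 := by
      intro h0
      rw [totalDegree_eq_zero_iff_eq_C] at h0
      apply hp.not_isUnit
      rw [h0]
      refine (IsUnit.mk0 _ ?_).map C
      intro h00
      exact hp.ne_zero (by rw [h0, h00, C_0])
    have had : a.totalDegree = 0 := by
      by_contra ha
      exact hp1 (aux_hom K p a h₁ hF1 hpd ha)
    have hbd : b.totalDegree = 0 := by
      by_contra ha
      exact hp1 (aux_hom K p b h₂ hF2 hpd ha)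
    rw [totalDegree_eq_zero_iff_eq_C] at had hbd
    have := LinearIndependent.pair_iff.1 hli (coeff 0 b) (-(coeff 0 a)) (by
      rw [smul_eq_C_mul, smul_eq_C_mul, C_neg, ← had, ← hbd]; ring)
    exact right_ne_zero_of_mul hF2 (by rw [hbd, this.1, C_0])
  · have key : ∀ F : MvPolynomial (Fin (r + 1)) K, ¬ IsUnit F → F ∣ F₁ → F ∣ F₂ →
        ((r : ℕ∞) : WithBot ℕ∞) ≤ ringKrullDim (MvPolynomial (Fin (r + 1)) K ⧸
          (Ideal.span {F₁, F₂} : Ideal (MvPolynomial (Fin (r + 1)) K))) := by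
      intro F hF d1 d2
      refine (aux_dim K r F hF).trans ?_
      have hle : Ideal.span {F₁, F₂} ≤ Ideal.span {F} := by
        rw [Ideal.span_le]
        rintro x (rfl | rfl)
        · exact Ideal.mem_span_singleton.2 d1
        · exact Ideal.mem_span_singleton.2 d2
      exact ringKrullDim_le_of_surjective _ (Ideal.Quotient.factor_surjective hle)
    rintro (⟨L, hL, -, d1, d2⟩ | h)
    · exact key L (aux_nonunit K L 1 one_ne_zero hL) d1 d2
    · rw [LinearIndependent.pair_iff] at h
      push Not at h
      obtain ⟨s, t, hst, hne⟩ := h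
      by_cases hs : s = 0
      · have ht := hne hs
        rw [hs, zero_smul, zero_add] at hst
        have : F₂ = 0 := (smul_eq_zero.1 hst).resolve_left ht
        exact key F₁ (aux_nonunit K _ 2 two_ne_zero h₁) dvd_rfl (this ▸ dvd_zero _)
      · refine key F₂ (aux_nonunit K _ 2 two_ne_zero h₂) ⟨C (-(s⁻¹ * t)), ?_⟩ dvd_rfl
        have : F₁ = s⁻¹ • (s • F₁) := by rw [smul_smul, inv_mul_cancel₀ hs, one_smul]
        rw [this, eq_neg_of_add_eq_zero_left hst, mul_comm, ← smul_eq_C_mul, smul_neg, smul_smul,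
          neg_smul]
end

section
/- Let k be an algebraically closed field and r ≥ 2 an integer. The set A ⊆ W_{r,2} × W_{r,2} of pairs (F_1, F_2) of quadratic forms such that some nonzero linear form L divides both F_1 and F_2 (equivalently, F_1 and F_2 both vanish on a common hyperplane of ℙ^r) is a Zariski closed irreducible subset of codimension r^2 in W_{r,2} × W_{r,2}. -/
open MvPolynomial

noncomputable section Statement12

open MvPolynomial

variable (K : Type*) [Field K]

/-- The affine space `W_{r,2} × W_{r,2}` of pairs of quadratic forms in `x_0, …, x_r`. -/
abbrev pairSpace (r : ℕ) : Type _ :=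
  ↥(homogeneousSubmodule (Fin (r + 1)) K 2) × ↥(homogeneousSubmodule (Fin (r + 1)) K 2)

/-- The Zariski topology on the affine space of pairs of quadratic forms. -/
instance (r : ℕ) : TopologicalSpace (pairSpace K r) := zariskiTopology K _


theorem aux_dim_integral {R S : Type*} [CommRing R] [CommRing S] [Algebra R S] [Algebra.IsIntegral R S]
    [FaithfulSMul R S] [IsDomain S] [IsDomain R] : ringKrullDim S = ringKrullDim R := by
  apply le_antisymm
  · refine Order.krullDim_le_of_strictMono (PrimeSpectrum.comap (algebraMap R S)) ?_
    intro p q hpq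
    have h : p.asIdeal < q.asIdeal := hpq
    exact Ideal.IsIntegral.comap_lt_comap h
  · refine iSup_le fun l => ?_
    obtain ⟨Q, -, hQ, hQ'⟩ := Ideal.exists_ideal_over_prime_of_isIntegral (S := S) l.head.asIdeal ⊥
      (by rw [show Ideal.comap (algebraMap R S) ⊥ = ⊥ from
            (RingHom.injective_iff_ker_eq_bot _).1 (FaithfulSMul.algebraMap_injective R S)]
          exact bot_le)
    have : Q.LiesOver l.head.asIdeal := ⟨hQ'.symm⟩
    obtain ⟨L, hL, -⟩ := Ideal.exists_ltSeries_of_hasGoingUp (S := S) l Q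
    rw [← hL]
    exact Order.LTSeries.length_le_krullDim L

theorem aux_dim_trdeg {k S : Type*} [Field k] [CommRing S] [IsDomain S] [Algebra k S]
    [Algebra.FiniteType k S] (n : ℕ) (h : Algebra.trdeg k S = n) : ringKrullDim S = n := by
  obtain ⟨s, g, hg, hi⟩ := exists_integral_inj_algHom_of_fg k S
  let := g.toRingHom.toAlgebra
  have : Algebra.IsIntegral (MvPolynomial (Fin s) k) S := ⟨hi⟩
  have : IsScalarTower k (MvPolynomial (Fin s) k) S := IsScalarTower.of_algebraMap_eq fun x =>
    (g.commutes x).symm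
  have : FaithfulSMul (MvPolynomial (Fin s) k) S := (faithfulSMul_iff_algebraMap_injective _ _).2 hg
  rw [aux_dim_integral (R := MvPolynomial (Fin s) k), MvPolynomial.ringKrullDim_of_isNoetherianRing]
  have := lift_trdeg_add_eq k (MvPolynomial (Fin s) k) S
  rw [trdeg_eq_zero (R := MvPolynomial (Fin s) k) (A := S), MvPolynomial.trdeg_of_isDomain, h] at this
  simp at this
  simp
  exact_mod_cast this

theorem aux_alg {k σ : Type*} [Field k] [Fintype σ] (S : Subalgebra k (MvPolynomial σ k))
    (h : ∀ i, IsAlgebraic S (X i : MvPolynomial σ k)) :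
    Algebra.trdeg k S = Fintype.card σ := by
  have : Algebra.IsAlgebraic S (MvPolynomial σ k) := by
    constructor
    intro p
    induction p using MvPolynomial.induction_on with
    | C a => exact isAlgebraic_algebraMap (R := S) (algebraMap k S a)
    | add p q hp hq => exact hp.add hq
    | mul_X p n hp => exact hp.mul (h n)
  have := lift_trdeg_add_eq k S (MvPolynomial σ k)
  rw [trdeg_eq_zero (R := S) (A := MvPolynomial σ k), MvPolynomial.trdeg_of_isDomain] at this
  simp at this
  simpa using this

theorem aux_top {k R X : Type*} [Field k] [IsAlgClosed k] [CommRing R] [Algebra k R]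
    [Algebra.FiniteType k R] [TopologicalSpace X] (e : X → (R →ₐ[k] k)) (he : Function.Surjective e)
    (hc : ∀ Z : Set X, IsClosed Z ↔ ∃ S : Set R, Z = {x | ∀ p ∈ S, e x p = 0}) :
    topologicalKrullDim X = ringKrullDim R := by
  rw [← PrimeSpectrum.topologicalKrullDim_eq_ringKrullDim]
  let f : X → PrimeSpectrum R := fun x => ⟨RingHom.ker (e x), RingHom.ker_isPrime _⟩
  have hf : Topology.IsInducing f := by
    refine ⟨TopologicalSpace.ext_isClosed fun Z => ?_⟩
    rw [hc, isClosed_induced_iff]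
    constructor
    · rintro ⟨S, rfl⟩
      refine ⟨PrimeSpectrum.zeroLocus S, PrimeSpectrum.isClosed_zeroLocus S, ?_⟩
      ext x
      simp [f, PrimeSpectrum.mem_zeroLocus, Set.subset_def]
    · rintro ⟨W, hW, rfl⟩
      obtain ⟨S, rfl⟩ := (PrimeSpectrum.isClosed_iff_zeroLocus _).1 hW
      refine ⟨S, ?_⟩
      ext x
      simp [f, PrimeSpectrum.mem_zeroLocus, Set.subset_def]
  have : IsJacobsonRing R := isJacobsonRing_of_finiteType (A := k)
  have hr : closedPoints (PrimeSpectrum R) ⊆ Set.range f := by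
    intro p hp
    rw [mem_closedPoints_iff, PrimeSpectrum.isClosed_singleton_iff_isMaximal] at hp
    let : Field (R ⧸ p.asIdeal) := Ideal.Quotient.field p.asIdeal
    have : Algebra.FiniteType k (R ⧸ p.asIdeal) := inferInstance
    have : Module.Finite k (R ⧸ p.asIdeal) := finite_of_finite_type_of_isJacobsonRing k _
    let E : k ≃ₐ[k] (R ⧸ p.asIdeal) := AlgEquiv.ofBijective (Algebra.ofId _ _)
      IsAlgClosed.algebraMap_bijective_of_isIntegral
    obtain ⟨x, hx⟩ := he (E.symm.toAlgHom.comp (Ideal.Quotient.mkₐ k p.asIdeal))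
    refine ⟨x, ?_⟩
    ext a
    simp [f, hx, Ideal.Quotient.eq_zero_iff_mem]
  have hcl : ∀ Z : Set (PrimeSpectrum R), IsClosed Z → closure (f '' (f ⁻¹' Z)) = Z := by
    intro Z hZ
    rw [Set.image_preimage_eq_inter_range]
    refine subset_antisymm (closure_minimal Set.inter_subset_left hZ) ?_
    conv_lhs => rw [← hZ.closure_eq]
    rw [← JacobsonSpace.closure_inter_closedPoints_eq_closure hZ.isLocallyClosed]
    exact closure_mono (Set.inter_subset_inter_right _ hr)
  refine le_antisymm hf.topologicalKrullDim_le ?_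
  have hirr : ∀ Z : TopologicalSpace.IrreducibleCloseds (PrimeSpectrum R), IsIrreducible (f ⁻¹' (Z : Set _)) := by
    intro Z
    have h1 : IsIrreducible (f '' (f ⁻¹' (Z : Set _))) := by
      rw [← isIrreducible_iff_closure, hcl _ Z.isClosed]
      exact Z.isIrreducible
    refine ⟨Set.image_nonempty.1 h1.1, ?_⟩
    intro u v hu hv hu' hv'
    obtain ⟨u, hu2, rfl⟩ := hf.isOpen_iff.1 hu
    obtain ⟨v, hv2, rfl⟩ := hf.isOpen_iff.1 hv
    obtain ⟨x, hx, hx1⟩ := hu'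
    obtain ⟨y, hy, hy1⟩ := hv'
    obtain ⟨_, ⟨z, hz, rfl⟩, h⟩ := h1.2 u v hu2 hv2 ⟨f x, ⟨x, hx, rfl⟩, hx1⟩ ⟨f y, ⟨y, hy, rfl⟩, hy1⟩
    exact ⟨z, hz, h⟩
  refine Order.krullDim_le_of_strictMono
    (fun Z => ⟨f ⁻¹' Z, hirr Z, Z.isClosed.preimage hf.continuous⟩) ?_
  refine Monotone.strictMono_of_injective (fun Z W h => Set.preimage_mono (f := f) (show Z.1 ⊆ W.1 from h)) ?_
  intro Z W h
  have : f ⁻¹' (Z : Set _) = f ⁻¹' (W : Set _) := congrArg (fun Z => Z.carrier) h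
  apply TopologicalSpace.IrreducibleCloseds.ext
  rw [← hcl Z Z.isClosed, this, hcl W W.isClosed]


theorem aux_closed_iff {K M : Type*} [Field K] [AddCommGroup M] [Module K M] (s : Set M) :
    @IsClosed M (zariskiTopology K M) s ↔ s ∈ zariskiCloseds K M := by
  rw [← @isOpen_compl_iff _ _ (zariskiTopology K M)]
  show sᶜᶜ ∈ zariskiCloseds K M ↔ _
  rw [compl_compl]

theorem aux_hc_mul {K σ : Type*} [Field K] (p q : MvPolynomial σ K) (m d : ℕ)
    (hp : p.IsHomogeneous m) :
    homogeneousComponent (d + m) (q * p) = homogeneousComponent d q * p := by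
  classical
  conv_lhs => rw [← sum_homogeneousComponent q, Finset.sum_mul, map_sum]
  have h : ∀ i, homogeneousComponent (d + m) (homogeneousComponent i q * p) =
      if i = d then homogeneousComponent d q * p else 0 := by
    intro i
    rw [homogeneousComponent_of_mem ((homogeneousComponent_isHomogeneous i q).mul hp)]
    by_cases hi : i = d
    · subst hi; simp
    · have : ¬ (d + m = i + m) := by omega
      rw [if_neg this, if_neg hi]
  simp only [h]
  rw [Finset.sum_ite_eq']
  split_ifs with hd
  · rfl
  · rw [homogeneousComponent_eq_zero, zero_mul]
    simp at hd; omega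

noncomputable def auxLin {K : Type*} [Field K] {n : ℕ} (u : Fin n → K) : MvPolynomial (Fin n) K :=
  ∑ j, C (u j) * X j

theorem auxLin_hom {K : Type*} [Field K] {n : ℕ} (u : Fin n → K) : (auxLin u).IsHomogeneous 1 := by
  refine IsHomogeneous.sum _ _ _ fun i _ => ?_
  simpa using (isHomogeneous_C (Fin n) (u i)).mul (isHomogeneous_X K i)

theorem auxLin_eval {K : Type*} [Field K] {n : ℕ} (u v : Fin n → K) :
    eval v (auxLin u) = ∑ j, u j * v j := by
  simp [auxLin]

theorem aux_lin_exists {K : Type*} [Field K] {n : ℕ} (L : MvPolynomial (Fin n) K)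
    (h : L.IsHomogeneous 1) : ∃ l, L = auxLin l := by
  have h' : L ∈ homogeneousSubmodule (Fin n) K 1 := h
  rw [homogeneousSubmodule_one_eq_span_X, Submodule.mem_span_range_iff_exists_fun] at h'
  obtain ⟨c, hc⟩ := h'
  exact ⟨c, by rw [← hc]; simp [auxLin, smul_eq_C_mul]⟩

noncomputable def auxE {K : Type*} [Field K] {n : ℕ} (u v : Fin n → K) :
    MvPolynomial (Fin n) K →ₐ[K] MvPolynomial (Fin n) K :=
  aeval (fun i => C (v i) * auxLin u - C (u i) * auxLin v)

theorem auxE_hom {K : Type*} [Field K] {n : ℕ} (u v : Fin n → K) (F : MvPolynomial (Fin n) K)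
    (hF : F.IsHomogeneous 2) : (auxE u v F).IsHomogeneous 2 := by
  have := hF.aeval (fun i => C (v i) * auxLin u - C (u i) * auxLin v) (n := 1) (fun i => by
    refine IsHomogeneous.sub ?_ ?_
    · simpa using (isHomogeneous_C (Fin n) (v i)).mul (auxLin_hom u)
    · simpa using (isHomogeneous_C (Fin n) (u i)).mul (auxLin_hom v))
  simpa [auxE] using this

theorem auxE_eval {K : Type*} [Field K] {n : ℕ} (u v l : Fin n → K) (F : MvPolynomial (Fin n) K) :
    eval l (auxE u v F) =
      eval (fun i => v i * (∑ j, u j * l j) - u i * (∑ j, v j * l j)) F := by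
  have : (aeval l : MvPolynomial (Fin n) K →ₐ[K] K).comp (auxE u v) =
      aeval (fun i => v i * (∑ j, u j * l j) - u i * (∑ j, v j * l j)) := by
    ext i
    simp [auxE, auxLin, aeval_eq_eval]
  simpa [aeval_eq_eval] using DFunLike.congr_fun this F

theorem aux_dvd_iff {K : Type*} [Field K] [Infinite K] {n : ℕ} (l : Fin n → K) (hl : l ≠ 0)
    (F : MvPolynomial (Fin n) K) :
    auxLin l ∣ F ↔ ∀ u v, eval l (auxE u v F) = 0 := by
  constructor
  · rintro ⟨G, rfl⟩ u v
    rw [auxE_eval, map_mul, auxLin_eval]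
    convert zero_mul _
    simp only [mul_sub, Finset.sum_sub_distrib, ← mul_assoc, ← Finset.sum_mul]
    simp only [mul_comm (l _)]
    ring
  · intro h
    obtain ⟨i, hi⟩ := Function.ne_iff.1 hl
    let u : Fin n → K := Pi.single i (l i)⁻¹
    have hu : ∑ j, u j * l j = 1 := by
      simp [u, Pi.single_apply, Finset.sum_ite_eq]
      exact inv_mul_cancel₀ hi
    have h0 : aeval (fun i => X i - C (u i) * auxLin l) F = (0 : MvPolynomial (Fin n) K) := by
      apply MvPolynomial.funext
      intro v
      have := h u v
      rw [auxE_eval, hu] at this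
      rw [map_zero, ← this, ← aeval_eq_eval, ← aeval_eq_eval, comp_aeval_apply]
      congr 2
      ext j
      simp [auxLin, aeval_eq_eval]
      simp [mul_comm]
    rw [← Ideal.mem_span_singleton, ← Ideal.Quotient.eq_zero_iff_mem]
    let π := Ideal.Quotient.mkₐ K (Ideal.span {auxLin l})
    have h1 : π (aeval (fun i => X i - C (u i) * auxLin l) F) = π F := by
      have : π.comp (aeval (fun i => X i - C (u i) * auxLin l)) = π := by
        ext j
        have : π (auxLin l) = 0 := by
          simp [π, Ideal.Quotient.eq_zero_iff_mem, Ideal.mem_span_singleton]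
        simp [this]
      exact DFunLike.congr_fun this F
    rw [h0, map_zero] at h1
    exact h1.symm


theorem aux_exists_rep {K : Type*} [Field K] [IsAlgClosed K] {n : ℕ} {ι : Type*}
    (E : ι → MvPolynomial (Fin n) K) (hE : ∀ k, (E k).IsHomogeneous 2)
    (h : ∀ l : Fin n → K, (∀ k, eval l (E k) = 0) → l = 0) :
    ∃ d : ℕ, ∀ α : Fin n →₀ ℕ, α.degree = d + 2 → ∃ q : ι →₀ MvPolynomial (Fin n) K,
      (∀ k, (q k).IsHomogeneous d) ∧ monomial α 1 = q.sum fun k a => a * E k := by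
  have h1 : idealOfVars (Fin n) K ≤ (Ideal.span (Set.range E)).radical := by
    rw [← vanishingIdeal_zeroLocus_eq_radical (K := K), Ideal.span_le]
    rintro _ ⟨i, rfl⟩ x hx
    have := h x fun k => by
      have := hx (E k) (Ideal.subset_span ⟨k, rfl⟩)
      simpa [aeval_eq_eval] using this
    simp [this]
  obtain ⟨d, hd⟩ := Ideal.exists_pow_le_of_le_radical_of_fg_radical h1 (IsNoetherian.noetherian _)
  refine ⟨d, fun α hα => ?_⟩
  have hm : monomial α (1 : K) ∈ Ideal.span (Set.range E) := by
    apply hd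
    rw [monomial_mem_pow_idealOfVars_iff _ _ one_ne_zero]
    omega
  obtain ⟨q, hq⟩ := (Finsupp.mem_ideal_span_range_iff_exists_finsupp).1 hm
  refine ⟨q.mapRange (homogeneousComponent d) (map_zero _), fun k => ?_, ?_⟩
  · simpa using homogeneousComponent_isHomogeneous d (q k)
  · rw [Finsupp.sum_mapRange_index (by simp)]
    have h2 : homogeneousComponent (d + 2) (monomial α (1 : K)) = monomial α 1 := by
      have : (monomial α (1 : K)).IsHomogeneous (d + 2) := isHomogeneous_monomial _ hα
      rw [homogeneousComponent_of_mem this, if_pos rfl]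
    rw [← h2, ← hq, Finsupp.sum, map_sum, Finsupp.sum]
    exact Finset.sum_congr rfl fun k _ => aux_hc_mul _ _ _ _ (hE k)

theorem aux_closed {K : Type*} [Field K] [IsAlgClosed K] (r : ℕ) :
    IsClosed {F : pairSpace K r | ∃ l : Fin (r + 1) → K, l ≠ 0 ∧
      auxLin l ∣ (F.1 : MvPolynomial (Fin (r + 1)) K) ∧
      auxLin l ∣ (F.2 : MvPolynomial (Fin (r + 1)) K)} := by
  classical
  have : Infinite K := IsAlgClosed.instInfinite
  set A := {F : pairSpace K r | ∃ l : Fin (r + 1) → K, l ≠ 0 ∧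
      auxLin l ∣ (F.1 : MvPolynomial (Fin (r + 1)) K) ∧
      auxLin l ∣ (F.2 : MvPolynomial (Fin (r + 1)) K)} with hA
  suffices H : ∀ w ∉ A, ∃ p : MvPolynomial (pairSpace K r →ₗ[K] K) K,
      (∀ v ∈ A, polyEval K _ p v = 0) ∧ polyEval K _ p w ≠ 0 by
    refine (aux_closed_iff A).2 ⟨{p | ∀ v ∈ A, polyEval K _ p v = 0}, ?_⟩
    ext w
    refine ⟨fun hw p hp => hp w hw, fun hw => ?_⟩
    by_contra hc
    obtain ⟨p, hp, hp'⟩ := H w hc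
    exact hp' (hw p hp)
  intro w hw
  -- equations
  let E : (Bool × (Fin (r + 1) → K) × (Fin (r + 1) → K)) →
      pairSpace K r →ₗ[K] MvPolynomial (Fin (r + 1)) K := fun k =>
    (auxE k.2.1 k.2.2).toLinearMap ∘ₗ (Submodule.subtype _) ∘ₗ
      (if k.1 then LinearMap.fst K _ _ else LinearMap.snd K _ _)
  have hE : ∀ k w, (E k w).IsHomogeneous 2 := by
    rintro ⟨b, u, v⟩ w
    cases b
    · exact auxE_hom u v _ w.2.2
    · exact auxE_hom u v _ w.1.2
  have hEA : ∀ (w : pairSpace K r) (l : Fin (r + 1) → K), l ≠ 0 → ((∀ k, eval l (E k w) = 0) ↔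
      auxLin l ∣ (w.1 : MvPolynomial (Fin (r + 1)) K) ∧
      auxLin l ∣ (w.2 : MvPolynomial (Fin (r + 1)) K)) := by
    intro w l hl
    rw [aux_dvd_iff l hl, aux_dvd_iff l hl]
    constructor
    · intro h
      exact ⟨fun u v => h (true, u, v), fun u v => h (false, u, v)⟩
    · rintro ⟨h1, h2⟩ ⟨b, u, v⟩
      cases b
      · exact h2 u v
      · exact h1 u v
  obtain ⟨d, hd⟩ := aux_exists_rep (fun k => E k w) (fun k => hE k w) (fun l hl => by
    by_contra hl0
    exact hw ⟨l, hl0, (hEA w l hl0).1 hl⟩)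
  let J := {α : Fin (r + 1) →₀ ℕ // α ∈ Finset.finsuppAntidiag Finset.univ (d + 2)}
  let _ : Fintype J := Finset.fintypeCoeSort (Finset.finsuppAntidiag Finset.univ (d + 2))
  have hJ : ∀ α : Fin (r + 1) →₀ ℕ, α ∈ Finset.finsuppAntidiag Finset.univ (d + 2) ↔
      α.degree = d + 2 := by
    intro α
    simp [Finset.mem_finsuppAntidiag, Finsupp.degree_eq_sum]
  choose q hq hq' using fun α : J => hd α.1 ((hJ _).1 α.2)
  let T : J → pairSpace K r →ₗ[K] MvPolynomial (Fin (r + 1)) K := fun α =>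
    ∑ k ∈ (q α).support, LinearMap.mulLeft K (q α k) ∘ₗ E k
  have hT : ∀ α v, T α v = ∑ k ∈ (q α).support, q α k * E k v := by
    intro α v
    simp [T]
  have hTh : ∀ α v, (T α v).IsHomogeneous (d + 2) := by
    intro α v
    rw [hT]
    exact IsHomogeneous.sum _ _ _ fun k _ => (hq α k).mul (hE k v)
  let φ : J → J → pairSpace K r →ₗ[K] K := fun α β => (lcoeff K β.1) ∘ₗ T α
  let N : Matrix J J (MvPolynomial (pairSpace K r →ₗ[K] K) K) := Matrix.of fun α β => X (φ α β)
  have hdet : ∀ v, polyEval K _ N.det v = (Matrix.of fun α β => coeff β.1 (T α v)).det := by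
    intro v
    rw [polyEval, RingHom.map_det]
    congr 1
    ext α β
    simp [N, φ]
  refine ⟨N.det, ?_, ?_⟩
  · rintro v ⟨l, hl, hv⟩
    rw [hdet]
    have hz := (hEA v l hl).2 hv
    apply Matrix.exists_mulVec_eq_zero_iff.1
    refine ⟨fun β => β.1.prod fun i e => l i ^ e, ?_, ?_⟩
    · obtain ⟨i, hi⟩ := Function.ne_iff.1 hl
      intro h0
      have := congrFun h0 ⟨Finsupp.single i (d + 2), (hJ _).2 (by simp)⟩
      simp only [Finsupp.prod_single_index, pow_zero, Pi.zero_apply] at this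
      exact hi (pow_eq_zero_iff (by omega) |>.1 this)
    · ext α
      have h0 : eval l (T α v) = 0 := by
        rw [hT, map_sum]
        exact Finset.sum_eq_zero fun k _ => by rw [map_mul, hz k, mul_zero]
      rw [eval_eq] at h0
      simp only [Matrix.mulVec, dotProduct, Matrix.of_apply, Pi.zero_apply]
      rw [← h0, Finset.sum_coe_sort (Finset.finsuppAntidiag Finset.univ (d + 2))
        (fun β => coeff β (T α v) * β.prod fun i e => l i ^ e)]
      symm
      apply Finset.sum_subset_zero_on_sdiff
      · intro β hβ
        rw [hJ]
        have := hTh α v (mem_support_iff.1 hβ)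
        rw [Finsupp.degree_eq_weight_one]; exact this
      · intro β hβ
        simp only [Finset.mem_sdiff, mem_support_iff, not_not] at hβ
        rw [hβ.2, zero_mul]
      · intro β _
        simp [Finsupp.prod]
  · rw [hdet]
    have : (Matrix.of fun α β : J => coeff β.1 (T α w)) = 1 := by
      ext α β
      have := hq' α
      rw [Finsupp.sum, ← hT] at this
      rw [Matrix.of_apply, ← this, coeff_monomial, Matrix.one_apply]
      exact if_congr Subtype.ext_iff.symm rfl rfl
    rw [this]
    simp


theorem aux_param {K M σ : Type*} [Field K] [IsAlgClosed K] [AddCommGroup M] [Module K M]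
    [Module.Finite K M] [Fintype σ] [tM : TopologicalSpace M] (htop : tM = zariskiTopology K M)
    (f : (σ → K) → M) (Q : (M →ₗ[K] K) →ₗ[K] MvPolynomial σ K)
    (hQ : ∀ φ s, eval s (Q φ) = φ (f s)) (A : Set M) (hAc : IsClosed A) (hfA : ∀ s, f s ∈ A)
    (hdense : ∀ p, (∀ s, polyEval K M p (f s) = 0) → ∀ v ∈ A, polyEval K M p v = 0)
    (halg : ∀ i, IsAlgebraic (Algebra.adjoin K (Set.range Q)) (X i : MvPolynomial σ K)) :
    IsIrreducible A ∧ topologicalKrullDim A = (Fintype.card σ : WithBot ℕ∞) := by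
  have : Infinite K := IsAlgClosed.instInfinite
  have hcl : ∀ s : Set M, IsClosed s ↔ s ∈ zariskiCloseds K M := by
    intro s
    subst htop
    exact aux_closed_iff s
  let Ψ : MvPolynomial (M →ₗ[K] K) K →ₐ[K] MvPolynomial σ K := aeval Q
  have hX : ∀ φ, Ψ (X φ) = Q φ := fun φ => aeval_X _ _
  have hΨ : ∀ p s, eval s (Ψ p) = polyEval K M p (f s) := by
    intro p s
    have : (aeval s : MvPolynomial σ K →ₐ[K] K).comp Ψ =
        aeval (fun φ : M →ₗ[K] K => φ (f s)) := by
      ext φ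
      simp [Ψ, aeval_eq_eval, hQ]
    simpa [aeval_eq_eval, polyEval] using DFunLike.congr_fun this p
  have hΨ0 : ∀ p, Ψ p = 0 ↔ ∀ v ∈ A, polyEval K M p v = 0 := by
    intro p
    constructor
    · intro h
      apply hdense
      intro s
      rw [← hΨ, h, map_zero]
    · intro h
      apply MvPolynomial.funext
      intro s
      rw [hΨ, map_zero, h _ (hfA s)]
  constructor
  · refine ⟨⟨f 0, hfA 0⟩, ?_⟩
    rw [isPreirreducible_iff_isClosed_union_isClosed]
    intro z₁ z₂ h₁ h₂ hA
    obtain ⟨S₁, rfl⟩ := (hcl _).1 h₁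
    obtain ⟨S₂, rfl⟩ := (hcl _).1 h₂
    by_contra hc
    rw [not_or, Set.not_subset, Set.not_subset] at hc
    obtain ⟨⟨a, ha, ha'⟩, ⟨b, hb, hb'⟩⟩ := hc
    simp only [Set.mem_ofPred_eq, not_forall] at ha' hb'
    obtain ⟨p, hp, hpa⟩ := ha'
    obtain ⟨q, hq, hqb⟩ := hb'
    have h0 : Ψ (p * q) = 0 := by
      rw [hΨ0]
      intro v hv
      rw [polyEval_mul]
      rcases hA hv with h | h
      · rw [h p hp, zero_mul]
      · rw [h q hq, mul_zero]
    rw [map_mul, mul_eq_zero, hΨ0, hΨ0] at h0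
    rcases h0 with h | h
    · exact hpa (h a ha)
    · exact hqb (h b hb)
  · have hS : Algebra.adjoin K (Set.range Q) = Ψ.range := Algebra.adjoin_range_eq_range_aeval K Q
    have hfg : (Algebra.adjoin K (Set.range Q)).FG := by
      obtain ⟨s, hs⟩ : (LinearMap.range Q).FG := Submodule.FG.of_finite
      refine ⟨s, ?_⟩
      rw [← Algebra.adjoin_span (R := K) (s := (s : Set (MvPolynomial σ K))), hs]
      rfl
    rw [hS] at halg hfg
    have : Algebra.FiniteType K Ψ.range := (Subalgebra.fg_iff_finiteType _).1 hfg
    rw [← aux_dim_trdeg (k := K) (S := Ψ.range) _ (aux_alg Ψ.range halg)]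
    have hsurj : Function.Surjective Ψ.rangeRestrict := Ψ.rangeRestrict_surjective
    have hker : ∀ p, Ψ.rangeRestrict p = 0 ↔ Ψ p = 0 := fun p => by
      rw [← Subtype.coe_inj]; rfl
    have hex : ∀ v : A, ∃ e : Ψ.range →ₐ[K] K, ∀ p, e (Ψ.rangeRestrict p) = polyEval K M p v := by
      intro v
      refine ⟨(Ideal.Quotient.liftₐ (RingHom.ker Ψ.rangeRestrict)
        (aeval (fun φ : M →ₗ[K] K => φ v.1)) ?_).comp
        (Ideal.quotientKerAlgEquivOfSurjective hsurj).symm.toAlgHom, ?_⟩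
      · intro p hp
        rw [RingHom.mem_ker, hker, hΨ0] at hp
        simpa [aeval_eq_eval, polyEval] using hp v v.2
      · intro p
        have : (Ideal.quotientKerAlgEquivOfSurjective hsurj).symm (Ψ.rangeRestrict p) =
            Ideal.Quotient.mk _ p := by
          rw [AlgEquiv.symm_apply_eq]
          rfl
        simp [this, polyEval, aeval_eq_eval]
    choose e he using hex
    refine aux_top e ?_ ?_
    · intro χ
      let ψ : Module.Dual K (M →ₗ[K] K) :=
        { toFun := fun φ => χ (Ψ.rangeRestrict (X φ))
          map_add' := fun a b => by
            rw [← map_add]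
            exact congrArg χ (Subtype.ext (show Ψ (X (a + b)) = Ψ (X a) + Ψ (X b) by
              rw [hX, hX, hX, map_add]))
          map_smul' := fun c a => by
            rw [RingHom.id_apply, ← map_smul]
            exact congrArg χ (Subtype.ext (show Ψ (X (c • a)) = c • Ψ (X a) by
              rw [hX, hX, map_smul])) }
      let v : M := (Module.evalEquiv K M).symm ψ
      have hv : ∀ φ : M →ₗ[K] K, φ v = χ (Ψ.rangeRestrict (X φ)) := by
        intro φ
        exact Module.apply_evalEquiv_symm_apply K M φ ψ
      have hv' : ∀ p, polyEval K M p v = χ (Ψ.rangeRestrict p) := by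
        intro p
        have : (aeval (fun φ : M →ₗ[K] K => φ v) : _ →ₐ[K] K) = χ.comp Ψ.rangeRestrict := by
          ext φ
          simp [hv]
        simpa [aeval_eq_eval, polyEval] using DFunLike.congr_fun this p
      have hvA : v ∈ A := by
        obtain ⟨S₀, hS₀⟩ := (hcl A).1 hAc
        rw [hS₀]
        intro p hp
        rw [hv', (hker p).2, map_zero]
        rw [hΨ0, hS₀]
        intro w hw
        exact hw p hp
      refine ⟨⟨v, hvA⟩, ?_⟩
      ext s
      obtain ⟨p, rfl⟩ := hsurj s
      rw [he, hv']
    · intro Z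
      rw [isClosed_induced_iff]
      constructor
      · rintro ⟨W, hW, rfl⟩
        obtain ⟨S₀, rfl⟩ := (hcl _).1 hW
        refine ⟨Ψ.rangeRestrict '' S₀, ?_⟩
        ext x
        simp only [Set.mem_preimage, Set.mem_ofPred_eq, Set.forall_mem_image, he]
      · rintro ⟨S₁, rfl⟩
        refine ⟨_, (hcl _).2 ⟨Ψ.rangeRestrict ⁻¹' S₁, rfl⟩, ?_⟩
        ext x
        simp only [Set.mem_preimage, Set.mem_ofPred_eq]
        constructor
        · intro h s hs
          obtain ⟨p, rfl⟩ := hsurj s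
          rw [he]
          exact h p hs
        · intro h p hp
          rw [← he]
          exact h _ hp


theorem aux_line {K M : Type*} [Field K] [Infinite K] [AddCommGroup M] [Module K M]
    (p : MvPolynomial (M →ₗ[K] K) K) (v w : M) (c : K)
    (h : ∀ τ, τ ≠ c → polyEval K M p (v + τ • w) = 0) : polyEval K M p v = 0 := by
  let P : Polynomial K := aeval (fun φ : M →ₗ[K] K =>
    Polynomial.C (φ v) + Polynomial.X * Polynomial.C (φ w)) p
  have hP : ∀ τ, P.eval τ = polyEval K M p (v + τ • w) := by
    intro τ
    have : (Polynomial.aeval τ : Polynomial K →ₐ[K] K).comp (aeval (fun φ : M →ₗ[K] K =>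
        Polynomial.C (φ v) + Polynomial.X * Polynomial.C (φ w))) =
        aeval (fun φ : M →ₗ[K] K => φ (v + τ • w)) := by
      ext φ
      simp
      ring
    simpa [aeval_eq_eval, polyEval, P, Polynomial.coe_aeval_eq_eval] using DFunLike.congr_fun this p
  have h0 : P = 0 := by
    apply Polynomial.eq_zero_of_infinite_isRoot
    refine Set.Infinite.mono (s := {c}ᶜ) ?_ (Set.finite_singleton c).infinite_compl
    intro τ hτ
    show P.eval τ = 0
    rw [hP, h τ hτ]
  have := hP 0
  rw [h0] at this
  simpa using this.symm

theorem aux_finite (K : Type*) [Field K] (n : ℕ) :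
    Module.Finite K (homogeneousSubmodule (Fin n) K 2) := by
  rw [Module.Finite.iff_fg, ← homogeneousSubmodule_one_pow, homogeneousSubmodule_one_eq_span_X]
  exact (Submodule.fg_span (Set.finite_range _)).pow 2

def auxMono (K : Type*) [Field K] {n : ℕ} (i j : Fin n) : homogeneousSubmodule (Fin n) K 2 :=
  ⟨X i * X j, (isHomogeneous_X K i).mul (isHomogeneous_X K j)⟩

def auxMul {K : Type*} [Field K] {n : ℕ} (a b : Fin n → K) : homogeneousSubmodule (Fin n) K 2 :=
  ⟨auxLin a * auxLin b, (auxLin_hom a).mul (auxLin_hom b)⟩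

theorem auxMul_eq {K : Type*} [Field K] {n : ℕ} (a b : Fin n → K) :
    auxMul a b = ∑ i, ∑ j, (a i * b j) • auxMono K i j := by
  apply Subtype.ext
  simp only [auxMul, auxMono, auxLin, Finset.sum_mul_sum, AddSubmonoidClass.coe_finsetSum,
    SetLike.val_smul, smul_eq_C_mul, map_mul]
  refine Finset.sum_congr rfl fun i _ => Finset.sum_congr rfl fun j _ => by ring

def auxPair {K : Type*} [Field K] {r : ℕ} (a b c : Fin (r + 1) → K) : pairSpace K r :=
  (auxMul a b, auxMul a c)

theorem auxLin_add {K : Type*} [Field K] {n : ℕ} (a b : Fin n → K) :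
    auxLin (a + b) = auxLin a + auxLin b := by
  simp [auxLin, add_mul, Finset.sum_add_distrib]

theorem auxLin_smul {K : Type*} [Field K] {n : ℕ} (t : K) (b : Fin n → K) :
    auxLin (t • b) = C t * auxLin b := by
  simp [auxLin, Finset.mul_sum, mul_assoc]

theorem auxPair_line {K : Type*} [Field K] {r : ℕ} (a a' b c : Fin (r + 1) → K) (t : K) :
    auxPair (a + t • a') b c = auxPair a b c + t • auxPair a' b c := by
  refine Prod.ext (Subtype.ext ?_) (Subtype.ext ?_)
  all_goals
    simp only [auxPair, auxMul, auxLin_add, auxLin_smul, Prod.fst_add, Prod.snd_add, Prod.smul_fst,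
      Prod.smul_snd, Submodule.coe_add, SetLike.val_smul, smul_eq_C_mul]
    ring

theorem auxPair_scale {K : Type*} [Field K] {r : ℕ} (a b c : Fin (r + 1) → K) (t : K)
    (ht : t ≠ 0) : auxPair (t⁻¹ • a) (t • b) (t • c) = auxPair a b c := by
  have h : (C t⁻¹ * C t : MvPolynomial (Fin (r + 1)) K) = 1 := by
    rw [← C_mul, inv_mul_cancel₀ ht, C_1]
  refine Prod.ext (Subtype.ext ?_) (Subtype.ext ?_)
  · simp only [auxPair, auxMul, auxLin_smul]
    linear_combination (auxLin a * auxLin b) * h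
  · simp only [auxPair, auxMul, auxLin_smul]
    linear_combination (auxLin a * auxLin c) * h

theorem aux_factor {K : Type*} [Field K] {n : ℕ} (l : Fin n → K) (F : MvPolynomial (Fin n) K)
    (hF : F.IsHomogeneous 2) (h : auxLin l ∣ F) : ∃ g, F = auxLin l * auxLin g := by
  obtain ⟨G, hG⟩ := h
  obtain ⟨g, hg⟩ := aux_lin_exists _ (homogeneousComponent_isHomogeneous 1 G)
  refine ⟨g, ?_⟩
  have h1 := aux_hc_mul (auxLin l) G 1 1 (auxLin_hom l)
  rw [mul_comm G, ← hG, hg, homogeneousComponent_of_mem (n := 2) hF, if_pos rfl] at h1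
  rw [h1, mul_comm]

abbrev auxS (r : ℕ) : Type := Fin r ⊕ Fin (r + 1) ⊕ Fin (r + 1)

def auxl {R : Type*} [One R] {r : ℕ} (s : auxS r → R) : Fin (r + 1) → R :=
  Fin.cons 1 (fun i => s (Sum.inl i))

def auxF {K : Type*} [Field K] {r : ℕ} (s : auxS r → K) : pairSpace K r :=
  auxPair (auxl s) (fun j => s (Sum.inr (Sum.inl j))) (fun j => s (Sum.inr (Sum.inr j)))

def auxQ (K : Type*) [Field K] (r : ℕ) :
    (pairSpace K r →ₗ[K] K) →ₗ[K] MvPolynomial (auxS r) K where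
  toFun φ := (∑ i, ∑ j, φ (auxMono K i j, 0) •
      (auxl (X : auxS r → MvPolynomial (auxS r) K) i * X (Sum.inr (Sum.inl j)))) +
    ∑ i, ∑ j, φ (0, auxMono K i j) •
      (auxl (X : auxS r → MvPolynomial (auxS r) K) i * X (Sum.inr (Sum.inr j)))
  map_add' a b := by
    simp only [LinearMap.add_apply, add_smul, Finset.sum_add_distrib]
    abel
  map_smul' c a := by
    simp only [LinearMap.smul_apply, smul_assoc, Finset.smul_sum, RingHom.id_apply, smul_add]

theorem auxl_eval {K : Type*} [Field K] {r : ℕ} (s : auxS r → K) (i : Fin (r + 1)) :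
    eval s (auxl (X : auxS r → MvPolynomial (auxS r) K) i) = auxl s i := by
  refine Fin.cases ?_ (fun i => ?_) i <;> simp [auxl]

theorem auxQ_eval {K : Type*} [Field K] {r : ℕ} (φ : pairSpace K r →ₗ[K] K) (s : auxS r → K) :
    eval s (auxQ K r φ) = φ (auxF s) := by
  have h : auxF s = (∑ i, ∑ j, (auxl s i * s (Sum.inr (Sum.inl j))) • ((auxMono K i j, 0) : pairSpace K r))
      + ∑ i, ∑ j, (auxl s i * s (Sum.inr (Sum.inr j))) • ((0, auxMono K i j) : pairSpace K r) := by
    refine Prod.ext ?_ ?_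
    · simp [auxF, auxPair, auxMul_eq, Prod.fst_sum]
    · simp [auxF, auxPair, auxMul_eq, Prod.snd_sum]
  rw [h]
  simp only [map_add, map_sum, map_smul, auxQ, LinearMap.coe_mk, AddHom.coe_mk, smul_eval, map_mul,
    eval_X, auxl_eval, smul_eq_mul]
  simp only [mul_comm]

theorem aux_dense {K : Type*} [Field K] [Infinite K] {r : ℕ}
    (p : MvPolynomial (pairSpace K r →ₗ[K] K) K)
    (h : ∀ s, polyEval K (pairSpace K r) p (auxF s) = 0) (a b c : Fin (r + 1) → K) :
    polyEval K (pairSpace K r) p (auxPair a b c) = 0 := by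
  refine aux_line p _ (auxPair (Pi.single 0 1) b c) (- a 0) fun τ hτ => ?_
  rw [← auxPair_line]
  set a' := a + τ • (Pi.single 0 1 : Fin (r + 1) → K) with ha'
  have h0 : a' 0 ≠ 0 := by
    intro h0
    apply hτ
    simp [ha'] at h0
    linear_combination h0
  rw [← auxPair_scale a' b c (a' 0) h0]
  convert h (Sum.elim (fun i => (a' 0)⁻¹ * a' i.succ) (Sum.elim (a' 0 • b) (a' 0 • c))) using 2
  unfold auxF
  congr 1
  funext i
  refine Fin.cases ?_ (fun i => ?_) i
  · simp [auxl, h0]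
  · simp [auxl]


theorem aux_alg_quad {K T : Type*} [Field K] [CommRing T] [IsDomain T] [Algebra K T]
    (S : Subalgebra K T) (a b c t : T) (ha : a ∈ S) (hb : b ∈ S) (hc : c ∈ S) (ha0 : a ≠ 0)
    (h : a * t ^ 2 - b * t + c = 0) : IsAlgebraic S t := by
  refine ⟨Polynomial.C ⟨a, ha⟩ * Polynomial.X ^ 2 - Polynomial.C ⟨b, hb⟩ * Polynomial.X +
    Polynomial.C ⟨c, hc⟩, ?_, ?_⟩
  · intro h0
    have := congrArg (fun q => Polynomial.coeff q 2) h0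
    simp [Polynomial.coeff_X, Polynomial.coeff_C] at this
    exact ha0 (congrArg Subtype.val this)
  · simp only [map_add, map_sub, map_mul, map_pow, Polynomial.aeval_C, Polynomial.aeval_X]
    exact h

def auxEv {K : Type*} [Field K] {r : ℕ} (v : Fin (r + 1) → K) :
    homogeneousSubmodule (Fin (r + 1)) K 2 →ₗ[K] K :=
  (aeval v : MvPolynomial (Fin (r + 1)) K →ₐ[K] K).toLinearMap.comp (Submodule.subtype _)

theorem auxEv_mul {K : Type*} [Field K] {r : ℕ} (v a b : Fin (r + 1) → K) :
    auxEv v (auxMul a b) = (∑ j, a j * v j) * ∑ j, b j * v j := by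
  simp [auxEv, auxMul, aeval_eq_eval, auxLin_eval]

theorem aux_halg_one {K : Type*} [Field K] [Infinite K] {r : ℕ}
    (S : Subalgebra K (MvPolynomial (auxS r) K)) (q : Fin (r + 1) → auxS r)
    (hS : ∀ v : Fin (r + 1) → K, ∃ p ∈ S, ∀ s : auxS r → K,
      eval s p = (∑ j, auxl s j * v j) * ∑ j, s (q j) * v j) :
    (∀ i : Fin r, IsAlgebraic S (X (Sum.inl i) : MvPolynomial (auxS r) K)) ∧
    ∀ j, IsAlgebraic S (X (q j) : MvPolynomial (auxS r) K) := by
  classical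
  obtain ⟨p0, hp0, h0⟩ := hS (Pi.single 0 1)
  have e0 : p0 = X (q 0) := by
    apply MvPolynomial.funext
    intro s
    rw [h0]
    simp [auxl, Pi.single_apply]
  subst e0
  have key : ∀ i : Fin r, ∃ b ∈ S, ∃ c ∈ S, c = X (Sum.inl i) * X (q i.succ) ∧
      b = X (q i.succ) + X (Sum.inl i) * X (q 0) := by
    intro i
    obtain ⟨p1, hp1, h1⟩ := hS (Pi.single i.succ 1)
    obtain ⟨p2, hp2, h2⟩ := hS (Pi.single 0 1 + Pi.single i.succ 1)
    refine ⟨p2 - p1 - X (q 0), S.sub_mem (S.sub_mem hp2 hp1) hp0, p1, hp1, ?_, ?_⟩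
    · apply MvPolynomial.funext
      intro s
      rw [h1]
      simp [auxl, Pi.single_apply]
    · apply MvPolynomial.funext
      intro s
      rw [map_sub, map_sub, h1, h2]
      simp [auxl, Pi.single_apply, mul_add, Finset.sum_add_distrib]
      ring
  have hl : ∀ i : Fin r, IsAlgebraic S (X (Sum.inl i) : MvPolynomial (auxS r) K) := by
    intro i
    obtain ⟨b, hb, c, hc, hc', hb'⟩ := key i
    refine aux_alg_quad S (X (q 0)) b c _ hp0 hb hc (X_ne_zero _) ?_
    rw [hb', hc']
    ring
  refine ⟨hl, fun j => ?_⟩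
  refine Fin.cases ?_ (fun i => ?_) j
  · exact isAlgebraic_algebraMap (⟨_, hp0⟩ : S)
  · obtain ⟨b, hb, c, hc, hc', hb'⟩ := key i
    have : (X (q i.succ) : MvPolynomial (auxS r) K) = b - X (Sum.inl i) * X (q 0) := by
      rw [hb']; ring
    rw [this]
    exact IsAlgebraic.sub (isAlgebraic_algebraMap (⟨_, hb⟩ : S))
      (IsAlgebraic.mul (hl i) (isAlgebraic_algebraMap (⟨_, hp0⟩ : S)))

theorem aux_halg {K : Type*} [Field K] [Infinite K] {r : ℕ} (i : auxS r) :
    IsAlgebraic (Algebra.adjoin K (Set.range (auxQ K r))) (X i : MvPolynomial (auxS r) K) := by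
  have h1 := aux_halg_one (Algebra.adjoin K (Set.range (auxQ K r)))
    (fun j => Sum.inr (Sum.inl j)) (fun v => by
      refine ⟨auxQ K r ((auxEv v).comp (LinearMap.fst K _ _)),
        Algebra.subset_adjoin ⟨_, rfl⟩, fun s => ?_⟩
      rw [auxQ_eval]
      exact auxEv_mul v _ _)
  have h2 := aux_halg_one (Algebra.adjoin K (Set.range (auxQ K r)))
    (fun j => Sum.inr (Sum.inr j)) (fun v => by
      refine ⟨auxQ K r ((auxEv v).comp (LinearMap.snd K _ _)),
        Algebra.subset_adjoin ⟨_, rfl⟩, fun s => ?_⟩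
      rw [auxQ_eval]
      exact auxEv_mul v _ _)
  rcases i with i | i | i
  · exact h1.1 i
  · exact h1.2 i
  · exact h2.2 i


/-- Over an algebraically closed field and for `r ≥ 2`, the set `A` of
pairs `(F₁, F₂)` of quadratic forms divisible by a common nonzero linear form (equivalently,
both vanishing on a common hyperplane of `ℙ^r`) is a Zariski closed irreducible subset of
codimension `r²` in `W_{r,2} × W_{r,2}`, i.e. of dimension `2·C(r+2,2) - r²`. -/
theorem statement12 [IsAlgClosed K] (r : ℕ) (hr : 2 ≤ r)
    (A : Set (pairSpace K r))
    (hA : A = {F | ∃ L : MvPolynomial (Fin (r + 1)) K, L.IsHomogeneous 1 ∧ L ≠ 0 ∧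
      L ∣ (F.1 : MvPolynomial (Fin (r + 1)) K) ∧ L ∣ (F.2 : MvPolynomial (Fin (r + 1)) K)}) :
    IsClosed A ∧ IsIrreducible A ∧
      dimSet A = ((2 * Nat.choose (r + 2) 2 - r ^ 2 : ℕ) : WithBot ℕ∞) := by
  subst hA
  have hinf : Infinite K := IsAlgClosed.instInfinite
  have hlin0 : ∀ l : Fin (r + 1) → K, auxLin l = 0 ↔ l = 0 := by
    intro l
    constructor
    · intro h
      funext j
      have := auxLin_eval l (Pi.single j 1)
      rw [h] at this
      simpa [Pi.single_apply] using this.symm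
    · rintro rfl
      simp [auxLin]
  have hset : {F : pairSpace K r | ∃ L : MvPolynomial (Fin (r + 1)) K, L.IsHomogeneous 1 ∧ L ≠ 0 ∧
      L ∣ (F.1 : MvPolynomial (Fin (r + 1)) K) ∧ L ∣ (F.2 : MvPolynomial (Fin (r + 1)) K)} =
      {F : pairSpace K r | ∃ l : Fin (r + 1) → K, l ≠ 0 ∧
        auxLin l ∣ (F.1 : MvPolynomial (Fin (r + 1)) K) ∧
        auxLin l ∣ (F.2 : MvPolynomial (Fin (r + 1)) K)} := by
    ext F
    constructor
    · rintro ⟨L, hL, h0, h1, h2⟩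
      obtain ⟨l, rfl⟩ := aux_lin_exists L hL
      exact ⟨l, fun h => h0 ((hlin0 l).2 h), h1, h2⟩
    · rintro ⟨l, h0, h1, h2⟩
      exact ⟨auxLin l, auxLin_hom l, fun h => h0 ((hlin0 l).1 h), h1, h2⟩
  rw [hset]
  have hc := aux_closed (K := K) r
  have hfin := aux_finite K (r + 1)
  have hp := aux_param (K := K) (M := pairSpace K r) (σ := auxS r) rfl auxF (auxQ K r) auxQ_eval
    _ hc (fun s => by
      refine ⟨auxl s, ?_, Dvd.intro _ rfl, Dvd.intro _ rfl⟩
      intro h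
      have := congrFun h 0
      simp [auxl] at this)
    (by
      rintro p h ⟨F, F'⟩ ⟨l, -, h1, h2⟩
      obtain ⟨g, hg⟩ := aux_factor l _ F.2 h1
      obtain ⟨g', hg'⟩ := aux_factor l _ F'.2 h2
      have : ((F, F') : pairSpace K r) = auxPair l g g' :=
        Prod.ext (Subtype.ext hg) (Subtype.ext hg')
      rw [this]
      exact aux_dense p h l g g')
    aux_halg
  refine ⟨hc, hp.1, ?_⟩
  unfold dimSet
  rw [hc.closure_eq, hp.2]
  have hcard : Fintype.card (auxS r) = 2 * Nat.choose (r + 2) 2 - r ^ 2 := by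
    have h1 : 2 * Nat.choose (r + 2) 2 = (r + 2) * (r + 1) := by
      have := Nat.triangle_succ (r + 1)
      rw [Nat.choose_two_right]
      exact Nat.mul_div_cancel' (Nat.even_mul_pred_self (r + 2)).two_dvd
    have h2 : (r + 2) * (r + 1) = r ^ 2 + (3 * r + 2) := by ring
    rw [h1, h2, Nat.add_sub_cancel_left]
    simp
    ring
  rw [hcard]

end Statement12
end
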